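/- There exist constants c, A > 0, depending only on d, such that for any ε > 0 and any pair of nonnegative measurable functions f, f* ∈ L^{(d+1)/d}(ℝ^d) with positive finite norms satisfying ⟨T(f*), f⟩ ≥ ε ‖f‖_{(d+1)/d} ‖f*‖_{(d+1)/d}, there exist Lebesgue measurable sets E, E* ⊆ ℝ^d, positive scalars t, t*, and a ball ℬ = ℬ(z̄, e, r, r*) such that, writing (B, B*) = (π(ℬ), π*(ℬ)): t χ_E ≤ f and t* χ_{E*} ≤ f*; ⟨T(t* χ_{E* ∩ B*}), t χ_{E ∩ B}⟩ ≥ c ε^A ⟨T(f*), f⟩; and |B| ≤ |E| and |B*| ≤ |E*|. -/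

import Mathlib

open MeasureTheory ENNReal
open scoped RealInnerProductSpace

noncomputable section

/-- `ℝ^{d-1}` -/
abbrev Vec (n : ℕ) : Type := EuclideanSpace ℝ (Fin n)

/-- `ℝ^d = ℝ^{d-1} × ℝ`, a point `x = (x', x_d)` -/
abbrev Pt (n : ℕ) : Type := Vec n × ℝ

/-- The Radon-like transform `Tf(x) = ∫_{ℝ^{d-1}} f(x' - t, x_d - |t|²) dt`. -/
def radonT (n : ℕ) (f : Pt n → ℝ≥0∞) (x : Pt n) : ℝ≥0∞ :=
  ∫⁻ t : Vec n, f (x.1 - t, x.2 - ‖t‖ ^ 2)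

/-- The incidence functional `𝒯(E, E*) = ∫_E T(χ_{E*})`. -/
def incT (n : ℕ) (E Estar : Set (Pt n)) : ℝ≥0∞ :=
  ∫⁻ x in E, radonT n (Estar.indicator 1) x

/-- Admissibility of the parameters of a ball `ℬ(z̄, e, r, r*)`:
the center `z̄ = (x̄, x̄*)` lies on the incidence manifold `ℐ`, `ρ > 0`,
`e` is an orthonormal basis of `ℝ^{d-1}`, and `r_j r*_j = ρ > 0` for all `j`. -/
def IsBallParams (n : ℕ) (zb : Pt n × Pt n) (e : Fin n → Vec n)
    (r rs : Fin n → ℝ) (ρ : ℝ) : Prop :=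
  zb.2.2 = zb.1.2 - ‖zb.2.1 - zb.1.1‖ ^ 2 ∧ 0 < ρ ∧ Orthonormal ℝ e ∧
    (∀ j, 0 < r j) ∧ (∀ j, 0 < rs j) ∧ (∀ j, r j * rs j = ρ)

/-- The ball `ℬ(z̄, e, r, r*)`, a subset of the incidence manifold
`ℐ = {(x,y) : y_d = x_d - |y' - x'|²} ⊆ ℝ^d × ℝ^d`. -/
def ballI (n : ℕ) (zb : Pt n × Pt n) (e : Fin n → Vec n)
    (r rs : Fin n → ℝ) (ρ : ℝ) : Set (Pt n × Pt n) :=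
  fun z => z.2.2 = z.1.2 - ‖z.2.1 - z.1.1‖ ^ 2 ∧
    (∀ j, |⟪z.1.1 - zb.1.1, e j⟫| < r j) ∧
    |z.1.2 - zb.2.2 - ‖z.1.1 - zb.2.1‖ ^ 2| < ρ ∧
    (∀ j, |⟪z.2.1 - zb.2.1, e j⟫| < rs j) ∧
    |z.2.2 - zb.1.2 + ‖z.2.1 - zb.1.1‖ ^ 2| < ρ

/-- The `L^p` norm `(∫ f^p)^{1/p}` of a nonnegative (extended-real-valued)
function. -/
def LpN (n : ℕ) (p : ℝ) (f : Pt n → ℝ≥0∞) : ℝ≥0∞ :=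
  (∫⁻ x, f x ^ p) ^ (1 / p)

/-- The pairing `⟨Tg, f⟩ = ∫ f · Tg` for nonnegative functions. -/
def pairT (n : ℕ) (f g : Pt n → ℝ≥0∞) : ℝ≥0∞ :=
  ∫⁻ x, f x * radonT n g x

/-!
After a quadratic change of coordinates, `y_d = x_d - |y' - x'|²` becomes the bilinear relation
`u + v = ⟨x', y'⟩`, symmetric in the two points. If `z 0, …, z n` are incident to a point `p`, then
`p` is determined by them, with Jacobian the volume of the simplex with vertices `z i'`; hence
(Drury) the integral over `p` of the simplex volumes spanned by the slices of `F 0, …, F n` is at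
most `∏ |F i|`. Since random points of a set of measure `m` rarely span a simplex of volume much
below `m`, this gives the restricted `L^{(n+2)/(n+1)}` bound, together with a gain when the slices
are very unequal in size. The gain makes the interactions between dyadic level sets of `f` and `f*`
summable, so one pair of level sets carries a power of `ε` of a quasiextremal pair. For a pair of
sets near equality in the bound, the same identity shows that a typical slice lies mostly in a box
of comparable measure. The relation then confines the points incident to most of that box to the
dual box, and pigeonholing into smaller cells leaves a single ball.
-/

/-! ### Simplices in `ℝⁿ` -/

section Simplex

variable {n : ℕ}

/-- The matrix with rows `(1, z i)`; its determinant is `n!` times the signed volume of the simplex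
with vertices `z i`. -/
def simplexMatrix (z : Fin (n + 1) → Vec n) : Matrix (Fin (n + 1)) (Fin (n + 1)) ℝ :=
  Matrix.of fun i => Fin.cons 1 (z i)

/-- `n!` times the volume of the simplex with vertices `z i`, i.e. the volume of the parallelepiped
spanned by its edges at a vertex. -/
def simplexVol (z : Fin (n + 1) → Vec n) : ℝ := |(simplexMatrix z).det|

lemma simplexVol_nonneg (z : Fin (n + 1) → Vec n) : 0 ≤ simplexVol z := abs_nonneg _

lemma continuous_simplexVol : Continuous (simplexVol (n := n)) := by
  refine continuous_abs.comp (Continuous.matrix_det (continuous_matrix fun i j => ?_))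
  refine Fin.cases ?_ (fun k => ?_) j
  · simp only [simplexMatrix, Matrix.of_apply, Fin.cons_zero]
    fun_prop
  · simp only [simplexMatrix, Matrix.of_apply, Fin.cons_succ]
    fun_prop

lemma simplexVol_comp_perm (z : Fin (n + 1) → Vec n) (σ : Equiv.Perm (Fin (n + 1))) :
    simplexVol (z ∘ σ) = simplexVol z := by
  have h : simplexMatrix (z ∘ σ) = (simplexMatrix z).submatrix σ id := rfl
  rw [simplexVol, h, Matrix.det_permute, simplexVol]
  rcases Int.units_eq_one_or (Equiv.Perm.sign σ) with h | h <;> simp [h]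

lemma simplexVol_comp_of_injective {ι : Type*} (ω : ι → Vec n) {f g : Fin (n + 1) → ι}
    (hf : Function.Injective f) (hg : Function.Injective g) (h : Set.range f = Set.range g) :
    simplexVol (ω ∘ f) = simplexVol (ω ∘ g) := by
  let σ := (Equiv.ofInjective f hf).trans ((Equiv.setCongr h).trans (Equiv.ofInjective g hg).symm)
  have hσ : f = g ∘ σ := by
    ext i : 1
    exact congrArg Subtype.val ((Equiv.ofInjective g hg).apply_symm_apply
      (Equiv.setCongr h (Equiv.ofInjective f hf i))).symm
  rw [hσ, ← Function.comp_assoc, simplexVol_comp_perm]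

lemma simplexVol_insertNth (i : Fin (n + 1)) (y : Vec n) (w : Fin n → Vec n) :
    simplexVol (i.insertNth y w : Fin (n + 1) → Vec n) =
      simplexVol (Fin.cons y w : Fin (n + 1) → Vec n) := by
  rw [← Fin.cons_comp_cycleRange, simplexVol_comp_perm]

lemma simplexMatrix_update (z : Fin (n + 1) → Vec n) (i : Fin (n + 1)) (y : Vec n) :
    simplexMatrix (Function.update z i y) = (simplexMatrix z).updateRow i (Fin.cons 1 y) := by
  ext a b
  by_cases h : a = i
  · subst h
    simp [simplexMatrix]
  · simp [simplexMatrix, h]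

/-- The matrix whose rows are the edges `z (i + 1) - z 0` of a simplex. -/
def edgeMatrix (z : Fin (n + 1) → Vec n) : Matrix (Fin n) (Fin n) ℝ :=
  Matrix.of fun i => z i.succ - z 0

lemma det_simplexMatrix (z : Fin (n + 1) → Vec n) :
    (simplexMatrix z).det = (edgeMatrix z).det := by
  let B : Matrix (Fin (n + 1)) (Fin (n + 1)) ℝ :=
    Matrix.of (Fin.cons (Fin.cons 1 (z 0)) fun i => Fin.cons 0 (edgeMatrix z i))
  have h : (simplexMatrix z).det = B.det := by
    refine Matrix.det_eq_of_forall_row_eq_smul_add_const (Fin.cons 0 fun _ => 1) 0 (by simp) ?_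
    intro i j
    refine Fin.cases ?_ (fun i => ?_) i <;> refine Fin.cases ?_ (fun j => ?_) j <;>
      simp [simplexMatrix, B, edgeMatrix]
  rw [h, Matrix.det_succ_column_zero, Fin.sum_univ_succ]
  simp only [B, Matrix.of_apply, Fin.cons_zero, Fin.cons_succ, Fin.val_zero, pow_zero, one_mul,
    mul_zero, zero_mul, Finset.sum_const_zero, add_zero]
  rfl

/-- Singular values of the matrix with rows `v i`. -/
lemma exists_orthonormalBasis_sum_inner_sq {ι : Type*} [Fintype ι] [DecidableEq ι]
    (v : ι → EuclideanSpace ℝ ι) :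
    ∃ (b : OrthonormalBasis ι ℝ (EuclideanSpace ℝ ι)) (σ : ι → ℝ), (∀ j, 0 ≤ σ j) ∧
      ∏ j, σ j = |(Matrix.of fun i => v i : Matrix ι ι ℝ).det| ∧
      ∀ j, ∑ i, ⟪v i, b j⟫ ^ 2 = σ j ^ 2 := by
  set D : Matrix ι ι ℝ := Matrix.of fun i => v i
  have hD : (D.transpose * D).PosSemidef := by
    simpa using Matrix.posSemidef_conjTranspose_mul_self D
  set b := hD.1.eigenvectorBasis
  have hdet : ∏ j, hD.1.eigenvalues j = D.det ^ 2 := by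
    have := hD.1.det_eq_prod_eigenvalues
    rw [Matrix.det_mul, Matrix.det_transpose] at this
    simpa [pow_two] using this.symm
  refine ⟨b, fun j => √(hD.1.eigenvalues j), fun j => Real.sqrt_nonneg _, ?_, fun j => ?_⟩
  · rw [← Real.sqrt_prod _ fun j _ => hD.eigenvalues_nonneg j, hdet, Real.sqrt_sq_eq_abs]
  have hinner (i : ι) : ⟪v i, b j⟫ = D.mulVec (b j) i := by
    simp [D, Matrix.mulVec, dotProduct, PiLp.inner_apply, mul_comm]
  have hunit : dotProduct (b j : ι → ℝ) (b j) = 1 := by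
    have h := real_inner_self_eq_norm_sq (b j)
    rw [b.orthonormal.1 j, one_pow, EuclideanSpace.inner_eq_star_dotProduct] at h
    exact h
  rw [Real.sq_sqrt (hD.eigenvalues_nonneg j)]
  calc ∑ i, ⟪v i, b j⟫ ^ 2
      = dotProduct (b j) ((D.transpose * D).mulVec (b j)) := by
        rw [← Matrix.mulVec_mulVec, Matrix.dotProduct_mulVec, Matrix.vecMul_transpose]
        simp only [hinner, dotProduct, pow_two]
    _ = hD.1.eigenvalues j := by
        rw [hD.1.mulVec_eigenvectorBasis j, dotProduct_smul, hunit, smul_eq_mul, mul_one]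

/-- Cramer's rule. -/
lemma exists_barycentric {z : Fin (n + 1) → Vec n} (hz : 0 < simplexVol z) (y : Vec n) :
    ∃ t : Fin (n + 1) → ℝ, ∑ i, t i = 1 ∧ ∑ i, t i • z i = y ∧
      ∀ i, |t i| * simplexVol z = simplexVol (Function.update z i y) := by
  have hunit : IsUnit (simplexMatrix z) :=
    (Matrix.isUnit_iff_isUnit_det _).2 (abs_pos.1 hz).isUnit
  obtain ⟨t, ht⟩ := Matrix.vecMul_surjective_iff_isUnit.2 hunit (Fin.cons 1 y)
  have hsum : ∑ i, t i • (simplexMatrix z i : Fin (n + 1) → ℝ) = Fin.cons 1 y :=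
    (Matrix.vecMul_eq_sum t (simplexMatrix z)).symm.trans ht
  refine ⟨t, ?_, ?_, fun i => ?_⟩
  · simpa [simplexMatrix] using congrFun hsum 0
  · ext k
    simpa [simplexMatrix] using congrFun hsum k.succ
  · rw [simplexVol, simplexVol, simplexMatrix_update, ← hsum, Matrix.det_updateRow_sum, smul_eq_mul,
      abs_mul]

lemma sub_eq_sum_smul_sub_of_barycentric {z : Fin (n + 1) → Vec n} {t : Fin (n + 1) → ℝ}
    (ht : ∑ i, t i = 1) :
    ∑ i, t i • z i - z 0 = ∑ i : Fin n, t i.succ • (z i.succ - z 0) := by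
  rw [Fin.sum_univ_succ] at ht
  rw [Fin.sum_univ_succ, eq_sub_of_add_eq ht]
  simp only [smul_sub, Finset.sum_sub_distrib, ← Finset.sum_smul]
  module

lemma exists_box_of_simplexVol_update_le {z : Fin (n + 1) → Vec n} (hz : 0 < simplexVol z) {a : ℝ}
    (ha : 0 < a) :
    ∃ (b : OrthonormalBasis (Fin n) ℝ (Vec n)) (r : Fin n → ℝ), (∀ j, 0 < r j) ∧
      ∏ j, r j = (n * (a / simplexVol z)) ^ n * simplexVol z ∧
      ∀ y : Vec n, (∀ i, simplexVol (Function.update z i y) ≤ a) →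
        ∀ j, |⟪y - z 0, b j⟫| ≤ r j := by
  obtain ⟨b, σ, hσ0, hσdet, hσ⟩ :=
    exists_orthonormalBasis_sum_inner_sq fun i : Fin n => z i.succ - z 0
  have hσprod : ∏ j, σ j = simplexVol z := by
    rw [hσdet, simplexVol, det_simplexMatrix]
    rfl
  have hσpos (j) : 0 < σ j := by
    refine (hσ0 j).lt_of_ne' fun h => hz.ne' ?_
    rw [← hσprod, Finset.prod_eq_zero (Finset.mem_univ j) h]
  refine ⟨b, fun j => n * (a / simplexVol z) * σ j, fun j => ?_, ?_, fun y hy j => ?_⟩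
  · have := Fin.pos j
    have := hσpos j
    positivity
  · rw [Finset.prod_mul_distrib, hσprod, Finset.prod_const, Finset.card_univ, Fintype.card_fin]
  · obtain ⟨t, ht1, rfl, htV⟩ := exists_barycentric hz y
    have ht (i) : |t i| ≤ a / simplexVol z := (le_div_iff₀ hz).2 ((htV i).trans_le (hy i))
    have hedge (i : Fin n) : |⟪z i.succ - z 0, b j⟫| ≤ σ j := by
      refine abs_le_of_sq_le_sq ?_ (hσ0 j)
      rw [← hσ j]
      exact Finset.single_le_sum (f := fun i => ⟪z (Fin.succ i) - z 0, b j⟫ ^ 2)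
        (fun i _ => sq_nonneg _) (Finset.mem_univ i)
    rw [sub_eq_sum_smul_sub_of_barycentric ht1, sum_inner]
    calc |∑ i : Fin n, ⟪t i.succ • (z i.succ - z 0), b j⟫|
        ≤ ∑ i : Fin n, |⟪t i.succ • (z i.succ - z 0), b j⟫| := Finset.abs_sum_le_sum_abs _ _
      _ ≤ ∑ _i : Fin n, a / simplexVol z * σ j := by
        refine Finset.sum_le_sum fun i _ => ?_
        rw [real_inner_smul_left, abs_mul]
        exact mul_le_mul (ht _) (hedge i) (abs_nonneg _) (by positivity)
      _ = n * (a / simplexVol z) * σ j := by simp [mul_assoc]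

end Simplex

section RandomSimplex

variable {n : ℕ}

lemma volume_setOf_abs_inner_sub_le {ι : Type*} [Fintype ι]
    (b : OrthonormalBasis ι ℝ (EuclideanSpace ℝ ι)) (a : EuclideanSpace ℝ ι) (r : ι → ℝ) :
    volume {y : EuclideanSpace ℝ ι | ∀ j, |⟪y - a, b j⟫| ≤ r j} =
      ∏ j, ENNReal.ofReal (2 * r j) := by
  have hrepr : MeasurePreserving (fun y => (b.repr (y - a)).ofLp) volume volume :=
    (PiLp.volume_preserving_ofLp ι).comp
      (b.measurePreserving_repr.comp (measurePreserving_sub_right volume a))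
  have hbox : {y : EuclideanSpace ℝ ι | ∀ j, |⟪y - a, b j⟫| ≤ r j} =
      (fun y => (b.repr (y - a)).ofLp) ⁻¹' Set.univ.pi fun j => Set.Icc (-r j) (r j) := by
    ext y
    simp only [Set.mem_ofPred_eq, Set.mem_preimage, Set.mem_pi, Set.mem_univ, true_imp_iff,
      Set.mem_Icc, ← abs_le, b.repr_apply_apply, real_inner_comm]
  rw [hbox, hrepr.measure_preimage
    (MeasurableSet.univ_pi fun j => measurableSet_Icc).nullMeasurableSet, volume_pi_pi]
  exact Finset.prod_congr rfl fun j _ => by rw [Real.volume_Icc, sub_neg_eq_add, two_mul]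

lemma volume_setOf_simplexVol_update_le {z : Fin (n + 1) → Vec n} (hz : 0 < simplexVol z) {a : ℝ}
    (ha : 0 < a) :
    volume {y | ∀ i, simplexVol (Function.update z i y) ≤ a} ≤
      ENNReal.ofReal ((2 * n * (a / simplexVol z)) ^ n * simplexVol z) := by
  obtain ⟨b, r, hr, hprod, hbox⟩ := exists_box_of_simplexVol_update_le hz ha
  refine (measure_mono (show _ ⊆ {y | ∀ j, |⟪y - z 0, b j⟫| ≤ r j} from hbox)).trans_eq ?_
  rw [volume_setOf_abs_inner_sub_le,
    ← ENNReal.ofReal_prod_of_nonneg fun j _ => (mul_pos two_pos (hr j)).le,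
    Finset.prod_mul_distrib, hprod, Finset.prod_const, Finset.card_univ, Fintype.card_fin,
    ← mul_assoc, ← mul_pow, ← mul_assoc]

lemma volume_mul_measure_eq_lintegral_volume_line {E : Type*} [AddCommGroup E] [Module ℝ E]
    [MeasurableSpace E] [MeasurableAdd₂ E] [MeasurableSMul ℝ E] (μ : Measure E) [SFinite μ]
    [μ.IsAddRightInvariant] {Q : Set E} (hQ : MeasurableSet Q) (I : Set ℝ) (w : E) :
    volume I * μ Q = ∫⁻ z, volume ({t | z + t • w ∈ Q} ∩ I) ∂μ := by
  have hmap : Measurable fun p : E × ℝ => p.1 + p.2 • w :=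
    measurable_fst.add ((measurable_id.smul_const w).comp measurable_snd)
  have hind : Measurable fun p : E × ℝ => Q.indicator (1 : E → ℝ≥0∞) (p.1 + p.2 • w) :=
    (measurable_one.indicator hQ).comp hmap
  have hshift (t : ℝ) : ∫⁻ z, Q.indicator 1 (z + t • w) ∂μ = μ Q := by
    rw [lintegral_add_right_eq_self (Q.indicator (1 : E → ℝ≥0∞)) (t • w),
      lintegral_indicator_one hQ]
  have hline (z : E) : ∫⁻ t in I, Q.indicator (1 : E → ℝ≥0∞) (z + t • w) =
      volume ({t | z + t • w ∈ Q} ∩ I) := by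
    have hline : MeasurableSet {t : ℝ | z + t • w ∈ Q} := (hmap.comp measurable_prodMk_left) hQ
    rw [← Measure.restrict_apply hline, ← lintegral_indicator_one hline]
    rfl
  calc volume I * μ Q = ∫⁻ t in I, ∫⁻ z, Q.indicator 1 (z + t • w) ∂μ := by
        simp_rw [hshift, setLIntegral_const, mul_comm]
    _ = ∫⁻ z, (∫⁻ t in I, Q.indicator 1 (z + t • w)) ∂μ :=
      (lintegral_lintegral_swap hind.aemeasurable).symm
    _ = ∫⁻ z, volume ({t | z + t • w ∈ Q} ∩ I) ∂μ := lintegral_congr hline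

lemma measure_eq_zero_of_finite_lines {E : Type*} [AddCommGroup E] [Module ℝ E] [MeasurableSpace E]
    [MeasurableAdd₂ E] [MeasurableSMul ℝ E] (μ : Measure E) [SFinite μ] [μ.IsAddRightInvariant]
    {N : Set E} (hN : MeasurableSet N) (w : E) (hw : ∀ z : E, {t : ℝ | z + t • w ∈ N}.Finite) :
    μ N = 0 := by
  have hline (z : E) : volume ({t : ℝ | z + t • w ∈ N} ∩ Set.Icc 0 1) = 0 :=
    ((hw z).inter_of_left _).measure_zero _
  calc μ N = volume (Set.Icc (0 : ℝ) 1) * μ N := by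
        rw [Real.volume_Icc, sub_zero, ENNReal.ofReal_one, one_mul]
    _ = 0 := by
      rw [volume_mul_measure_eq_lintegral_volume_line μ hN, lintegral_congr hline,
        lintegral_zero]

lemma edgeMatrix_add_smul_single (z : Fin (n + 1) → Vec n) (t : ℝ) :
    edgeMatrix (z + t • (Fin.cons 0 fun i => EuclideanSpace.single i 1 : Fin (n + 1) → Vec n)) =
      Matrix.scalar (Fin n) t - -edgeMatrix z := by
  ext i k
  by_cases hik : i = k
  · subst hik
    simp only [edgeMatrix, Pi.add_apply, Pi.smul_apply, Fin.cons_succ, WithLp.ofLp_add,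
      WithLp.ofLp_smul, PiLp.ofLp_single, Fin.cons_zero, smul_zero, add_zero, Matrix.of_apply,
      Pi.sub_apply, Pi.single_eq_same, smul_eq_mul, mul_one, Matrix.scalar_apply, Matrix.neg_of,
      Matrix.sub_apply, Matrix.diagonal_apply_eq, Pi.neg_apply, neg_sub]
    ring
  · simp [edgeMatrix, Matrix.scalar_apply, hik, Ne.symm hik]

lemma ae_simplexVol_pos : ∀ᵐ z : Fin (n + 1) → Vec n, 0 < simplexVol z := by
  have hnull : volume {z : Fin (n + 1) → Vec n | simplexVol z = 0} = 0 := by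
    refine measure_eq_zero_of_finite_lines volume
      (continuous_simplexVol.measurable (measurableSet_singleton 0))
      (Fin.cons 0 fun i => EuclideanSpace.single i 1) fun z => ?_
    refine (Polynomial.finite_setOfPred_isRoot
      (Matrix.charpoly_monic (-edgeMatrix z)).ne_zero).subset fun t ht => ?_
    rw [Set.mem_ofPred_eq, Polynomial.IsRoot, Matrix.eval_charpoly, ← edgeMatrix_add_smul_single,
      ← det_simplexMatrix]
    exact abs_eq_zero.1 ht
  filter_upwards [measure_eq_zero_iff_ae_notMem.1 hnull] with z hz
  exact (simplexVol_nonneg z).lt_of_ne' hz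

lemma exists_simplexVol_update_removeNth_le (ω : Fin (n + 2) → Vec n) :
    ∃ j, ∀ i, simplexVol (Function.update (j.removeNth ω) i (ω j)) ≤
      simplexVol (j.removeNth ω) := by
  obtain ⟨j, hj⟩ := Finite.exists_max fun j : Fin (n + 2) => simplexVol (ω ∘ j.succAbove)
  refine ⟨j, fun i => ?_⟩
  set σ := Equiv.swap j (j.succAbove i)
  have hupdate : Function.update (j.removeNth ω) i (ω j) = ω ∘ σ ∘ j.succAbove := by
    ext k : 1
    rcases eq_or_ne k i with rfl | hk
    · simp [σ]
    · rw [Function.update_of_ne hk, Function.comp, Function.comp,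
        Equiv.swap_apply_of_ne_of_ne (Fin.succAbove_ne j k) (Fin.succAbove_right_injective.ne hk),
        Fin.removeNth]
  have hrange : Set.range (σ ∘ j.succAbove) = Set.range (j.succAbove i).succAbove := by
    rw [Set.range_comp, Fin.range_succAbove, Fin.range_succAbove,
      Set.image_compl_eq σ.bijective, Set.image_singleton, Equiv.swap_apply_left]
  rw [hupdate, simplexVol_comp_of_injective ω
    (σ.injective.comp Fin.succAbove_right_injective) Fin.succAbove_right_injective hrange]
  exact hj _

/-- The constant of `volume_pow_le_volume_large_simplices`. -/
def largeSimplexConst (n : ℕ) : ℝ := 2 * (n + 2) * (2 * n) ^ n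

lemma two_mul_self_pow_pos (n : ℕ) : 0 < (2 * n : ℝ) ^ n := by
  rcases n.eq_zero_or_pos with rfl | hn <;> positivity

lemma largeSimplexConst_pos (n : ℕ) : 0 < largeSimplexConst n :=
  mul_pos (by positivity) (two_mul_self_pow_pos n)

/-- The pairs `(y, z)` in `S × Sⁿ⁺¹` for which `z` has the largest volume among the simplices with
vertices in `{y, z 0, …, z n}`. -/
def maximalSimplices (S : Set (Vec n)) : Set (Vec n × (Fin (n + 1) → Vec n)) :=
  S ×ˢ (Set.univ.pi fun _ => S) ∩
    {p | ∀ i, simplexVol (Function.update p.2 i p.1) ≤ simplexVol p.2}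

lemma measurableSet_maximalSimplices {S : Set (Vec n)} (hS : MeasurableSet S) :
    MeasurableSet (maximalSimplices S) := by
  refine (hS.prod (MeasurableSet.univ_pi fun _ => hS)).inter ?_
  simp only [Set.ofPred_forall]
  refine MeasurableSet.iInter fun i => measurableSet_le ?_ ?_
  · exact (continuous_simplexVol.comp (continuous_snd.update i continuous_fst)).measurable
  · exact (continuous_simplexVol.comp continuous_snd).measurable

lemma volume_pow_le_volume_maximalSimplices (S : Set (Vec n)) :
    volume S ^ (n + 2) ≤ (n + 2 : ℕ) * volume (maximalSimplices S) := by
  let e (j : Fin (n + 2)) := MeasurableEquiv.piFinSuccAbove (fun _ => Vec n) j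
  have hcover : (Set.univ.pi fun _ => S) ⊆ ⋃ j, e j ⁻¹' maximalSimplices S := by
    intro ω hω
    obtain ⟨j, hj⟩ := exists_simplexVol_update_removeNth_le ω
    exact Set.mem_iUnion.2 ⟨j, ⟨hω j trivial, fun i _ => hω _ trivial⟩, hj⟩
  calc volume S ^ (n + 2) = volume (Set.univ.pi fun _ : Fin (n + 2) => S) := by
        simp [volume_pi_pi]
    _ ≤ ∑ j, volume (e j ⁻¹' maximalSimplices S) := by
        simpa using (measure_mono hcover).trans (measure_iUnion_le _)
    _ = (n + 2 : ℕ) * volume (maximalSimplices S) := by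
        have he (j) : volume (e j ⁻¹' maximalSimplices S) = volume (maximalSimplices S) :=
          (volume_preserving_piFinSuccAbove (fun _ => Vec n) j).measure_preimage_equiv _
        simp only [he, Finset.sum_const, Finset.card_univ, Fintype.card_fin, nsmul_eq_mul]

lemma volume_maximalSimplices_le {S : Set (Vec n)} (hS : MeasurableSet S) (a : ℝ) :
    volume (maximalSimplices S) ≤
      volume S * volume {z : Fin (n + 1) → Vec n | (∀ i, z i ∈ S) ∧ a ≤ simplexVol z} +
        ENNReal.ofReal ((2 * n) ^ n * a) * volume S ^ (n + 1) := by
  set Γ := {z : Fin (n + 1) → Vec n | (∀ i, z i ∈ S) ∧ a ≤ simplexVol z} with hΓ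
  have hpi : MeasurableSet (Set.univ.pi fun _ : Fin (n + 1) => S) :=
    MeasurableSet.univ_pi fun _ => hS
  have hΓm : MeasurableSet Γ := by
    simpa [hΓ, Set.pi, Set.ofPred_and] using
      hpi.inter (measurableSet_le (measurable_const (a := a)) continuous_simplexVol.measurable)
  have hfibre : ∀ᵐ z : Fin (n + 1) → Vec n, volume ((·, z) ⁻¹' maximalSimplices S) ≤
      Γ.indicator (fun _ => volume S) z +
        (Set.univ.pi fun _ => S).indicator (fun _ => ENNReal.ofReal ((2 * n) ^ n * a)) z := by
    filter_upwards [ae_simplexVol_pos] with z hz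
    by_cases hzS : z ∈ Set.univ.pi fun _ => S
    · rcases le_or_gt a (simplexVol z) with ha | ha
      · rw [Set.indicator_of_mem (show z ∈ Γ from ⟨fun i => hzS i trivial, ha⟩)]
        exact (measure_mono fun y hy => hy.1.1).trans le_self_add
      · rw [Set.indicator_of_mem hzS]
        refine (measure_mono fun y hy => hy.2).trans
          ((volume_setOf_simplexVol_update_le hz hz).trans (le_add_left ?_))
        rw [div_self hz.ne', mul_one]
        gcongr
    · have : (·, z) ⁻¹' maximalSimplices S = ∅ :=
        Set.eq_empty_of_forall_notMem fun y hy => hzS hy.1.2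
      simp [this]
  calc volume (maximalSimplices S)
      ≤ ∫⁻ z, Γ.indicator (fun _ => volume S) z +
          (Set.univ.pi fun _ => S).indicator (fun _ => ENNReal.ofReal ((2 * n) ^ n * a)) z := by
        rw [Measure.volume_eq_prod, Measure.prod_apply_symm (measurableSet_maximalSimplices hS)]
        exact lintegral_mono_ae hfibre
    _ = _ := by
        rw [lintegral_add_left (measurable_const.indicator hΓm), lintegral_indicator_const hΓm,
          lintegral_indicator_const hpi, volume_pi_pi]
        simp

/-- Among `n + 2` random points of `S`, the largest simplex `z` and the remaining point `y` satisfy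
`|update z i y| ≤ |z|`, which confines `y` to a set of volume `O(|z|)`; hence `|z| ≳ |S|`. -/
lemma volume_pow_le_volume_large_simplices {S : Set (Vec n)} (hS : MeasurableSet S)
    (hfin : volume S ≠ ⊤) :
    volume S ^ (n + 1) ≤ 2 * (n + 2) * volume {z : Fin (n + 1) → Vec n |
      (∀ i, z i ∈ S) ∧ (volume S).toReal / largeSimplexConst n ≤ simplexVol z} := by
  set h := volume S
  rcases eq_or_ne h 0 with h0 | h0
  · simp [h0]
  set Γ := {z : Fin (n + 1) → Vec n |
    (∀ i, z i ∈ S) ∧ h.toReal / largeSimplexConst n ≤ simplexVol z}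
  have hhalf : (n + 2 : ℕ) * (ENNReal.ofReal ((2 * n) ^ n * (h.toReal / largeSimplexConst n)) *
      h ^ (n + 1)) = h ^ (n + 2) / 2 := by
    have : ((n + 2 : ℕ) : ℝ) * ((2 * n) ^ n * (h.toReal / largeSimplexConst n)) = h.toReal / 2 := by
      have := two_mul_self_pow_pos n
      rw [largeSimplexConst]
      push_cast
      field_simp
    rw [← mul_assoc, ← ENNReal.ofReal_natCast, ← ENNReal.ofReal_mul (by positivity), this,
      ENNReal.ofReal_div_of_pos two_pos, ENNReal.ofReal_toReal hfin, ENNReal.ofReal_ofNat,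
      pow_succ' h (n + 1), ENNReal.mul_div_right_comm]
  have hle : h ^ (n + 2) ≤ (n + 2 : ℕ) * (h * volume Γ) + h ^ (n + 2) / 2 := by
    rw [← hhalf, ← mul_add]
    exact (volume_pow_le_volume_maximalSimplices S).trans
      (mul_le_mul_right (volume_maximalSimplices_le hS _) _)
  have hle' : h ^ (n + 2) / 2 ≤ (n + 2 : ℕ) * (h * volume Γ) := by
    rw [← ENNReal.sub_half (ENNReal.pow_ne_top hfin)]
    exact tsub_le_iff_right.2 hle
  rw [ENNReal.div_le_iff two_ne_zero ofNat_ne_top, pow_succ' h (n + 1)] at hle'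
  refine (ENNReal.mul_le_mul_iff_right h0 hfin).1 (hle'.trans_eq ?_)
  push_cast
  ring

end RandomSimplex

/-! ### The incidence relation -/

section Incidence

variable {n : ℕ}

/-- In the coordinates used below the points `x = (x', u)` and `y = (y', v)` are incident when
`u + v = ⟨x', y'⟩`; the point over `y'` that is incident to `x` is `incidentPoint x y'`. -/
def incidentPoint (x : Pt n) (y' : Vec n) : Pt n := (y', ⟪x.1, y'⟫ - x.2)

/-- The fibre over `x` of the incidence relation with `F`, projected to `ℝ^{d-1}`. -/
def slice (F : Set (Pt n)) (x : Pt n) : Set (Vec n) := incidentPoint x ⁻¹' F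

/-- The measure `dx dy'` on the incidence manifold. -/
def incidenceMeasure (n : ℕ) : Measure (Pt n × Pt n) :=
  (volume : Measure (Pt n × Vec n)).map fun p => (p.1, incidentPoint p.1 p.2)

lemma mem_slice {F : Set (Pt n)} {x : Pt n} {y' : Vec n} :
    y' ∈ slice F x ↔ incidentPoint x y' ∈ F := Iff.rfl

lemma incidentPoint_incidentPoint (x : Pt n) (y' : Vec n) :
    incidentPoint (incidentPoint x y') x.1 = x := by
  refine Prod.ext rfl ?_
  simp only [incidentPoint, real_inner_comm y' x.1]
  exact sub_sub_cancel _ _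

lemma measurable_incidentPoint : Measurable fun p : Pt n × Vec n => incidentPoint p.1 p.2 := by
  unfold incidentPoint
  fun_prop

lemma measurableSet_slice {F : Set (Pt n)} (hF : MeasurableSet F) (x : Pt n) :
    MeasurableSet (slice F x) :=
  (measurable_incidentPoint.comp measurable_prodMk_left) hF

lemma measurable_volume_slice {F : Set (Pt n)} (hF : MeasurableSet F) :
    Measurable fun x => volume (slice F x) :=
  measurable_measure_prodMk_left (measurable_incidentPoint hF)

lemma measurable_incidence :
    Measurable fun p : Pt n × Vec n => (p.1, incidentPoint p.1 p.2) :=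
  measurable_fst.prodMk measurable_incidentPoint

lemma lintegral_incidenceMeasure {f : Pt n × Pt n → ℝ≥0∞} (hf : Measurable f) :
    ∫⁻ z, f z ∂incidenceMeasure n = ∫⁻ x, ∫⁻ y', f (x, incidentPoint x y') := by
  rw [incidenceMeasure, lintegral_map hf measurable_incidence]
  exact lintegral_prod _ (hf.comp measurable_incidence).aemeasurable

lemma measurePreserving_prod_right_comm {α β γ : Type*} [MeasurableSpace α] [MeasurableSpace β]
    [MeasurableSpace γ] (μ : Measure α) (ν : Measure β) (τ : Measure γ) [SFinite μ] [SFinite ν]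
    [SFinite τ] :
    MeasurePreserving (fun p : (α × β) × γ => ((p.1.1, p.2), p.1.2))
      ((μ.prod ν).prod τ) ((μ.prod τ).prod ν) :=
  ((measurePreserving_prodAssoc μ τ ν).symm _).comp
    (((MeasurePreserving.id μ).prod Measure.measurePreserving_swap).comp
      (measurePreserving_prodAssoc μ ν τ))

lemma measurePreserving_swap_incidence :
    MeasurePreserving fun p : Pt n × Vec n => (incidentPoint p.1 p.2, p.1.1) := by
  have reflect : MeasurePreserving fun q : (Vec n × Vec n) × ℝ =>
      (q.1.swap, ⟪q.1.1, q.1.2⟫ - q.2) :=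
    Measure.measurePreserving_swap.skew_product (g := fun p u => ⟪p.1, p.2⟫ - u) (by fun_prop)
      (Filter.Eventually.of_forall fun p =>
        (Measure.measurePreserving_sub_left volume ⟪p.1, p.2⟫).map_eq)
  exact (measurePreserving_prod_right_comm volume volume volume).comp
    (reflect.comp (measurePreserving_prod_right_comm volume volume volume))

lemma measurePreserving_swap_incidenceMeasure :
    MeasurePreserving Prod.swap (incidenceMeasure n) (incidenceMeasure n) := by
  refine ⟨measurable_swap, ?_⟩
  rw [incidenceMeasure, Measure.map_map measurable_swap measurable_incidence]
  nth_rw 2 [← measurePreserving_swap_incidence.map_eq]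
  rw [Measure.map_map measurable_incidence measurePreserving_swap_incidence.measurable]
  refine congrArg (Measure.map · _) (funext fun p => ?_)
  simp only [Function.comp_apply, incidentPoint_incidentPoint, Prod.swap_prod_mk]

lemma incidenceMeasure_prod {E F : Set (Pt n)} (hE : MeasurableSet E) (hF : MeasurableSet F) :
    incidenceMeasure n (E ×ˢ F) = ∫⁻ x in E, volume (slice F x) := by
  rw [← lintegral_indicator_one (hE.prod hF),
    lintegral_incidenceMeasure (measurable_one.indicator (hE.prod hF)), ← lintegral_indicator hE]
  refine lintegral_congr fun x => ?_
  by_cases hx : x ∈ E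
  · rw [Set.indicator_of_mem hx, ← lintegral_indicator_one (measurableSet_slice hF x)]
    refine lintegral_congr fun y' => Set.indicator_eq_indicator ?_ rfl
    simp only [Set.mem_prod, hx, true_and, mem_slice]
  · simp only [Set.indicator_of_notMem hx, Set.mem_prod, hx, false_and, not_false_eq_true,
      Set.indicator_of_notMem, lintegral_zero]

lemma incidenceMeasure_prod_comm {E F : Set (Pt n)} (hE : MeasurableSet E)
    (hF : MeasurableSet F) : incidenceMeasure n (E ×ˢ F) = incidenceMeasure n (F ×ˢ E) := by
  rw [← measurePreserving_swap_incidenceMeasure.measure_preimage (hE.prod hF).nullMeasurableSet,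
    Set.preimage_swap_prod]

lemma incidenceMeasure_inter_incident {M : Set (Pt n × Pt n)} (hM : MeasurableSet M) :
    incidenceMeasure n (M ∩ {z | z.1.2 + z.2.2 = ⟪z.1.1, z.2.1⟫}) = incidenceMeasure n M := by
  have incident : MeasurableSet {z : Pt n × Pt n | z.1.2 + z.2.2 = ⟪z.1.1, z.2.1⟫} :=
    measurableSet_eq_fun (by fun_prop) (by fun_prop)
  rw [incidenceMeasure, Measure.map_apply measurable_incidence hM,
    Measure.map_apply measurable_incidence (hM.inter incident)]
  congr 1
  ext p
  simp [incidentPoint]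

end Incidence

section Drury

variable {n : ℕ}

/-- The integral of the volume of a simplex over all choices of its vertices `z i ∈ s i`. -/
def simplexIntegral (s : Fin (n + 1) → Set (Vec n)) : ℝ≥0∞ :=
  ∫⁻ z in Set.univ.pi s, ENNReal.ofReal (simplexVol z)

lemma simplexIntegral_mono {s t : Fin (n + 1) → Set (Vec n)} (h : ∀ i, s i ⊆ t i) :
    simplexIntegral s ≤ simplexIntegral t :=
  lintegral_mono_set (Set.pi_mono fun i _ => h i)

lemma measurable_ofReal_simplexVol :
    Measurable fun z : Fin (n + 1) → Vec n => ENNReal.ofReal (simplexVol z) :=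
  continuous_simplexVol.measurable.ennreal_ofReal

lemma setLIntegral_pi_insertNth {α : Fin (n + 1) → Type*} [∀ i, MeasurableSpace (α i)]
    (μ : ∀ i, Measure (α i)) [∀ i, SigmaFinite (μ i)] (i : Fin (n + 1)) (s : ∀ i, Set (α i))
    {f : (∀ i, α i) → ℝ≥0∞} (hf : Measurable f) :
    ∫⁻ z in Set.univ.pi s, f z ∂Measure.pi μ = ∫⁻ y in s i,
      ∫⁻ w in Set.univ.pi fun j => s (i.succAbove j), f (i.insertNth y w)
        ∂Measure.pi (fun j => μ (i.succAbove j)) ∂μ i := by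
  have split := (measurePreserving_piFinSuccAbove (fun i => (μ i).restrict (s i)) i).symm
  rw [Measure.restrict_pi_pi, ← split.lintegral_comp hf,
    lintegral_prod (fun p => f _) (hf.comp split.measurable).aemeasurable]
  simp only [Measure.restrict_pi_pi]
  rfl

lemma simplexIntegral_insertNth (i : Fin (n + 1)) (G : Set (Vec n)) (s : Fin n → Set (Vec n)) :
    simplexIntegral (i.insertNth G s) = simplexIntegral (Fin.cons G s : Fin (n + 1) → _) := by
  have expand : ∀ i : Fin (n + 1), simplexIntegral (i.insertNth G s) =
      ∫⁻ y in G, ∫⁻ w in Set.univ.pi s, ENNReal.ofReal (simplexVol (Fin.cons y w)) := by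
    intro i
    refine (setLIntegral_pi_insertNth (fun _ => volume) i _ measurable_ofReal_simplexVol).trans ?_
    simp only [Fin.insertNth_apply_same, Fin.insertNth_apply_succAbove, simplexVol_insertNth]
    rfl
  rw [expand i, ← expand 0, Fin.insertNth_zero']

/-- The coefficient vector for which `simplexMatrix z *ᵥ coeffVec x` has entries
`⟨x', z i⟩ - u`. -/
def coeffVec (x : Pt n) : Fin (n + 1) → ℝ := Fin.cons (-x.2) x.1

lemma measurePreserving_coeffVec : MeasurePreserving (coeffVec (n := n)) := by
  have split := (volume_preserving_piFinSuccAbove (fun _ : Fin (n + 1) => ℝ) 0).symm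
  have decompose : coeffVec = (MeasurableEquiv.piFinSuccAbove (fun _ : Fin (n + 1) => ℝ) 0).symm ∘
      Prod.map (-·) WithLp.ofLp ∘ Prod.swap := funext fun x => (Fin.insertNth_zero' _ _).symm
  rw [decompose]
  exact split.comp (((Measure.measurePreserving_neg volume).prod
    (PiLp.volume_preserving_ofLp (Fin n))).comp Measure.measurePreserving_swap)

lemma simplexMatrix_mulVec_coeffVec (z : Fin (n + 1) → Vec n) (x : Pt n) (i : Fin (n + 1)) :
    (simplexMatrix z).mulVec (coeffVec x) i = ⟪x.1, z i⟫ - x.2 := by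
  simp only [Matrix.mulVec, dotProduct, simplexMatrix, Matrix.of_apply, coeffVec,
    Fin.sum_univ_succ, Fin.cons_zero, mul_neg, one_mul, Fin.cons_succ, PiLp.inner_apply,
    RCLike.inner_apply, Real.ringHom_apply]
  ring

lemma simplexVol_mul_volume_setOf_incident {z : Fin (n + 1) → Vec n} (hz : 0 < simplexVol z)
    {T : Set (Fin (n + 1) → ℝ)} (hT : MeasurableSet T) :
    ENNReal.ofReal (simplexVol z) * volume {x : Pt n | (fun i => ⟪x.1, z i⟫ - x.2) ∈ T} =
      volume T := by
  have hdet : LinearMap.det (Matrix.toLin' (simplexMatrix z)) ≠ 0 := by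
    rw [LinearMap.det_toLin']
    exact abs_pos.1 hz
  have preimage : {x : Pt n | (fun i => ⟪x.1, z i⟫ - x.2) ∈ T} =
      coeffVec ⁻¹' (Matrix.toLin' (simplexMatrix z) ⁻¹' T) := by
    ext x
    simp only [Set.mem_preimage, Matrix.toLin'_apply,
      funext (simplexMatrix_mulVec_coeffVec z x), Set.mem_ofPred_eq]
  rw [preimage, measurePreserving_coeffVec.measure_preimage
    ((LinearMap.continuous_of_finiteDimensional _).measurable hT).nullMeasurableSet,
    Measure.addHaar_preimage_linearMap volume hdet, ← mul_assoc,
    ← ENNReal.ofReal_mul (simplexVol_nonneg z), LinearMap.det_toLin', abs_inv, ← simplexVol,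
    mul_inv_cancel₀ hz.ne', ENNReal.ofReal_one, one_mul]

/-- Drury's identity. -/
lemma lintegral_simplexIntegral_slice {F : Fin (n + 1) → Set (Pt n)}
    (hF : ∀ i, MeasurableSet (F i)) :
    ∫⁻ x, simplexIntegral (fun i => slice (F i) x) = ∏ i, volume (F i) := by
  let M : Set (Pt n × (Fin (n + 1) → Vec n)) := {p | ∀ i, incidentPoint p.1 (p.2 i) ∈ F i}
  have hM : MeasurableSet M := by
    rw [show M = ⋂ i, {p | incidentPoint p.1 (p.2 i) ∈ F i} from Set.ofPred_forall _]
    exact MeasurableSet.iInter fun i => (measurable_incidentPoint.comp (measurable_fst.prodMk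
      ((measurable_pi_apply i).comp measurable_snd))) (hF i)
  let N : Set ((Fin (n + 1) → Vec n) × (Fin (n + 1) → ℝ)) := {q | ∀ i, (q.1 i, q.2 i) ∈ F i}
  have hN : MeasurableSet N := by
    rw [show N = ⋂ i, {q | (q.1 i, q.2 i) ∈ F i} from Set.ofPred_forall _]
    exact MeasurableSet.iInter fun i => (((measurable_pi_apply i).comp measurable_fst).prodMk
      ((measurable_pi_apply i).comp measurable_snd)) (hF i)
  calc ∫⁻ x, simplexIntegral (fun i => slice (F i) x)
      = ∫⁻ x, ∫⁻ z, M.indicator (fun p => ENNReal.ofReal (simplexVol p.2)) (x, z) := by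
        refine lintegral_congr fun x => ?_
        rw [simplexIntegral, ← lintegral_indicator
          (MeasurableSet.univ_pi fun i => measurableSet_slice (hF i) x)]
        refine lintegral_congr fun z => Set.indicator_eq_indicator ?_ rfl
        simp [M, mem_slice]
    _ = ∫⁻ z, ∫⁻ x, M.indicator (fun p => ENNReal.ofReal (simplexVol p.2)) (x, z) :=
        lintegral_lintegral_swap
          ((measurable_ofReal_simplexVol.comp measurable_snd).indicator hM).aemeasurable
    _ = ∫⁻ z, volume (Prod.mk z ⁻¹' N) := by
        refine lintegral_congr_ae (ae_simplexVol_pos.mono fun z hz => ?_)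
        dsimp only
        rw [← simplexVol_mul_volume_setOf_incident hz (measurable_prodMk_left hN),
          ← lintegral_indicator_const]
        · rfl
        · exact measurable_prodMk_right hM
    _ = volume N := (Measure.prod_apply hN).symm
    _ = volume (Set.univ.pi F) := by
        rw [← (volume_measurePreserving_arrowProdEquivProdArrow (Vec n) ℝ
          (Fin (n + 1))).measure_preimage hN.nullMeasurableSet]
        congr 1
        ext
        simp [N, MeasurableEquiv.arrowProdEquivProdArrow, Set.mem_pi]
    _ = ∏ i, volume (F i) := Measure.pi_pi _ _

end Drury

section LowerBound

variable {n : ℕ}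

lemma measurable_ofReal_simplexVol_update (i : Fin (n + 1)) :
    Measurable fun p : (Fin (n + 1) → Vec n) × Vec n =>
      ENNReal.ofReal (simplexVol (Function.update p.1 i p.2)) :=
  measurable_ofReal_simplexVol.comp (continuous_fst.update i continuous_snd).measurable

lemma lintegral_lintegral_simplexVol_update (G H : Set (Vec n)) (i : Fin (n + 1)) :
    ∫⁻ z in Set.univ.pi fun _ => H, ∫⁻ y in G,
        ENNReal.ofReal (simplexVol (Function.update z i y)) =
      volume H * simplexIntegral (Fin.cons G fun _ => H : Fin (n + 1) → _) := by
  calc ∫⁻ z in Set.univ.pi fun _ => H, ∫⁻ y in G,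
        ENNReal.ofReal (simplexVol (Function.update z i y))
      = ∫⁻ _ in H, ∫⁻ w in Set.univ.pi fun _ => H, ∫⁻ y in G,
          ENNReal.ofReal (simplexVol (i.insertNth y w)) := by
        refine (setLIntegral_pi_insertNth (fun _ => volume) i (fun _ => H)
          (measurable_ofReal_simplexVol_update i).lintegral_prod_right').trans ?_
        simp only [Fin.update_insertNth]
        rfl
    _ = volume H * ∫⁻ w in Set.univ.pi fun _ => H, ∫⁻ y in G,
          ENNReal.ofReal (simplexVol (i.insertNth y w)) := by
        rw [setLIntegral_const, mul_comm]
    _ = volume H * simplexIntegral (i.insertNth G fun _ => H) := by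
        congr 1
        refine (lintegral_lintegral_swap ?_).trans
          ((setLIntegral_pi_insertNth (fun _ => volume) i (i.insertNth G fun _ => H)
            measurable_ofReal_simplexVol).trans ?_).symm
        · exact (measurable_ofReal_simplexVol.comp (Continuous.finInsertNth i continuous_snd
            continuous_fst).measurable).aemeasurable
        · simp only [Fin.insertNth_apply_same, Fin.insertNth_apply_succAbove]
          rfl
    _ = _ := by rw [simplexIntegral_insertNth]

lemma mul_volume_lt_simplexVol_update_le (G : Set (Vec n)) (z : Fin (n + 1) → Vec n) (a : ℝ) :
    ENNReal.ofReal a * volume {y ∈ G | ∃ i, a < simplexVol (Function.update z i y)} ≤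
      ∑ i, ∫⁻ y in G, ENNReal.ofReal (simplexVol (Function.update z i y)) := by
  have hmeas (i : Fin (n + 1)) :
      Measurable fun y => ENNReal.ofReal (simplexVol (Function.update z i y)) :=
    measurable_ofReal_simplexVol.comp (continuous_const.update i continuous_id).measurable
  have hsum := Finset.measurable_sum Finset.univ fun i _ => hmeas i
  rw [← lintegral_finsetSum _ fun i _ => hmeas i]
  refine le_trans ?_ (mul_meas_ge_le_lintegral hsum (ENNReal.ofReal a))
  rw [Measure.restrict_apply (measurableSet_le measurable_const hsum)]
  refine mul_le_mul_right (measure_mono ?_) _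
  rintro y ⟨hy, i, hi⟩
  exact ⟨(ENNReal.ofReal_le_ofReal hi.le).trans
    (Finset.single_le_sum (f := fun i => ENNReal.ofReal (simplexVol (Function.update z i y)))
      (fun _ _ => zero_le) (Finset.mem_univ i)), hy⟩

lemma exists_large_simplex_volume_update_le (G : Set (Vec n)) {H : Set (Vec n)}
    (hH : MeasurableSet H) (h0 : volume H ≠ 0) (hfin : volume H ≠ ⊤) :
    ∃ z : Fin (n + 1) → Vec n, (∀ i, z i ∈ H) ∧
      (volume H).toReal / largeSimplexConst n ≤ simplexVol z ∧ ∀ a : ℝ,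
        volume H ^ n * (ENNReal.ofReal a *
          volume {y ∈ G | ∃ i, a < simplexVol (Function.update z i y)}) ≤
        2 * (n + 2) * (n + 1) * simplexIntegral (Fin.cons G fun _ => H : Fin (n + 1) → _) := by
  set Γ := {z : Fin (n + 1) → Vec n |
    (∀ i, z i ∈ H) ∧ (volume H).toReal / largeSimplexConst n ≤ simplexVol z}
  set X := simplexIntegral (Fin.cons G fun _ => H : Fin (n + 1) → _)
  let Y : (Fin (n + 1) → Vec n) → ℝ≥0∞ := fun z =>
    ∑ i, ∫⁻ y in G, ENNReal.ofReal (simplexVol (Function.update z i y))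
  have hmeas (i : Fin (n + 1)) := (measurable_ofReal_simplexVol_update i).lintegral_prod_right'
    (ν := volume.restrict G)
  have hΓ : volume H ^ (n + 1) ≤ 2 * (n + 2) * volume Γ :=
    volume_pow_le_volume_large_simplices hH hfin
  have hΓ0 : volume Γ ≠ 0 := fun h =>
    pow_ne_zero (n + 1) h0 (by simpa only [h, mul_zero, nonpos_iff_eq_zero] using hΓ)
  have hsub : Γ ⊆ Set.univ.pi fun _ => H := fun z hz i _ => hz.1 i
  have hΓtop : volume Γ ≠ ⊤ := by
    refine ne_top_of_le_ne_top ?_ (measure_mono hsub)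
    rw [volume_pi_pi]
    exact ENNReal.prod_ne_top fun _ _ => hfin
  have htotal : ∫⁻ z in Γ, Y z ≤ (n + 1) * (volume H * X) := by
    refine (lintegral_mono_set hsub).trans_eq ?_
    rw [lintegral_finsetSum _ fun i _ => hmeas i]
    simp only [lintegral_lintegral_simplexVol_update, Finset.sum_const, Finset.card_univ,
      Fintype.card_fin, nsmul_eq_mul, Nat.cast_add, Nat.cast_one, X]
  obtain ⟨z, hz, hzY⟩ := exists_le_setLAverage hΓ0 hΓtop
    (Finset.measurable_sum Finset.univ fun i _ => hmeas i).aemeasurable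
  rw [setLAverage_eq, ENNReal.le_div_iff_mul_le (Or.inl hΓ0) (Or.inl hΓtop)] at hzY
  refine ⟨z, hz.1, hz.2, fun a => ?_⟩
  refine (mul_le_mul_right (mul_volume_lt_simplexVol_update_le G z a) _).trans ?_
  refine (ENNReal.mul_le_mul_iff_right h0 hfin).1 ?_
  calc volume H * (volume H ^ n * Y z) = volume H ^ (n + 1) * Y z := by ring
    _ ≤ 2 * (n + 2) * volume Γ * Y z := by gcongr
    _ = 2 * (n + 2) * (Y z * volume Γ) := by ring
    _ ≤ 2 * (n + 2) * ((n + 1) * (volume H * X)) := mul_le_mul_right (hzY.trans htotal) _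
    _ = volume H * (2 * (n + 2) * (n + 1) * X) := by ring

lemma exists_volume_le_two_mul_volume_lt_simplexVol_update (hn : n ≠ 0) {z : Fin (n + 1) → Vec n}
    (hz : 0 < simplexVol z) {G : Set (Vec n)} (h0 : volume G ≠ 0) (hfin : volume G ≠ ⊤) :
    ∃ a : ℝ, 0 < a ∧ simplexVol z ^ (n - 1) * (volume G).toReal = 2 * (2 * n) ^ n * a ^ n ∧
      volume G ≤ 2 * volume {y ∈ G | ∃ i, a < simplexVol (Function.update z i y)} := by
  have := two_mul_self_pow_pos n
  have hg := ENNReal.toReal_pos h0 hfin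
  set c := simplexVol z ^ (n - 1) * (volume G).toReal / (2 * (2 * n) ^ n) with hc
  have hc0 : 0 < c := by positivity
  have ha : (c ^ (n⁻¹ : ℝ)) ^ n = c := Real.rpow_inv_natCast_pow hc0.le hn
  set a := c ^ (n⁻¹ : ℝ)
  have ha0 : 0 < a := by positivity
  refine ⟨a, ha0, by rw [ha, hc]; field_simp, ?_⟩
  set B := {y : Vec n | ∀ i, simplexVol (Function.update z i y) ≤ a}
  set A := {y ∈ G | ∃ i, a < simplexVol (Function.update z i y)}
  have hhalf : (2 * n * (a / simplexVol z)) ^ n * simplexVol z = (volume G).toReal / 2 := by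
    rw [mul_pow, div_pow, ha, hc, ← pow_sub_one_mul hn (simplexVol z)]
    field_simp
  have hB : volume B ≤ volume G / 2 := by
    refine (volume_setOf_simplexVol_update_le hz ha0).trans_eq ?_
    rw [hhalf, ENNReal.ofReal_div_of_pos two_pos, ENNReal.ofReal_toReal hfin, ENNReal.ofReal_ofNat]
  have hcover : G ⊆ A ∪ B := fun y hy => by
    by_cases hyB : y ∈ B
    · exact Or.inr hyB
    · exact Or.inl ⟨hy, by simpa only [B, Set.mem_ofPred_eq, not_forall, not_le] using hyB⟩
  have hsplit : volume G / 2 + volume G / 2 ≤ volume A + volume G / 2 := by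
    rw [ENNReal.add_halves]
    exact (measure_mono hcover).trans ((measure_union_le A B).trans (by gcongr))
  have hA := (ENNReal.add_le_add_iff_right
    (ENNReal.div_ne_top hfin two_ne_zero)).1 hsplit
  rwa [ENNReal.div_le_iff_le_mul (Or.inl two_ne_zero) (Or.inl ENNReal.ofNat_ne_top),
    mul_comm] at hA

lemma exists_volume_pow_mul_le_simplexIntegral_pow_of_ne_top (hn : n ≠ 0) :
    ∃ C : ℝ≥0∞, C ≠ ⊤ ∧ ∀ G H : Set (Vec n), MeasurableSet H → volume G ≠ ⊤ → volume H ≠ ⊤ →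
      volume G ^ (n + 1) * volume H ^ (n ^ 2 + (n - 1)) ≤
        C * simplexIntegral (Fin.cons G fun _ => H : Fin (n + 1) → _) ^ n := by
  set D : ℝ≥0∞ := 2 * (n + 2) * (n + 1)
  set c : ℝ := 2 * (2 * n) ^ n * largeSimplexConst n ^ (n - 1)
  have hconst := largeSimplexConst_pos n
  refine ⟨ENNReal.ofReal c * (2 * D) ^ n, by finiteness, fun G H hH hG hHfin => ?_⟩
  rcases eq_or_ne (volume G) 0 with hG0 | hG0
  · simp [hG0]
  rcases eq_or_ne (volume H) 0 with hH0 | hH0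
  · simp [hH0, hn]
  obtain ⟨z, -, hlarge, hz⟩ := exists_large_simplex_volume_update_le G hH hH0 hHfin
  set X := simplexIntegral (Fin.cons G fun _ => H : Fin (n + 1) → _)
  have hz0 : 0 < simplexVol z :=
    (div_pos (ENNReal.toReal_pos hH0 hHfin) hconst).trans_le hlarge
  obtain ⟨a, ha0, ha, hGa⟩ := exists_volume_le_two_mul_volume_lt_simplexVol_update hn hz0 hG0 hG
  have hpoint : volume H ^ n * (ENNReal.ofReal a * volume G) ≤ 2 * D * X := by
    calc volume H ^ n * (ENNReal.ofReal a * volume G) ≤ volume H ^ n * (ENNReal.ofReal a *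
          (2 * volume {y ∈ G | ∃ i, a < simplexVol (Function.update z i y)})) := by gcongr
      _ = 2 * (volume H ^ n * (ENNReal.ofReal a *
          volume {y ∈ G | ∃ i, a < simplexVol (Function.update z i y)})) := by ring
      _ ≤ 2 * (D * X) := mul_le_mul_right (hz a) 2
      _ = 2 * D * X := by ring
  have hthreshold : volume H ^ (n - 1) * volume G ≤ ENNReal.ofReal c * ENNReal.ofReal a ^ n := by
    rw [← ENNReal.ofReal_toReal hG, ← ENNReal.ofReal_toReal hHfin, ← ENNReal.ofReal_pow (by simp),
      ← ENNReal.ofReal_pow ha0.le, ← ENNReal.ofReal_mul (by positivity),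
      ← ENNReal.ofReal_mul (by positivity)]
    refine ENNReal.ofReal_le_ofReal ?_
    calc (volume H).toReal ^ (n - 1) * (volume G).toReal
        ≤ (simplexVol z * largeSimplexConst n) ^ (n - 1) * (volume G).toReal := by
          gcongr
          exact (div_le_iff₀ hconst).1 hlarge
      _ = simplexVol z ^ (n - 1) * (volume G).toReal * largeSimplexConst n ^ (n - 1) := by ring
      _ = c * a ^ n := by rw [ha]; ring
  calc volume G ^ (n + 1) * volume H ^ (n ^ 2 + (n - 1))
      = (volume H ^ (n - 1) * volume G) * (volume H ^ n * volume G) ^ n := by ring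
    _ ≤ ENNReal.ofReal c * ENNReal.ofReal a ^ n * (volume H ^ n * volume G) ^ n := by gcongr
    _ = ENNReal.ofReal c * (volume H ^ n * (ENNReal.ofReal a * volume G)) ^ n := by ring
    _ ≤ ENNReal.ofReal c * (2 * D * X) ^ n := by gcongr
    _ = ENNReal.ofReal c * (2 * D) ^ n * X ^ n := by
        rw [mul_pow _ X, mul_assoc]

lemma tendsto_volume_inter_closedBall (s : Set (Vec n)) :
    Filter.Tendsto (fun m : ℕ => volume (s ∩ Metric.closedBall 0 m)) Filter.atTop
      (nhds (volume s)) := by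
  have mono : Monotone fun m : ℕ => s ∩ Metric.closedBall (0 : Vec n) m := fun k l hkl =>
    Set.inter_subset_inter_right s (Metric.closedBall_subset_closedBall (Nat.cast_le.2 hkl))
  simpa only [Function.comp_def, Metric.iUnion_inter_closedBall_nat] using
    tendsto_measure_iUnion_atTop (μ := volume) mono

lemma exists_volume_pow_mul_le_simplexIntegral_pow (hn : n ≠ 0) :
    ∃ C : ℝ≥0∞, C ≠ ⊤ ∧ ∀ G H : Set (Vec n), MeasurableSet H →
      volume G ^ (n + 1) * volume H ^ (n ^ 2 + (n - 1)) ≤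
        C * simplexIntegral (Fin.cons G fun _ => H : Fin (n + 1) → _) ^ n := by
  obtain ⟨C, hC, hbound⟩ := exists_volume_pow_mul_le_simplexIntegral_pow_of_ne_top hn
  refine ⟨C, hC, fun G H hH => ?_⟩
  rcases eq_or_ne (volume G) 0 with hG0 | hG0
  · simp [hG0]
  rcases eq_or_ne (volume H) 0 with hH0 | hH0
  · simp [hH0, hn]
  refine le_of_tendsto' (ENNReal.Tendsto.mul
    (ENNReal.Tendsto.pow (tendsto_volume_inter_closedBall G)) (Or.inl (pow_ne_zero _ hG0))
    (ENNReal.Tendsto.pow (tendsto_volume_inter_closedBall H)) (Or.inl (pow_ne_zero _ hH0)))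
    fun m => ?_
  have hfin (s : Set (Vec n)) : volume (s ∩ Metric.closedBall 0 m) ≠ ⊤ :=
    measure_inter_ne_top_of_right_ne_top measure_closedBall_lt_top.ne
  refine (hbound _ _ (hH.inter Metric.isClosed_closedBall.measurableSet) (hfin G) (hfin H)).trans ?_
  gcongr
  exact simplexIntegral_mono (Fin.cases Set.inter_subset_left fun _ => Set.inter_subset_left)

end LowerBound

/-! ### Boxes and their duals -/

section Boxes

variable {n : ℕ}

/-- The closed box with centre `a`, axes `b` and half-widths `r`. -/
def box (b : OrthonormalBasis (Fin n) ℝ (Vec n)) (a : Vec n) (r : Fin n → ℝ) : Set (Vec n) :=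
  {y | ∀ j, |⟪y - a, b j⟫| ≤ r j}

variable (b : OrthonormalBasis (Fin n) ℝ (Vec n)) {a : Vec n} {r : Fin n → ℝ}

lemma measurableSet_box (a : Vec n) (r : Fin n → ℝ) : MeasurableSet (box b a r) := by
  simp only [box, Set.ofPred_forall]
  exact MeasurableSet.iInter fun j => measurableSet_le (by fun_prop) measurable_const

lemma volume_box (hr : ∀ j, 0 ≤ r j) :
    volume (box b a r) = ENNReal.ofReal (2 ^ n * ∏ j, r j) := by
  rw [box, volume_setOf_abs_inner_sub_le, ← ENNReal.ofReal_prod_of_nonneg fun j _ => by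
    linarith [hr j], Finset.prod_mul_distrib, Finset.prod_const, Finset.card_univ,
    Fintype.card_fin]

lemma mem_box_update_of_add_smul_mem {x : Vec n} {t : ℝ} {j : Fin n} (ht : |t| ≤ r j)
    (h : x + t • b j ∈ box b a r) : x ∈ box b a (Function.update r j (2 * r j)) := by
  intro i
  have hi := h i
  rw [add_sub_right_comm, inner_add_left, real_inner_smul_left] at hi
  obtain rfl | hij := eq_or_ne i j
  · rw [real_inner_self_eq_norm_sq, b.norm_eq_one, one_pow, mul_one] at hi
    rw [Function.update_self]
    calc |⟪x - a, b i⟫| = |(⟪x - a, b i⟫ + t) - t| := by rw [add_sub_cancel_right]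
      _ ≤ |⟪x - a, b i⟫ + t| + |t| := abs_sub _ _
      _ ≤ 2 * r i := by linarith
  · rwa [b.inner_eq_zero hij.symm, mul_zero, add_zero, ← Function.update_of_ne hij (2 * r j) r]
      at hi

lemma volume_preimage_const_add_mul (A : Set ℝ) (s : ℝ) {c : ℝ} (hc : c ≠ 0) :
    volume ((fun t => s + t * c) ⁻¹' A) = ENNReal.ofReal |c⁻¹| * volume A := by
  rw [← measure_preimage_add volume s A, ← Real.volume_preimage_mul_right hc]
  rfl

lemma volume_box_update_two_mul (hr : ∀ j, 0 ≤ r j) (j : Fin n) :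
    volume (box b a (Function.update r j (2 * r j))) = ENNReal.ofReal (2 ^ n * (2 * ∏ i, r i)) := by
  rw [volume_box b fun i => ?_, Finset.prod_update_of_mem (Finset.mem_univ j), mul_assoc 2,
    ← Finset.prod_eq_mul_prod_sdiff_singleton_of_mem (Finset.mem_univ j)]
  obtain rfl | hij := eq_or_ne i j
  · simpa only [Function.update_self] using mul_nonneg zero_le_two (hr i)
  · simpa only [Function.update_of_ne hij] using hr i

lemma volume_line_inter_box_inter_strip_le {A : Set ℝ} {w : Vec n} {j : Fin n}
    (hw : ⟪w, b j⟫ ≠ 0) (v : ℝ) (x : Vec n) :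
    volume ({t | x + t • b j ∈ box b a r ∩ {x | v + ⟪x, w⟫ ∈ A}} ∩ Set.Icc (-r j) (r j)) ≤
      (box b a (Function.update r j (2 * r j))).indicator
        (fun _ => ENNReal.ofReal |⟪w, b j⟫⁻¹| * volume A) x := by
  by_cases hx : x ∈ box b a (Function.update r j (2 * r j))
  · rw [Set.indicator_of_mem hx, ← volume_preimage_const_add_mul A (v + ⟪x, w⟫) hw]
    refine measure_mono fun t ht => ?_
    have hmem := ht.1.2
    rwa [Set.mem_ofPred_eq, inner_add_left, real_inner_smul_left, real_inner_comm w (b j),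
      ← add_assoc] at hmem
  · refine (measure_mono_null (t := ∅) (fun t ht => hx ?_) measure_empty).trans_le zero_le
    exact mem_box_update_of_add_smul_mem b (abs_le.2 ht.2) ht.1.1

lemma volume_box_inter_strip_le (hr : ∀ j, 0 ≤ r j) {A : Set ℝ} (hA : MeasurableSet A)
    (w : Vec n) (v : ℝ) (j : Fin n) :
    ENNReal.ofReal (r j * |⟪w, b j⟫|) * volume (box b a r ∩ {x | v + ⟪x, w⟫ ∈ A}) ≤
      ENNReal.ofReal (2 ^ n * ∏ i, r i) * volume A := by
  obtain hw | hw := eq_or_ne ⟪w, b j⟫ 0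
  · simp only [hw, abs_zero, mul_zero, ENNReal.ofReal_zero, zero_mul, zero_le]
  set Q := box b a r ∩ {x | v + ⟪x, w⟫ ∈ A}
  have hQ : MeasurableSet Q := (measurableSet_box b a r).inter
    (hA.preimage (f := fun x : Vec n => v + ⟪x, w⟫) (by fun_prop))
  have hdouble : ENNReal.ofReal (2 * r j) * volume Q ≤
      ENNReal.ofReal |⟪w, b j⟫⁻¹| * volume A * ENNReal.ofReal (2 ^ n * (2 * ∏ i, r i)) := by
    have := (volume_mul_measure_eq_lintegral_volume_line volume hQ (Set.Icc (-r j) (r j))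
      (b j)).trans_le (lintegral_mono (volume_line_inter_box_inter_strip_le b hw v))
    rwa [Real.volume_Icc, sub_neg_eq_add, ← two_mul,
      lintegral_indicator_const (measurableSet_box b a _), volume_box_update_two_mul b hr] at this
  calc ENNReal.ofReal (r j * |⟪w, b j⟫|) * volume Q
      = ENNReal.ofReal (|⟪w, b j⟫| / 2) * (ENNReal.ofReal (2 * r j) * volume Q) := by
        rw [← mul_assoc, ← ENNReal.ofReal_mul (by positivity)]
        ring_nf
    _ ≤ ENNReal.ofReal (|⟪w, b j⟫| / 2) * (ENNReal.ofReal |⟪w, b j⟫⁻¹| * volume A *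
          ENNReal.ofReal (2 ^ n * (2 * ∏ i, r i))) := mul_le_mul_right hdouble _
    _ = ENNReal.ofReal (2 ^ n * ∏ i, r i) * volume A := by
        rw [mul_right_comm, ← ENNReal.ofReal_mul (abs_nonneg _), ← mul_assoc,
          ← ENNReal.ofReal_mul (by positivity), abs_inv]
        congr 2
        field_simp

lemma setLIntegral_volume_eq_lintegral_volume {α β : Type*} [MeasureSpace α] [MeasureSpace β]
    [SFinite (volume : Measure α)] [SFinite (volume : Measure β)] (B : Set α) {M : Set (α × β)}
    (hM : MeasurableSet M) :
    ∫⁻ x in B, volume {y | (x, y) ∈ M} = ∫⁻ y, volume (B ∩ {x | (x, y) ∈ M}) := by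
  calc ∫⁻ x in B, volume {y | (x, y) ∈ M} = (volume.restrict B).prod volume M :=
        (Measure.prod_apply hM).symm
    _ = ∫⁻ y, volume.restrict B {x | (x, y) ∈ M} := Measure.prod_apply_symm hM
    _ = ∫⁻ y, volume (B ∩ {x | (x, y) ∈ M}) := lintegral_congr fun y => by
        rw [Set.inter_comm]
        exact Measure.restrict_apply (measurable_prodMk_right hM)

lemma incidentPoint_incidentPoint_eq (y : Pt n) (x' y' : Vec n) :
    incidentPoint (incidentPoint y x') y' = (y', y.2 + ⟪x', y' - y.1⟫) := by
  refine Prod.ext rfl ?_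
  simp only [incidentPoint, inner_sub_right, real_inner_comm x' y.1]
  ring

lemma measurableSet_slice_comp_incidentPoint {F : Set (Pt n)} (hF : MeasurableSet F) (y : Pt n) :
    MeasurableSet {p : Vec n × Vec n | p.2 ∈ slice F (incidentPoint y p.1)} := by
  have hy : Measurable fun x' : Vec n => incidentPoint y x' :=
    measurable_incidentPoint.comp measurable_prodMk_left
  exact (measurable_incidentPoint.comp
    ((hy.comp measurable_fst).prodMk measurable_snd)) hF

lemma measurableSet_lt_abs_inner_snd (r : Fin n → ℝ) (y : Vec n) (θ : ℝ) (j : Fin n) :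
    MeasurableSet {p : Vec n × Vec n | θ < r j * |⟪p.2 - y, b j⟫|} :=
  measurableSet_lt measurable_const (by fun_prop)

lemma ofReal_mul_lintegral_volume_slice_abs_inner_le (hr : ∀ j, 0 ≤ r j) {F : Set (Pt n)}
    (hF : MeasurableSet F) (y : Pt n) (θ : ℝ) (j : Fin n) :
    ENNReal.ofReal θ * ∫⁻ x' in box b a r,
        volume (slice F (incidentPoint y x') ∩ {y' | θ < r j * |⟪y' - y.1, b j⟫|}) ≤
      ENNReal.ofReal (2 ^ n * ∏ i, r i) * volume F := by
  have hM : MeasurableSet {p : Vec n × Vec n | p.2 ∈ slice F (incidentPoint y p.1) ∧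
      θ < r j * |⟪p.2 - y.1, b j⟫|} :=
    (measurableSet_slice_comp_incidentPoint hF y).inter
      (measurableSet_lt_abs_inner_snd b r y.1 θ j)
  have hswap := setLIntegral_volume_eq_lintegral_volume (box b a r) hM
  refine (congrArg (ENNReal.ofReal θ * ·) hswap).trans_le ?_
  rw [← lintegral_const_mul' _ _ ENNReal.ofReal_ne_top, Measure.volume_eq_prod,
    Measure.prod_apply hF, ← lintegral_const_mul' _ _ ENNReal.ofReal_ne_top]
  refine lintegral_mono fun y' => ?_
  by_cases hy : θ < r j * |⟪y' - y.1, b j⟫|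
  · have hsub : box b a r ∩ {x' | y' ∈ slice F (incidentPoint y x') ∧
        θ < r j * |⟪y' - y.1, b j⟫|} ⊆
          box b a r ∩ {x' | y.2 + ⟪x', y' - y.1⟫ ∈ Prod.mk y' ⁻¹' F} := fun x' hx =>
      ⟨hx.1, (congrArg (· ∈ F) (incidentPoint_incidentPoint_eq y x' y')).mp hx.2.1⟩
    exact (mul_le_mul' (ENNReal.ofReal_le_ofReal hy.le) (measure_mono hsub)).trans
      (volume_box_inter_strip_le b hr (measurable_prodMk_left hF) (y' - y.1) y.2 j)
  · simp only [Set.mem_ofPred_eq, hy, and_false, Set.ofPred_false, Set.inter_empty, measure_empty,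
      mul_zero, zero_le]

lemma ofReal_mul_lintegral_volume_slice_diff_box_le (hr : ∀ j, 0 < r j) {F : Set (Pt n)}
    (hF : MeasurableSet F) {S : Set (Vec n)} (hS : S ⊆ box b a r) (y : Pt n) (θ : ℝ) :
    ENNReal.ofReal θ *
        ∫⁻ x' in S, volume (slice F (incidentPoint y x') \ box b y.1 (θ • r⁻¹)) ≤
      ENNReal.ofReal (n * 2 ^ n * ∏ j, r j) * volume F := by
  have hfar (x' : Vec n) : volume (slice F (incidentPoint y x') \ box b y.1 (θ • r⁻¹)) ≤
      ∑ j, volume (slice F (incidentPoint y x') ∩ {y' | θ < r j * |⟪y' - y.1, b j⟫|}) := by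
    refine (measure_mono fun y' hy => ?_).trans (measure_iUnion_fintype_le _ _)
    obtain ⟨j, hj⟩ := not_forall.1 hy.2
    exact Set.mem_iUnion.2 ⟨j, hy.1, by
      rwa [not_le, Pi.smul_apply, Pi.inv_apply, smul_eq_mul, mul_inv_lt_iff₀' (hr j)] at hj⟩
  have hmeas (j) : Measurable fun x' =>
      volume (slice F (incidentPoint y x') ∩ {y' | θ < r j * |⟪y' - y.1, b j⟫|}) :=
    measurable_measure_prodMk_left ((measurableSet_slice_comp_incidentPoint hF y).inter
      (measurableSet_lt_abs_inner_snd b r y.1 θ j))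
  calc ENNReal.ofReal θ *
        ∫⁻ x' in S, volume (slice F (incidentPoint y x') \ box b y.1 (θ • r⁻¹))
      ≤ ENNReal.ofReal θ * ∫⁻ x' in box b a r, ∑ j,
          volume (slice F (incidentPoint y x') ∩ {y' | θ < r j * |⟪y' - y.1, b j⟫|}) :=
        mul_le_mul_right ((lintegral_mono_set hS).trans (lintegral_mono hfar)) _
    _ = ∑ j, ENNReal.ofReal θ * ∫⁻ x' in box b a r,
          volume (slice F (incidentPoint y x') ∩ {y' | θ < r j * |⟪y' - y.1, b j⟫|}) := by
        rw [lintegral_finsetSum _ fun j _ => hmeas j, Finset.mul_sum]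
    _ ≤ ∑ _j : Fin n, ENNReal.ofReal (2 ^ n * ∏ j, r j) * volume F :=
        Finset.sum_le_sum fun j _ => ofReal_mul_lintegral_volume_slice_abs_inner_le b
          (fun j => (hr j).le) hF y θ j
    _ = ENNReal.ofReal (n * 2 ^ n * ∏ j, r j) * volume F := by
        rw [Finset.sum_const, Finset.card_univ, Fintype.card_fin, nsmul_eq_mul, mul_assoc (n : ℝ),
          ENNReal.ofReal_mul n.cast_nonneg, ENNReal.ofReal_natCast, mul_assoc]

lemma measurable_volume_slice_diff_box {F : Set (Pt n)} (hF : MeasurableSet F) (y : Pt n)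
    (c : Vec n) (s : Fin n → ℝ) :
    Measurable fun x' => volume (slice F (incidentPoint y x') \ box b c s) :=
  measurable_measure_prodMk_left ((measurableSet_slice_comp_incidentPoint hF y).diff
    ((measurableSet_box b c s).preimage measurable_snd))

lemma volume_setOf_le_volume_slice_diff_box_le (hr : ∀ j, 0 < r j) {F : Set (Pt n)}
    (hF : MeasurableSet F) {S : Set (Vec n)} (hS : S ⊆ box b a r) (y : Pt n) {θ α f δ : ℝ}
    (hθ : 0 < θ) (hα : 0 < α) (hf : volume F ≤ ENNReal.ofReal f)
    (hδ : n * 2 ^ n * (∏ j, r j) * f ≤ θ * α * δ) :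
    volume {x' ∈ S | ENNReal.ofReal α ≤
      volume (slice F (incidentPoint y x') \ box b y.1 (θ • r⁻¹))} ≤ ENNReal.ofReal δ := by
  have hfar := measurable_volume_slice_diff_box b hF y y.1 (θ • r⁻¹)
  have markov := mul_meas_ge_le_lintegral (μ := volume.restrict S) hfar (ENNReal.ofReal α)
  rw [Measure.restrict_apply (measurableSet_le measurable_const hfar), Set.inter_comm] at markov
  have hP : 0 < ∏ i, r i := Finset.prod_pos fun i _ => hr i
  have hθα : ENNReal.ofReal (θ * α) ≠ 0 := (ENNReal.ofReal_pos.2 (mul_pos hθ hα)).ne'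
  refine (ENNReal.mul_le_mul_iff_right hθα ENNReal.ofReal_ne_top).1 ?_
  rw [← ENNReal.ofReal_mul (mul_pos hθ hα).le, ENNReal.ofReal_mul hθ.le, mul_assoc]
  calc _ ≤ _ := mul_le_mul_right markov _
    _ ≤ _ := ofReal_mul_lintegral_volume_slice_diff_box_le b hr hF hS y θ
    _ ≤ _ := mul_le_mul_right hf _
    _ ≤ _ := by
      rw [← ENNReal.ofReal_mul (by positivity)]
      exact ENNReal.ofReal_le_ofReal hδ

lemma abs_inner_le_of_mem_box {x y x₀ y₀ : Vec n} {M N : ℝ} (hr : ∀ j, 0 < r j)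
    (hx : x ∈ box b x₀ (M • r)) (hy : y ∈ box b y₀ (N • r⁻¹)) :
    |⟪x - x₀, y - y₀⟫| ≤ n * (M * N) := by
  rw [← b.sum_inner_mul_inner]
  calc |∑ j, ⟪x - x₀, b j⟫ * ⟪b j, y - y₀⟫| ≤ ∑ j, |⟪x - x₀, b j⟫ * ⟪b j, y - y₀⟫| :=
        Finset.abs_sum_le_sum_abs _ _
    _ ≤ ∑ _j : Fin n, M * N := Finset.sum_le_sum fun j _ => by
        rw [abs_mul, real_inner_comm (y - y₀)]
        calc |⟪x - x₀, b j⟫| * |⟪y - y₀, b j⟫| ≤ (M * r j) * (N * (r j)⁻¹) :=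
              mul_le_mul (hx j) (hy j) (abs_nonneg _) ((abs_nonneg _).trans (hx j))
          _ = M * N := by field_simp [(hr j).ne']
    _ = n * (M * N) := by rw [Finset.sum_const, Finset.card_univ, Fintype.card_fin, nsmul_eq_mul]

end Boxes

/-! ### Quasiextremal pairs of sets -/

section Quasiextremal

variable {n : ℕ} {E F : Set (Pt n)} {α β ρ K : ℝ}

/-- `(E, F)` nearly extremizes the restricted inequality
`Λ(E × F) ≲ (|E| |F|)^((n+1)/(n+2))`, where `Λ` is the incidence measure. Here `α` and `β` are the
average sizes of the slices of `F` and of `E`, and `K` measures the loss. -/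
structure IsQuasiextremal (E F : Set (Pt n)) (α β ρ K : ℝ) : Prop where
  measurableSet_left : MeasurableSet E
  measurableSet_right : MeasurableSet F
  α_pos : 0 < α
  β_pos : 0 < β
  ρ_pos : 0 < ρ
  one_le : 1 ≤ K
  volume_left : volume E = ENNReal.ofReal (ρ * β)
  volume_right : volume F = ENNReal.ofReal (ρ * α)
  measure_prod : incidenceMeasure n (E ×ˢ F) = ENNReal.ofReal (ρ * α * β)
  pow_le : ρ ^ n ≤ K * (α * β)

/-- The points of `F` over which the slice of `E` has measure at least `t`. -/
def popular (E F : Set (Pt n)) (t : ℝ) : Set (Pt n) :=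
  {y ∈ F | ENNReal.ofReal t ≤ volume (slice E y)}

lemma measurableSet_popular (hE : MeasurableSet E) (hF : MeasurableSet F) (t : ℝ) :
    MeasurableSet (popular E F t) :=
  hF.inter (measurableSet_le measurable_const (measurable_volume_slice hE))

lemma popular_subset (E F : Set (Pt n)) (t : ℝ) : popular E F t ⊆ F := Set.sep_subset _ _

lemma incidenceMeasure_prod_diff_popular_le (hE : MeasurableSet E) (hF : MeasurableSet F) (t : ℝ) :
    incidenceMeasure n (E ×ˢ (F \ popular E F t)) ≤ ENNReal.ofReal t * volume F := by
  have hdiff := hF.diff (measurableSet_popular hE hF t)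
  rw [incidenceMeasure_prod_comm hE hdiff, incidenceMeasure_prod hdiff hE]
  calc ∫⁻ y in F \ popular E F t, volume (slice E y)
      ≤ ∫⁻ _ in F \ popular E F t, ENNReal.ofReal t :=
        setLIntegral_mono measurable_const fun y hy =>
          (not_le.1 fun hle => hy.2 ⟨hy.1, hle⟩).le
    _ ≤ ENNReal.ofReal t * volume F := by
        rw [setLIntegral_const]
        exact mul_le_mul_right (measure_mono Set.sdiff_subset) _

lemma incidenceMeasure_diff_popular_popular_prod_le (hE : MeasurableSet E) (hF : MeasurableSet F)
    (s t : ℝ) :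
    incidenceMeasure n ((E \ popular (popular E F t) E s) ×ˢ F) ≤
      ENNReal.ofReal s * volume E + ENNReal.ofReal t * volume F := by
  have hG := measurableSet_popular hE hF t
  set G := popular E F t
  have hdiff := hE.diff (measurableSet_popular hG hE s)
  have hcover : (E \ popular G E s) ×ˢ F ⊆ (E \ popular G E s) ×ˢ G ∪ E ×ˢ (F \ G) := by
    rintro ⟨x, y⟩ ⟨hx, hy⟩
    by_cases hyG : y ∈ G
    · exact Or.inl ⟨hx, hyG⟩
    · exact Or.inr ⟨hx.1, hy, hyG⟩
  refine (measure_mono hcover).trans ((measure_union_le _ _).trans (add_le_add ?_ ?_))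
  · rw [incidenceMeasure_prod_comm hdiff hG]
    exact incidenceMeasure_prod_diff_popular_le hG hE s
  · exact incidenceMeasure_prod_diff_popular_le hE hF t

lemma IsQuasiextremal.incidenceMeasure_diff_popular_prod_le (h : IsQuasiextremal E F α β ρ K) :
    incidenceMeasure n ((E \ popular (popular E F (β / 20)) E (α / 20)) ×ˢ F) ≤
      ENNReal.ofReal (ρ * α * β / 10) := by
  have := h.α_pos; have := h.β_pos; have := h.ρ_pos
  refine (incidenceMeasure_diff_popular_popular_prod_le h.measurableSet_left
    h.measurableSet_right _ _).trans_eq ?_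
  rw [h.volume_left, h.volume_right, ← ENNReal.ofReal_mul (by positivity),
    ← ENNReal.ofReal_mul (by positivity), ← ENNReal.ofReal_add (by positivity) (by positivity)]
  ring_nf

lemma IsQuasiextremal.setLIntegral_simplexIntegral_slice_le
    (h : IsQuasiextremal E F α β ρ K) :
    ENNReal.ofReal (20 * K * β ^ (n + 1))⁻¹ *
        ∫⁻ y in F, simplexIntegral (fun _ : Fin (n + 1) => slice E y) ≤
      ENNReal.ofReal (ρ * α * β / 20) := by
  have := h.α_pos; have := h.β_pos; have := h.ρ_pos; have := h.one_le
  have drury := (setLIntegral_le_lintegral F _).trans_eq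
    (lintegral_simplexIntegral_slice fun _ : Fin (n + 1) => h.measurableSet_left)
  rw [Finset.prod_const, Finset.card_univ, Fintype.card_fin, h.volume_left,
    ← ENNReal.ofReal_pow (by positivity)] at drury
  refine (mul_le_mul_right drury _).trans ?_
  rw [← ENNReal.ofReal_mul (by positivity)]
  refine ENNReal.ofReal_le_ofReal ?_
  calc (20 * K * β ^ (n + 1))⁻¹ * (ρ * β) ^ (n + 1) = (20 * K)⁻¹ * ρ * ρ ^ n := by
        rw [mul_pow, pow_succ ρ]
        field_simp
    _ ≤ (20 * K)⁻¹ * ρ * (K * (α * β)) := by gcongr; exact h.pow_le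
    _ = ρ * α * β / 20 := by field_simp

-- The integrals over `F` of the three terms on the left add up to half of `Λ(E × F)`.
lemma IsQuasiextremal.exists_lt_volume_slice (h : IsQuasiextremal E F α β ρ K) :
    ∃ y, volume (slice E y) ≠ ⊤ ∧ ENNReal.ofReal (β / 20) +
      4 * volume (slice (E \ popular (popular E F (β / 20)) E (α / 20)) y) +
      ENNReal.ofReal (20 * K * β ^ (n + 1))⁻¹ *
        simplexIntegral (fun _ : Fin (n + 1) => slice E y) < volume (slice E y) := by
  have := h.α_pos; have := h.β_pos; have := h.ρ_pos
  have hE := h.measurableSet_left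
  have hF := h.measurableSet_right
  have hbad := hE.diff (measurableSet_popular (measurableSet_popular hE hF (β / 20)) hE (α / 20))
  have hbad_le := h.incidenceMeasure_diff_popular_prod_le
  set bad := E \ popular (popular E F (β / 20)) E (α / 20)
  have hslice := (incidenceMeasure_prod hF hE).symm.trans (incidenceMeasure_prod_comm hF hE)
  rw [h.measure_prod] at hslice
  have hfin : ∀ᵐ y ∂volume.restrict F, volume (slice E y) < ⊤ :=
    ae_lt_top (measurable_volume_slice hE) (hslice.trans_ne ENNReal.ofReal_ne_top)
  have hmeas : Measurable fun y => ENNReal.ofReal (β / 20) + 4 * volume (slice bad y) :=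
    measurable_const.add ((measurable_volume_slice hbad).const_mul 4)
  by_contra! hcon
  have hle := lintegral_mono_ae (hfin.mono fun y hy => hcon y hy.ne)
  rw [hslice, lintegral_add_left hmeas, lintegral_add_left measurable_const, setLIntegral_const,
    lintegral_const_mul _ (measurable_volume_slice hbad), ← incidenceMeasure_prod hF hbad,
    incidenceMeasure_prod_comm hF hbad, lintegral_const_mul' _ _ ENNReal.ofReal_ne_top,
    h.volume_right] at hle
  have hsum := hle.trans (add_le_add (add_le_add_right (mul_le_mul_right hbad_le 4) _)
    h.setLIntegral_simplexIntegral_slice_le)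
  rw [← ENNReal.ofReal_ofNat 4, ← ENNReal.ofReal_mul (by positivity),
    ← ENNReal.ofReal_mul (by positivity), ← ENNReal.ofReal_add (by positivity) (by positivity),
    ← ENNReal.ofReal_add (by positivity) (by positivity),
    ENNReal.ofReal_le_ofReal_iff (by positivity)] at hsum
  have hpos : 0 < ρ * α * β := by positivity
  linarith

lemma exists_large_simplex_four_mul_volume_le {H : Set (Vec n)} (hH : MeasurableSet H)
    (hfin : volume H ≠ ⊤) {s C : ℝ} (hs : 0 < s) (hC : 0 < C)
    (hlarge : ENNReal.ofReal s ≤ volume H)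
    (hsmall : simplexIntegral (fun _ : Fin (n + 1) => H) ≤ ENNReal.ofReal (C * s ^ n) * volume H) :
    ∃ z : Fin (n + 1) → Vec n,
      (volume H).toReal / largeSimplexConst n ≤ simplexVol z ∧
      4 * volume {y ∈ H | ∃ i, 8 * (n + 2) * (n + 1) * C < simplexVol (Function.update z i y)} ≤
        volume H := by
  have h0 : volume H ≠ 0 := ((ENNReal.ofReal_pos.2 hs).trans_le hlarge).ne'
  obtain ⟨z, -, hz, hle⟩ := exists_large_simplex_volume_update_le H hH h0 hfin
  refine ⟨z, hz, ?_⟩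
  have hcons : (Fin.cons H fun _ => H : Fin (n + 1) → Set (Vec n)) = fun _ => H :=
    funext (Fin.cases rfl fun _ => rfl)
  have hcount := hle (8 * (n + 2) * (n + 1) * C)
  set bad := {y ∈ H | ∃ i, 8 * (n + 2) * (n + 1) * C < simplexVol (Function.update z i y)}
  rw [hcons] at hcount
  have hpow : volume H ^ n ≠ 0 := pow_ne_zero n h0
  have hD : (2 * (n + 2) * (n + 1) : ℝ≥0∞) = ENNReal.ofReal (2 * (n + 2) * (n + 1)) := by
    exact_mod_cast (ENNReal.ofReal_natCast (2 * (n + 2) * (n + 1))).symm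
  have hchain : volume H ^ n * (ENNReal.ofReal (2 * (n + 2) * (n + 1) * C) * (4 * volume bad)) ≤
      volume H ^ n * (ENNReal.ofReal (2 * (n + 2) * (n + 1) * C) * volume H) := by
    calc _ = volume H ^ n * (ENNReal.ofReal (8 * (n + 2) * (n + 1) * C) * volume bad) := by
          rw [← mul_assoc (ENNReal.ofReal _), show (4 : ℝ≥0∞) = ENNReal.ofReal 4 by simp,
            ← ENNReal.ofReal_mul (by positivity)]
          ring_nf
      _ ≤ _ := hcount
      _ ≤ ENNReal.ofReal (2 * (n + 2) * (n + 1)) *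
          (ENNReal.ofReal C * volume H ^ n * volume H) := by
          rw [hD]
          refine mul_le_mul_right (hsmall.trans ?_) _
          rw [ENNReal.ofReal_mul hC.le, ENNReal.ofReal_pow hs.le]
          gcongr
      _ = _ := by
          rw [ENNReal.ofReal_mul (p := 2 * (n + 2) * (n + 1)) (by positivity)]
          ring
  rwa [ENNReal.mul_le_mul_iff_right hpow (ENNReal.pow_ne_top hfin),
    ENNReal.mul_le_mul_iff_right (ENNReal.ofReal_pos.2 (by positivity)).ne'
      ENNReal.ofReal_ne_top] at hchain

/-- The set `S` is a substantial part of the slice of `E` over `y`, it lies in the box with centre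
`a`, axes `b` and half-widths `r`, and it consists of points incident to many points of `F` which
are in turn incident to many points of `E`. -/
structure IsPopularBox (E F : Set (Pt n)) (α β : ℝ) (y : Pt n)
    (b : OrthonormalBasis (Fin n) ℝ (Vec n)) (a : Vec n) (r : Fin n → ℝ) (S : Set (Vec n)) :
    Prop where
  pos : ∀ j, 0 < r j
  subset_box : S ⊆ box b a r
  le_volume : ENNReal.ofReal (β / 40) ≤ volume S
  le_volume_slice : ∀ x' ∈ S,
    ENNReal.ofReal (α / 20) ≤ volume (slice (popular E F (β / 20)) (incidentPoint y x'))

lemma le_volume_diff_union {H B₁ B₂ : Set (Vec n)} {s : ℝ≥0∞} (hH : 2 * s ≤ volume H)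
    (hfin : volume H ≠ ⊤) (h₁ : 4 * volume B₁ ≤ volume H) (h₂ : 4 * volume B₂ ≤ volume H) :
    s ≤ volume (H \ (B₁ ∪ B₂)) := by
  have hcover : volume H ≤ volume B₁ + volume B₂ + volume (H \ (B₁ ∪ B₂)) :=
    (measure_le_inter_add_sdiff volume H (B₁ ∪ B₂)).trans (by
      gcongr
      exact (measure_mono Set.inter_subset_right).trans (measure_union_le B₁ B₂))
  refine (ENNReal.mul_le_mul_iff_right four_ne_zero ENNReal.ofNat_ne_top).1
    (ENNReal.le_of_add_le_add_right (ENNReal.mul_ne_top ENNReal.ofNat_ne_top hfin :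
      2 * volume H ≠ ⊤) ?_)
  calc 4 * s + 2 * volume H = 2 * (2 * s) + 2 * volume H := by ring
    _ ≤ 2 * volume H + 2 * volume H := by gcongr
    _ = 4 * volume H := by ring
    _ ≤ 4 * (volume B₁ + volume B₂ + volume (H \ (B₁ ∪ B₂))) := by gcongr
    _ = 4 * volume (H \ (B₁ ∪ B₂)) + (4 * volume B₁ + 4 * volume B₂) := by ring
    _ ≤ 4 * volume (H \ (B₁ ∪ B₂)) + (volume H + volume H) := by gcongr
    _ = 4 * volume (H \ (B₁ ∪ B₂)) + 2 * volume H := by ring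

lemma IsQuasiextremal.exists_popular_slice (h : IsQuasiextremal E F α β ρ K) :
    ∃ y, volume (slice E y) ≠ ⊤ ∧ ENNReal.ofReal (β / 20) ≤ volume (slice E y) ∧
      4 * volume (slice (E \ popular (popular E F (β / 20)) E (α / 20)) y) ≤ volume (slice E y) ∧
      simplexIntegral (fun _ : Fin (n + 1) => slice E y) ≤
        ENNReal.ofReal (20 ^ (n + 1) * K * β * (β / 20) ^ n) * volume (slice E y) := by
  have := h.β_pos
  have : 0 < K := zero_lt_one.trans_le h.one_le
  obtain ⟨y, hfin, hy⟩ := h.exists_lt_volume_slice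
  refine ⟨y, hfin, (le_add_right (le_add_right le_rfl)).trans hy.le,
    (le_add_right (le_add_left le_rfl)).trans hy.le, ?_⟩
  have hsum := le_add_self.trans hy.le
  have hpos : 0 < 20 * K * β ^ (n + 1) := by positivity
  rwa [ENNReal.ofReal_inv_of_pos hpos, ENNReal.inv_mul_le_iff (ENNReal.ofReal_pos.2 hpos).ne'
    ENNReal.ofReal_ne_top, show 20 * K * β ^ (n + 1) = 20 ^ (n + 1) * K * β * (β / 20) ^ n by
      rw [div_pow, pow_succ, pow_succ]; field_simp] at hsum

lemma div_pow_mul_le (hn : n ≠ 0) {A v V : ℝ} (hA : 0 ≤ A) (hv : 0 < v) (hV : v ≤ V) :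
    (A / V) ^ n * V ≤ A ^ n / v ^ (n - 1) := by
  obtain ⟨m, rfl⟩ := Nat.exists_eq_succ_of_ne_zero hn
  have hV0 := hv.trans_le hV
  calc (A / V) ^ (m + 1) * V = A ^ (m + 1) / V ^ m := by rw [div_pow, pow_succ V]; field_simp
    _ ≤ A ^ (m + 1) / v ^ m := by gcongr

/-- The loss in the volume of the box provided by `IsQuasiextremal.exists_isPopularBox`. -/
def popularBoxConst (n : ℕ) : ℝ :=
  (n * (8 * (n + 2) * (n + 1) * 20 ^ (n + 1))) ^ n * (20 * largeSimplexConst n) ^ (n - 1)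

lemma popularBoxConst_nonneg (n : ℕ) : 0 ≤ popularBoxConst n := by
  have := (largeSimplexConst_pos n).le
  unfold popularBoxConst
  positivity

lemma prod_le_popularBoxConst (hn : n ≠ 0) {V : ℝ} (hK : 0 < K) (hβ : 0 < β)
    (hV : β / 20 / largeSimplexConst n ≤ V) :
    (n * (8 * (n + 2) * (n + 1) * (20 ^ (n + 1) * K * β) / V)) ^ n * V ≤
      popularBoxConst n * K ^ n * β := by
  have hℓ := largeSimplexConst_pos n
  set c : ℝ := 8 * (n + 2) * (n + 1) * 20 ^ (n + 1)
  calc (n * (8 * (n + 2) * (n + 1) * (20 ^ (n + 1) * K * β) / V)) ^ n * V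
      = n ^ n * ((c * K * β / V) ^ n * V) := by
        rw [mul_pow, mul_assoc, mul_assoc _ K, ← mul_assoc _ _ (K * β), ← mul_assoc c]
    _ ≤ n ^ n * ((c * K * β) ^ n / (β / 20 / largeSimplexConst n) ^ (n - 1)) := by
        gcongr
        exact div_pow_mul_le hn (by positivity) (by positivity) hV
    _ = (n * c) ^ n * (20 * largeSimplexConst n) ^ (n - 1) * K ^ n * β := by
        rw [div_div, div_pow, mul_pow _ β, ← pow_sub_one_mul hn β, mul_pow c, mul_pow (n : ℝ) c]
        field_simp

lemma IsQuasiextremal.exists_isPopularBox (h : IsQuasiextremal E F α β ρ K) (hn : n ≠ 0) :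
    ∃ (y : Pt n) (b : OrthonormalBasis (Fin n) ℝ (Vec n)) (a : Vec n) (r : Fin n → ℝ)
      (S : Set (Vec n)), IsPopularBox E F α β y b a r S ∧
        ∏ j, r j ≤ popularBoxConst n * K ^ n * β := by
  have hβ := h.β_pos
  have hK : 0 < K := zero_lt_one.trans_le h.one_le
  obtain ⟨y, hfin, hlarge, hbad, hsmall⟩ := h.exists_popular_slice
  set H := slice E y
  set G := popular (popular E F (β / 20)) E (α / 20)
  obtain ⟨z, hz, hsimplex⟩ := exists_large_simplex_four_mul_volume_le
    (measurableSet_slice h.measurableSet_left y) hfin (by positivity) (by positivity) hlarge hsmall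
  set A := 8 * (n + 2) * (n + 1) * (20 ^ (n + 1) * K * β)
  have hℓ := largeSimplexConst_pos n
  have hV : β / 20 / largeSimplexConst n ≤ simplexVol z :=
    (div_le_div_of_nonneg_right ((ENNReal.ofReal_le_iff_le_toReal hfin).1 hlarge) hℓ.le).trans hz
  have hβℓ : 0 < β / 20 / largeSimplexConst n := by positivity
  obtain ⟨b, r, hr, hprod, hbox⟩ := exists_box_of_simplexVol_update_le (hβℓ.trans_le hV)
    (show 0 < A by positivity)
  refine ⟨y, b, z 0, r, H \ (slice (E \ G) y ∪
    {x' ∈ H | ∃ i, A < simplexVol (Function.update z i x')}), ⟨hr, ?_, ?_, ?_⟩, ?_⟩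
  · rintro x' ⟨hx, hx'⟩
    exact hbox x' fun i => not_lt.1 fun hi => hx' (Or.inr ⟨hx, i, hi⟩)
  · refine le_volume_diff_union ?_ hfin hbad hsimplex
    rwa [two_mul, ← ENNReal.ofReal_add (by positivity) (by positivity),
      show β / 40 + β / 40 = β / 20 by ring]
  · rintro x' ⟨hx, hx'⟩
    have hxG : incidentPoint y x' ∈ G := by_contra fun hG => hx' (Or.inl ⟨hx, hG⟩)
    exact hxG.2
  · rw [hprod]
    exact prod_le_popularBoxConst hn hK hβ hV

end Quasiextremal

section Localization

variable {n : ℕ} {E F : Set (Pt n)} {α β ρ K : ℝ} {y : Pt n}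
  {b : OrthonormalBasis (Fin n) ℝ (Vec n)} {a : Vec n} {r : Fin n → ℝ} {S : Set (Vec n)}

/-- The points over the dual box of `box b a r` centred at `y.1` that lie within `n * θ` of the
hyperplane through `y` formed by the points incident to `incidentPoint y a`. -/
def dualSlab (b : OrthonormalBasis (Fin n) ℝ (Vec n)) (a : Vec n) (r : Fin n → ℝ) (y : Pt n)
    (θ : ℝ) : Set (Pt n) :=
  {z | z.1 ∈ box b y.1 (θ • r⁻¹) ∧ |z.2 - y.2 - ⟪a, z.1 - y.1⟫| ≤ n * θ}

lemma measurableSet_dualSlab (b : OrthonormalBasis (Fin n) ℝ (Vec n)) (a : Vec n)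
    (r : Fin n → ℝ) (y : Pt n) (θ : ℝ) : MeasurableSet (dualSlab b a r y θ) :=
  ((measurableSet_box b _ _).preimage measurable_fst).inter
    (measurableSet_le (f := fun z : Pt n => |z.2 - y.2 - ⟪a, z.1 - y.1⟫|) (by fun_prop)
      measurable_const)

lemma incidentPoint_incidentPoint_mem_dualSlab (hr : ∀ j, 0 < r j) {x' y' : Vec n} {θ : ℝ}
    (hx : x' ∈ box b a r) (hy : y' ∈ box b y.1 (θ • r⁻¹)) :
    incidentPoint (incidentPoint y x') y' ∈ dualSlab b a r y θ := by
  rw [incidentPoint_incidentPoint_eq]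
  refine ⟨hy, ?_⟩
  rw [add_sub_cancel_left, ← inner_sub_left, ← one_mul θ]
  exact abs_inner_le_of_mem_box b hr (by rwa [one_smul]) hy

lemma ofReal_le_measure_of_subset_union {X : Type*} [MeasurableSpace X] {μ : Measure X}
    {A B C : Set X} {s t u : ℝ} (hsub : A ⊆ B ∪ C) (hs : 0 ≤ s) (ht : 0 ≤ t) (hu : s + t ≤ u)
    (hA : ENNReal.ofReal u ≤ μ A) (hB : μ B ≤ ENNReal.ofReal s) :
    ENNReal.ofReal t ≤ μ C := by
  replace hA := (ENNReal.ofReal_le_ofReal hu).trans hA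
  rw [ENNReal.ofReal_add hs ht] at hA
  exact ENNReal.le_of_add_le_add_left ENNReal.ofReal_ne_top
    (hA.trans ((measure_mono hsub).trans ((measure_union_le B C).trans (add_le_add_left hB _))))

lemma volume_popular_mul_le (hE : MeasurableSet E) (hF : MeasurableSet F) (t : ℝ) :
    ENNReal.ofReal t * volume (popular E F t) ≤ incidenceMeasure n (E ×ˢ F) := by
  rw [incidenceMeasure_prod_comm hE hF, incidenceMeasure_prod hF hE, ← setLIntegral_const]
  exact (setLIntegral_mono (measurable_volume_slice hE) fun y hy => hy.2).trans
    (lintegral_mono_set (popular_subset E F t))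

lemma ofReal_mul_le_of_le_volume_slice (hr : ∀ j, 0 < r j) (hF : MeasurableSet F)
    (hS : S ⊆ box b a r) {s t τ : ℝ} (ht : 0 ≤ t) (hτ : 0 ≤ τ) (hs : ENNReal.ofReal s ≤ volume S)
    (hslice : ∀ x' ∈ S, ENNReal.ofReal (t + t) ≤ volume (slice F (incidentPoint y x')))
    (hbox : volume (box b y.1 (τ • r⁻¹)) ≤ ENNReal.ofReal t) :
    ENNReal.ofReal (τ * t * s) ≤ ENNReal.ofReal (n * 2 ^ n * ∏ j, r j) * volume F := by
  have hfar : ∀ x' ∈ S, ENNReal.ofReal t ≤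
      volume (slice F (incidentPoint y x') \ box b y.1 (τ • r⁻¹)) := fun x' hx =>
    ofReal_le_measure_of_subset_union (fun y' hy => by
      by_cases hb : y' ∈ box b y.1 (τ • r⁻¹)
      exacts [Or.inl hb, Or.inr ⟨hy, hb⟩]) ht ht le_rfl (hslice x' hx) hbox
  refine le_trans ?_ (ofReal_mul_lintegral_volume_slice_diff_box_le b hr hF hS y τ)
  rw [mul_assoc, ENNReal.ofReal_mul hτ, ENNReal.ofReal_mul ht]
  refine mul_le_mul_right ((mul_le_mul_right hs _).trans ?_) _
  rw [← setLIntegral_const]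
  exact setLIntegral_mono (measurable_volume_slice_diff_box b hF y _ _) hfar

lemma IsPopularBox.le_prod (h : IsPopularBox E F α β y b a r S) : β / 40 ≤ 2 ^ n * ∏ j, r j := by
  have hvol := h.le_volume.trans (measure_mono h.subset_box)
  rwa [volume_box b fun j => (h.pos j).le, ENNReal.ofReal_le_ofReal_iff (mul_nonneg (by positivity)
    (Finset.prod_nonneg fun j _ => (h.pos j).le))] at hvol

/-- The points of the popular box whose slices have a substantial part near `y`. -/
def nearPoints (E F : Set (Pt n)) (α β : ℝ) (y : Pt n) (b : OrthonormalBasis (Fin n) ℝ (Vec n))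
    (r : Fin n → ℝ) (S : Set (Vec n)) (θ : ℝ) : Set (Vec n) :=
  {x' ∈ S | ENNReal.ofReal (α / 40) ≤
    volume (slice (popular E F (β / 20)) (incidentPoint y x') ∩ box b y.1 (θ • r⁻¹))}

lemma IsQuasiextremal.le_volume_nearPoints (h : IsQuasiextremal E F α β ρ K)
    (hS : IsPopularBox E F α β y b a r S) {θ : ℝ} (hθ : 0 < θ)
    (hθ' : n * 2 ^ n * (∏ j, r j) * (ρ * α) ≤ θ * (α / 40) * (β / 80)) :
    ENNReal.ofReal (β / 80) ≤ volume (nearPoints E F α β y b r S θ) := by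
  have hα := h.α_pos
  have hβ := h.β_pos
  set G := popular E F (β / 20)
  have hG : volume G ≤ ENNReal.ofReal (ρ * α) :=
    (measure_mono (popular_subset E F _)).trans_eq h.volume_right
  have hfar := volume_setOf_le_volume_slice_diff_box_le b hS.pos
    (measurableSet_popular h.measurableSet_left h.measurableSet_right _) hS.subset_box y hθ
    (show 0 < α / 40 by positivity) hG hθ'
  refine ofReal_le_measure_of_subset_union (fun x' hx => ?_) (by positivity) (by positivity)
    (by linarith) hS.le_volume hfar
  by_cases hx' : ENNReal.ofReal (α / 40) ≤
    volume (slice G (incidentPoint y x') \ box b y.1 (θ • r⁻¹))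
  · exact Or.inl ⟨hx, hx'⟩
  · refine Or.inr ⟨hx, ofReal_le_measure_of_subset_union (fun y' hy => ?_) (by positivity)
      (by positivity) (by linarith) (hS.le_volume_slice x' hx) (not_le.1 hx').le⟩
    by_cases hb : y' ∈ box b y.1 (θ • r⁻¹)
    exacts [Or.inr ⟨hy, hb⟩, Or.inl ⟨hy, hb⟩]

lemma box_subset_box_add_one_smul {x' : Vec n} {R : ℝ} (hx : x' ∈ box b a r) :
    box b x' (R • r) ⊆ box b a ((R + 1) • r) := by
  intro z hz j
  have habs := abs_add_le ⟪z - x', b j⟫ ⟪x' - a, b j⟫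
  rw [← inner_add_left, sub_add_sub_cancel] at habs
  refine habs.trans ((add_le_add (hz j) (hx j)).trans_eq ?_)
  simp only [Pi.smul_apply, smul_eq_mul]
  ring

lemma IsQuasiextremal.le_volume_slice_of_mem_nearPoints (h : IsQuasiextremal E F α β ρ K)
    (hS : IsPopularBox E F α β y b a r S) {θ R : ℝ} (hθ : 0 < θ) (hR : 0 < R)
    (hR' : n * 2 ^ n * (∏ j, (θ • r⁻¹) j) * (ρ * β) ≤ R * θ * (β / 40) * (α / 80))
    {x' : Vec n} (hx : x' ∈ nearPoints E F α β y b r S θ) :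
    ENNReal.ofReal (α / 80) ≤ volume (slice (popular (E ∩ Prod.fst ⁻¹' box b a ((R + 1) • r))
      (F ∩ dualSlab b a r y θ) (β / 40)) (incidentPoint y x')) := by
  have hα := h.α_pos
  have hβ := h.β_pos
  have hpos (j) : 0 < (θ • r⁻¹) j := mul_pos hθ (inv_pos.2 (hS.pos j))
  have hdual : (R * θ) • (θ • r⁻¹)⁻¹ = R • r := funext fun j => by
    simp only [Pi.smul_apply, Pi.inv_apply, smul_eq_mul, mul_inv, inv_inv]
    field_simp
  set x := incidentPoint y x'
  have hfar := volume_setOf_le_volume_slice_diff_box_le b hpos h.measurableSet_left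
    (Set.inter_subset_right (s := slice (popular E F (β / 20)) x) (t := box b y.1 (θ • r⁻¹))) x
    (mul_pos hR hθ) (show 0 < β / 40 by positivity) h.volume_left.le hR'
  rw [hdual] at hfar
  refine ofReal_le_measure_of_subset_union (fun y' hy => ?_) (by positivity) (by positivity)
    (by linarith) hx.2 hfar
  by_cases hy' : ENNReal.ofReal (β / 40) ≤ volume (slice E (incidentPoint x y') \ box b x' (R • r))
  · exact Or.inl ⟨hy, hy'⟩
  have hxbox := hS.subset_box hx.1
  refine Or.inr ⟨⟨hy.1.1, incidentPoint_incidentPoint_mem_dualSlab hS.pos hxbox hy.2⟩,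
    ofReal_le_measure_of_subset_union (fun w hw => ?_) (by positivity) (by positivity)
      (by linarith) hy.1.2 (not_le.1 hy').le⟩
  by_cases hb : w ∈ box b x' (R • r)
  exacts [Or.inr ⟨hw, box_subset_box_add_one_smul hxbox hb⟩, Or.inl ⟨hw, hb⟩]

lemma IsQuasiextremal.mul_pow_div_prod_le (h : IsQuasiextremal E F α β ρ K)
    (hS : IsPopularBox E F α β y b a r S) {θ : ℝ} (hθ : 0 ≤ θ) :
    ∏ j, ((θ * ρ) • r⁻¹) j ≤ θ ^ n * (40 * 2 ^ n * K * α) := by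
  have hP : 0 < ∏ j, r j := Finset.prod_pos fun j _ => hS.pos j
  have hprod : ∏ j, ((θ * ρ) • r⁻¹) j = θ ^ n * ρ ^ n / ∏ j, r j := by
    simp only [Pi.smul_apply, Pi.inv_apply, smul_eq_mul, Finset.prod_mul_distrib,
      Finset.prod_const, Finset.card_univ, Fintype.card_fin, Finset.prod_inv_distrib,
      div_eq_mul_inv]
  rw [hprod, mul_div_assoc]
  refine mul_le_mul_of_nonneg_left ((div_le_iff₀ hP).2 (h.pow_le.trans ?_)) (by positivity)
  have := mul_le_mul_of_nonneg_left hS.le_prod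
    (mul_nonneg (zero_le_one.trans h.one_le) h.α_pos.le)
  linarith

lemma IsQuasiextremal.volume_dual_box_le (h : IsQuasiextremal E F α β ρ K) (hn : n ≠ 0)
    (hS : IsPopularBox E F α β y b a r S) {L : ℝ} (hL : 6400 * 4 ^ n ≤ L) (hKL : K ≤ L) :
    volume (box b y.1 (((L ^ 2)⁻¹ * ρ) • r⁻¹)) ≤ ENNReal.ofReal (α / 160) := by
  have hα := h.α_pos
  have hK := zero_le_one.trans h.one_le
  have hL1 : 1 ≤ L := h.one_le.trans hKL
  have hL2 : ((L ^ 2)⁻¹) ^ n ≤ (L ^ 2)⁻¹ :=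
    pow_le_of_le_one (by positivity) (inv_le_one_of_one_le₀ (one_le_pow₀ hL1)) hn
  have hnonneg (j) : 0 ≤ (((L ^ 2)⁻¹ * ρ) • r⁻¹) j :=
    mul_nonneg (mul_nonneg (by positivity) h.ρ_pos.le) (inv_nonneg.2 (hS.pos j).le)
  rw [volume_box b hnonneg]
  refine ENNReal.ofReal_le_ofReal ?_
  calc 2 ^ n * ∏ j, (((L ^ 2)⁻¹ * ρ) • r⁻¹) j
      ≤ 2 ^ n * ((L ^ 2)⁻¹ * (40 * 2 ^ n * L * α)) := by
        refine mul_le_mul_of_nonneg_left ?_ (by positivity)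
        refine (h.mul_pow_div_prod_le hS (by positivity)).trans ?_
        gcongr
    _ = 6400 * 4 ^ n * (α / 160) / L := by
        rw [show (4 : ℝ) = 2 * 2 by norm_num, mul_pow]
        field_simp
        norm_num
    _ ≤ α / 160 := by
        rw [div_le_iff₀ (by positivity), mul_comm (α / 160)]
        gcongr

lemma IsQuasiextremal.le_volume_nearPoints_of_prod_le (h : IsQuasiextremal E F α β ρ K)
    (hS : IsPopularBox E F α β y b a r S) {L : ℝ} (hL : 3200 * n * 2 ^ n ≤ L) (hKL : K ≤ L)
    (hprod : ∏ j, r j ≤ L * β) :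
    ENNReal.ofReal (β / 80) ≤ volume (nearPoints E F α β y b r S (L ^ 2 * ρ)) := by
  have := h.α_pos
  have := h.β_pos
  have := h.ρ_pos
  have : 1 ≤ L := h.one_le.trans hKL
  refine h.le_volume_nearPoints hS (by positivity) ?_
  calc n * 2 ^ n * (∏ j, r j) * (ρ * α) ≤ n * 2 ^ n * (L * β) * (ρ * α) := by gcongr
    _ = 3200 * n * 2 ^ n * (L * β * (ρ * α) / 3200) := by ring
    _ ≤ L * (L * β * (ρ * α) / 3200) := by gcongr
    _ = L ^ 2 * ρ * (α / 40) * (β / 80) := by ring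

lemma IsQuasiextremal.le_volume_slice_popular_localized (h : IsQuasiextremal E F α β ρ K)
    (hS : IsPopularBox E F α β y b a r S) {L : ℝ} (hL : 128000 * n * 4 ^ n ≤ L) (hKL : K ≤ L)
    {x' : Vec n} (hx : x' ∈ nearPoints E F α β y b r S (L ^ 2 * ρ)) :
    ENNReal.ofReal (α / 80) ≤
      volume (slice (popular (E ∩ Prod.fst ⁻¹' box b a ((L ^ (2 * n) + 1) • r))
        (F ∩ dualSlab b a r y (L ^ 2 * ρ)) (β / 40)) (incidentPoint y x')) := by
  have := h.α_pos
  have := h.β_pos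
  have := h.ρ_pos
  have : 1 ≤ L := h.one_le.trans hKL
  refine h.le_volume_slice_of_mem_nearPoints hS (by positivity) (by positivity) ?_ hx
  calc n * 2 ^ n * (∏ j, ((L ^ 2 * ρ) • r⁻¹) j) * (ρ * β)
      ≤ n * 2 ^ n * ((L ^ 2) ^ n * (40 * 2 ^ n * L * α)) * (ρ * β) := by
        gcongr
        refine (h.mul_pow_div_prod_le hS (by positivity)).trans ?_
        gcongr
    _ = 128000 * n * 4 ^ n * (L ^ (2 * n) * L * α * ρ * β / 3200) := by
        rw [show (4 : ℝ) = 2 * 2 by norm_num, mul_pow, ← pow_mul]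
        ring
    _ ≤ L * (L ^ (2 * n) * L * α * ρ * β / 3200) := by gcongr
    _ = L ^ (2 * n) * (L ^ 2 * ρ) * (β / 40) * (α / 80) := by ring

lemma IsQuasiextremal.le_volume_popular_localized (h : IsQuasiextremal E F α β ρ K) (hn : n ≠ 0)
    (hS : IsPopularBox E F α β y b a r S) {L : ℝ} (hL : 128000 * n * 4 ^ n ≤ L)
    (hKL : K ≤ L) (hprod : ∏ j, r j ≤ L * β) :
    ENNReal.ofReal (ρ * α) ≤ ENNReal.ofReal (L ^ 4) *
      volume (popular (E ∩ Prod.fst ⁻¹' box b a ((L ^ (2 * n) + 1) • r))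
        (F ∩ dualSlab b a r y (L ^ 2 * ρ)) (β / 40)) := by
  have hα := h.α_pos
  have hβ := h.β_pos
  have hρ := h.ρ_pos
  have hL1 : 1 ≤ L := h.one_le.trans hKL
  have hn1 : (1 : ℝ) ≤ n := by exact_mod_cast Nat.one_le_iff_ne_zero.2 hn
  have hL2 : 12800 * n * 2 ^ n ≤ L := by
    refine le_trans ?_ hL
    gcongr <;> norm_num
  have hL4 : 6400 * 4 ^ n ≤ L := by
    refine le_trans ?_ hL
    gcongr
    linarith
  have hmul := ofReal_mul_le_of_le_volume_slice hS.pos (s := β / 80) (t := α / 160)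
    (τ := (L ^ 2)⁻¹ * ρ) (measurableSet_popular (h.measurableSet_left.inter
      ((measurableSet_box b a _).preimage measurable_fst))
      (h.measurableSet_right.inter (measurableSet_dualSlab b a r y _)) (β / 40))
    (fun x' hx => hS.subset_box hx.1) (by positivity) (by positivity)
    (h.le_volume_nearPoints_of_prod_le hS (by linarith) hKL hprod)
    (fun x' hx => by
      rw [show α / 160 + α / 160 = α / 80 by ring]
      exact h.le_volume_slice_popular_localized hS hL hKL hx)
    (h.volume_dual_box_le hn hS hL4 hKL)
  have hfactor : ρ * α = 12800 * L ^ 2 / β * ((L ^ 2)⁻¹ * ρ * (α / 160) * (β / 80)) := by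
    field_simp
    norm_num
  rw [hfactor, ENNReal.ofReal_mul (by positivity)]
  refine (mul_le_mul_right hmul _).trans ?_
  rw [← mul_assoc, ← ENNReal.ofReal_mul (by positivity)]
  refine mul_le_mul_left (ENNReal.ofReal_le_ofReal ?_) _
  calc 12800 * L ^ 2 / β * (n * 2 ^ n * ∏ j, r j)
      ≤ 12800 * L ^ 2 / β * (n * 2 ^ n * (L * β)) := by gcongr
    _ = 12800 * n * 2 ^ n * L ^ 3 := by field_simp
    _ ≤ L * L ^ 3 := by gcongr
    _ = L ^ 4 := by ring

lemma IsQuasiextremal.incidenceMeasure_prod_le_localized (h : IsQuasiextremal E F α β ρ K)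
    (hn : n ≠ 0) (hS : IsPopularBox E F α β y b a r S) {L : ℝ} (hL : 128000 * n * 4 ^ n ≤ L)
    (hKL : K ≤ L) (hprod : ∏ j, r j ≤ L * β) :
    incidenceMeasure n (E ×ˢ F) ≤ ENNReal.ofReal (L ^ 5) *
      incidenceMeasure n ((E ∩ Prod.fst ⁻¹' box b a ((L ^ (2 * n) + 1) • r)) ×ˢ
        (F ∩ dualSlab b a r y (L ^ 2 * ρ))) := by
  have hβ := h.β_pos
  have hL1 : 1 ≤ L := h.one_le.trans hKL
  have hL40 : 40 ≤ L := by
    have hn1 : (1 : ℝ) ≤ n := by exact_mod_cast Nat.one_le_iff_ne_zero.2 hn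
    nlinarith [one_le_pow₀ (M₀ := ℝ) (a := 4) (n := n) (by norm_num)]
  have hpop := volume_popular_mul_le (h.measurableSet_left.inter
    ((measurableSet_box b a ((L ^ (2 * n) + 1) • r)).preimage measurable_fst))
    (h.measurableSet_right.inter (measurableSet_dualSlab b a r y (L ^ 2 * ρ))) (β / 40)
  rw [h.measure_prod, mul_comm (ρ * α), ENNReal.ofReal_mul hβ.le]
  refine (mul_le_mul_right (h.le_volume_popular_localized hn hS hL hKL hprod) _).trans
    (le_trans ?_ (mul_le_mul_right hpop _))
  rw [← mul_assoc, ← mul_assoc, ← ENNReal.ofReal_mul hβ.le, ← ENNReal.ofReal_mul (by positivity)]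
  refine mul_le_mul_left (ENNReal.ofReal_le_ofReal ?_) _
  nlinarith [mul_le_mul_of_nonneg_right hL40 (show 0 ≤ L ^ 4 * β by positivity)]

end Localization

/-! ### Localization to a ball -/

section SlabPairs

lemma exists_measure_le_mul_measure_inter_abs_sub_lt_one {X ι : Type*} [MeasurableSpace X]
    [Fintype ι] (μ : Measure X) {s : Set X} (hs : s.Nonempty) (g : ι → X → ℝ) (m : ℕ)
    (hg : ∀ i, ∀ z ∈ s, |g i z| ≤ m) :
    ∃ z₀ ∈ s, μ s ≤ (2 * m + 1) ^ Fintype.card ι * μ (s ∩ {z | ∀ i, |g i z - g i z₀| < 1}) := by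
  classical
  let T : Finset (ι → ℤ) := Fintype.piFinset fun _ => Finset.Icc (-m : ℤ) m
  let cell : X → ι → ℤ := fun z i => ⌊g i z⌋
  have hcell : ∀ z ∈ s, cell z ∈ T := fun z hz => Fintype.mem_piFinset.2 fun i => by
    obtain ⟨hlo, hhi⟩ := abs_le.1 (hg i z hz)
    exact Finset.mem_Icc.2 ⟨Int.le_floor.2 (by exact_mod_cast hlo),
      by exact_mod_cast (Int.floor_le _).trans hhi⟩
  let T' := T.filter fun c => ∃ z ∈ s, cell z = c
  have hT' : T'.Nonempty := by
    obtain ⟨z, hz⟩ := hs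
    exact ⟨cell z, Finset.mem_filter.2 ⟨hcell z hz, z, hz, rfl⟩⟩
  obtain ⟨c, hc, hmax⟩ := T'.exists_max_image (fun c => μ (s ∩ cell ⁻¹' {c})) hT'
  obtain ⟨z₀, hz₀, rfl⟩ := (Finset.mem_filter.1 hc).2
  have hcard : (T'.card : ℝ≥0∞) ≤ (2 * m + 1) ^ Fintype.card ι := by
    have hT : T.card = (2 * m + 1) ^ Fintype.card ι := by
      simp only [T, Fintype.card_piFinset, Int.card_Icc, Finset.prod_const, Finset.card_univ]
      congr 1
      lia
    exact_mod_cast (Finset.card_filter_le _ _).trans hT.le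
  refine ⟨z₀, hz₀, ?_⟩
  calc μ s ≤ μ (⋃ c ∈ T', s ∩ cell ⁻¹' {c}) := measure_mono fun z hz =>
        Set.mem_biUnion (Finset.mem_filter.2 ⟨hcell z hz, z, hz, rfl⟩) ⟨hz, rfl⟩
    _ ≤ ∑ c ∈ T', μ (s ∩ cell ⁻¹' {c}) := measure_biUnion_finset_le _ _
    _ ≤ T'.card * μ (s ∩ cell ⁻¹' {cell z₀}) := by
        rw [← nsmul_eq_mul]
        exact Finset.sum_le_card_nsmul _ _ _ hmax
    _ ≤ (2 * m + 1) ^ Fintype.card ι * μ (s ∩ {z | ∀ i, |g i z - g i z₀| < 1}) :=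
        mul_le_mul' hcard (measure_mono fun z hz => ⟨hz.1, fun i =>
          Int.abs_sub_lt_one_of_floor_eq_floor (congrFun hz.2 i)⟩)

variable {n : ℕ} {b : OrthonormalBasis (Fin n) ℝ (Vec n)}

/-- The points over the open box with centre `p.1`, axes `b` and half-widths `r` that are within
`ρ` of being incident to `q`. -/
def slab (b : OrthonormalBasis (Fin n) ℝ (Vec n)) (p q : Pt n) (r : Fin n → ℝ) (ρ : ℝ) :
    Set (Pt n) :=
  {x | (∀ j, |⟪x.1 - p.1, b j⟫| < r j) ∧ |x.2 + q.2 - ⟪x.1, q.1⟫| < ρ}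

lemma measurableSet_slab (b : OrthonormalBasis (Fin n) ℝ (Vec n)) (p q : Pt n) (r : Fin n → ℝ)
    (ρ : ℝ) : MeasurableSet (slab b p q r ρ) := by
  simp only [slab, Set.ofPred_and, Set.ofPred_forall]
  exact (MeasurableSet.iInter fun j => measurableSet_lt (by fun_prop) measurable_const).inter
    (measurableSet_lt (by fun_prop) measurable_const)

lemma volume_slab_le (p q : Pt n) {r : Fin n → ℝ} (hr : ∀ j, 0 ≤ r j) {ρ : ℝ} :
    volume (slab b p q r ρ) ≤ ENNReal.ofReal (2 ^ n * (∏ j, r j) * (2 * ρ)) := by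
  rw [Measure.volume_eq_prod, Measure.prod_apply (measurableSet_slab b p q r ρ)]
  calc ∫⁻ x', volume (Prod.mk x' ⁻¹' slab b p q r ρ)
      ≤ ∫⁻ x', (box b p.1 r).indicator (fun _ => ENNReal.ofReal (2 * ρ)) x' := by
        refine lintegral_mono fun x' => ?_
        by_cases hx : x' ∈ box b p.1 r
        · rw [Set.indicator_of_mem hx, ← Real.volume_ball (⟪x', q.1⟫ - q.2)]
          refine measure_mono fun u hu => ?_
          rw [Metric.mem_ball, Real.dist_eq, ← sub_add]
          simpa only [sub_add_eq_add_sub] using hu.2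
        · rw [Set.indicator_of_notMem hx, nonpos_iff_eq_zero,
            ← measure_empty (μ := (volume : Measure ℝ))]
          congr 1
          exact Set.eq_empty_of_forall_notMem fun u hu => hx fun j => (hu.1 j).le
    _ = ENNReal.ofReal (2 ^ n * (∏ j, r j) * (2 * ρ)) := by
        rw [lintegral_indicator_const (measurableSet_box b _ _), volume_box b hr, mul_comm,
          ← ENNReal.ofReal_mul (mul_nonneg (by positivity) (Finset.prod_nonneg fun j _ => hr j))]

variable {E F : Set (Pt n)} {α β ρ K : ℝ} {y : Pt n} {a : Vec n} {r : Fin n → ℝ} {S : Set (Vec n)}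
  {σ : ℝ}

/-- The coordinates of a pair of points adapted to a popular box and its dual slab, at scale `σ`. -/
def slabCoord (b : OrthonormalBasis (Fin n) ℝ (Vec n)) (a : Vec n) (y : Pt n) (r : Fin n → ℝ)
    (ρ σ : ℝ) : Option (Fin n ⊕ Fin n) → Pt n × Pt n → ℝ
  | none, z => (z.2.2 - y.2 - ⟪a, z.2.1 - y.1⟫) / (σ * ρ)
  | some (.inl j), z => ⟪z.1.1 - a, b j⟫ / (σ * r j)
  | some (.inr j), z => ⟪z.2.1 - y.1, b j⟫ / (σ * (ρ * (r j)⁻¹))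

lemma abs_slabCoord_le (hr : ∀ j, 0 < r j) (hσ : 0 < σ) (hρ : 0 < ρ) {R θ M : ℝ}
    (hR : R ≤ M * σ) (hθ : θ ≤ M * σ * ρ) (hnθ : n * θ ≤ M * σ * ρ) {z : Pt n × Pt n}
    (hx : z.1.1 ∈ box b a (R • r)) (hy : z.2 ∈ dualSlab b a r y θ) (i : Option (Fin n ⊕ Fin n)) :
    |slabCoord b a y r ρ σ i z| ≤ M := by
  rcases i with _ | j | j <;> simp only [slabCoord, abs_div]
  · rw [abs_of_pos (mul_pos hσ hρ), div_le_iff₀ (mul_pos hσ hρ), ← mul_assoc]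
    exact hy.2.trans hnθ
  · have hpos := mul_pos hσ (hr j)
    rw [abs_of_pos hpos, div_le_iff₀ hpos, ← mul_assoc]
    exact (hx j).trans (mul_le_mul_of_nonneg_right hR (hr j).le)
  · have hpos := mul_pos hσ (mul_pos hρ (inv_pos.2 (hr j)))
    rw [abs_of_pos hpos, div_le_iff₀ hpos, ← mul_assoc, ← mul_assoc]
    exact (hy.1 j).trans (mul_le_mul_of_nonneg_right hθ (inv_pos.2 (hr j)).le)

lemma abs_inner_sub_lt_of_abs_slabCoord_sub_lt (hr : ∀ j, 0 < r j) (hσ : 0 < σ) (hρ : 0 < ρ)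
    {z w : Pt n × Pt n} (hzw : ∀ i, |slabCoord b a y r ρ σ i z - slabCoord b a y r ρ σ i w| < 1) :
    (∀ j, |⟪z.1.1 - w.1.1, b j⟫| < σ * r j) ∧
      (∀ j, |⟪z.2.1 - w.2.1, b j⟫| < σ * (ρ * (r j)⁻¹)) ∧
      |z.2.2 - w.2.2 - ⟪a, z.2.1 - w.2.1⟫| < σ * ρ := by
  refine ⟨fun j => ?_, fun j => ?_, ?_⟩
  · have hpos := mul_pos hσ (hr j)
    have hj := hzw (some (.inl j))
    simp only [slabCoord] at hj
    rwa [← sub_div, ← inner_sub_left, sub_sub_sub_cancel_right, abs_div, abs_of_pos hpos,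
      div_lt_one hpos] at hj
  · have hpos := mul_pos hσ (mul_pos hρ (inv_pos.2 (hr j)))
    have hj := hzw (some (.inr j))
    simp only [slabCoord] at hj
    rwa [← sub_div, ← inner_sub_left, sub_sub_sub_cancel_right, abs_div, abs_of_pos hpos,
      div_lt_one hpos] at hj
  · have hpos := mul_pos hσ hρ
    have hnone := hzw none
    simp only [slabCoord] at hnone
    rw [← sub_div, abs_div, abs_of_pos hpos, div_lt_one hpos] at hnone
    have heq : z.2.2 - w.2.2 - ⟪a, z.2.1 - w.2.1⟫ =
        z.2.2 - y.2 - ⟪a, z.2.1 - y.1⟫ - (w.2.2 - y.2 - ⟪a, w.2.1 - y.1⟫) := by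
      simp only [inner_sub_right]
      ring
    rwa [heq]

lemma mem_slab_of_abs_slabCoord_sub_lt (hr : ∀ j, 0 < r j) (hσ : 0 < σ) (hρ : 0 < ρ) {R δ : ℝ}
    (hσδ : σ ≤ δ) (hδ : (1 + n * R) * σ ≤ δ ^ 2 / 2) {z w : Pt n × Pt n}
    (hz : z.1.2 + z.2.2 = ⟪z.1.1, z.2.1⟫) (hw : w.1.2 + w.2.2 = ⟪w.1.1, w.2.1⟫)
    (hzbox : z.1.1 ∈ box b a (R • r)) (hwbox : w.1.1 ∈ box b a (R • r))
    (hzw : ∀ i, |slabCoord b a y r ρ σ i z - slabCoord b a y r ρ σ i w| < 1) :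
    z.1 ∈ slab b w.1 w.2 (δ • r) (δ ^ 2 * ρ / 2) ∧
      z.2 ∈ slab b w.2 w.1 ((δ * ρ) • r⁻¹) (δ ^ 2 * ρ / 2) := by
  obtain ⟨hx, hy, hheight⟩ := abs_inner_sub_lt_of_abs_slabCoord_sub_lt hr hσ hρ hzw
  have hybox : z.2.1 ∈ box b w.2.1 ((σ * ρ) • r⁻¹) := fun j =>
    (hy j).le.trans_eq (mul_assoc _ _ _).symm
  have hinner {x' : Vec n} (hx' : x' ∈ box b a (R • r)) :
      |z.2.2 - w.2.2 - ⟪x', z.2.1 - w.2.1⟫| < δ ^ 2 * ρ / 2 := by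
    have hsplit : z.2.2 - w.2.2 - ⟪x', z.2.1 - w.2.1⟫ =
        z.2.2 - w.2.2 - ⟪a, z.2.1 - w.2.1⟫ - ⟪x' - a, z.2.1 - w.2.1⟫ := by
      rw [inner_sub_left]
      ring
    rw [hsplit]
    calc _ ≤ _ := abs_sub _ _
      _ < σ * ρ + n * (R * (σ * ρ)) :=
        add_lt_add_of_lt_of_le hheight (abs_inner_le_of_mem_box b hr hx' hybox)
      _ = (1 + n * R) * σ * ρ := by ring
      _ ≤ δ ^ 2 / 2 * ρ := mul_le_mul_of_nonneg_right hδ hρ.le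
      _ = δ ^ 2 * ρ / 2 := by ring
  refine ⟨⟨fun j => (hx j).trans_le (mul_le_mul_of_nonneg_right hσδ (hr j).le), ?_⟩,
    fun j => (hy j).trans_le ((mul_le_mul_of_nonneg_right hσδ
      (mul_pos hρ (inv_pos.2 (hr j))).le).trans_eq (mul_assoc _ _ _).symm), ?_⟩
  · rw [← abs_neg, eq_sub_of_add_eq hz]
    convert hinner hzbox using 2
    rw [inner_sub_right]
    ring
  · rw [eq_sub_of_add_eq hw]
    convert hinner hwbox using 2
    rw [inner_sub_right, real_inner_comm z.2.1]
    ring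

lemma IsQuasiextremal.volume_slab_le_left (h : IsQuasiextremal E F α β ρ K) (hn : n ≠ 0)
    (hr : ∀ j, 0 < r j) {L : ℝ} (hL : 2 ^ n ≤ L) (hL1 : 1 ≤ L) (hprod : ∏ j, r j ≤ L * β)
    (p q : Pt n) :
    volume (slab b p q (L⁻¹ • r) (L⁻¹ ^ 2 * ρ / 2)) ≤ volume E := by
  have := h.β_pos
  have := h.ρ_pos
  have := Finset.prod_pos fun j (_ : j ∈ Finset.univ) => hr j
  have hinv := inv_le_one_of_one_le₀ hL1
  refine (volume_slab_le p q fun j => mul_nonneg (by positivity) (hr j).le).trans ?_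
  rw [h.volume_left]
  refine ENNReal.ofReal_le_ofReal ?_
  calc 2 ^ n * (∏ j, (L⁻¹ • r) j) * (2 * (L⁻¹ ^ 2 * ρ / 2))
      = 2 ^ n * (L⁻¹ ^ n * ∏ j, r j) * (L⁻¹ ^ 2 * ρ) := by
        simp only [Pi.smul_apply, smul_eq_mul, Finset.prod_mul_distrib, Finset.prod_const,
          Finset.card_univ, Fintype.card_fin]
        ring
    _ ≤ L * (L⁻¹ * (L * β)) * (L⁻¹ * 1 * ρ) := by
        rw [pow_two]
        gcongr
        exact pow_le_of_le_one (by positivity) hinv hn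
    _ = ρ * β := by field_simp

lemma IsQuasiextremal.volume_slab_le_right (h : IsQuasiextremal E F α β ρ K) (hn : n ≠ 0)
    (hS : IsPopularBox E F α β y b a r S) {L : ℝ} (hL : 40 * 4 ^ n ≤ L) (hKL : K ≤ L)
    (p q : Pt n) :
    volume (slab b p q ((L⁻¹ * ρ) • r⁻¹) (L⁻¹ ^ 2 * ρ / 2)) ≤ volume F := by
  have := h.α_pos
  have := h.ρ_pos
  have := zero_lt_one.trans_le h.one_le
  have hL0 : 0 < L := by linarith
  have hinv := inv_le_one_of_one_le₀ (h.one_le.trans hKL)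
  have hnonneg (j) : 0 ≤ ((L⁻¹ * ρ) • r⁻¹) j := mul_nonneg (by positivity) (inv_pos.2 (hS.pos j)).le
  refine (volume_slab_le p q hnonneg).trans ?_
  rw [h.volume_right]
  refine ENNReal.ofReal_le_ofReal ?_
  calc 2 ^ n * (∏ j, ((L⁻¹ * ρ) • r⁻¹) j) * (2 * (L⁻¹ ^ 2 * ρ / 2))
      ≤ 2 ^ n * (L⁻¹ * (40 * 2 ^ n * L * α)) * (2 * (L⁻¹ ^ 2 * ρ / 2)) := by
        gcongr
        refine (h.mul_pow_div_prod_le hS (by positivity)).trans ?_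
        gcongr
        exact pow_le_of_le_one (by positivity) hinv hn
    _ = 40 * 4 ^ n * (L⁻¹ ^ 2 * (ρ * α)) := by
        rw [show (4 : ℝ) = 2 * 2 by norm_num, mul_pow]
        field_simp
    _ ≤ L * (L⁻¹ * 1 * (ρ * α)) := by
        rw [pow_two]
        gcongr
    _ = ρ * α := by field_simp

lemma one_add_mul_mul_inv_pow_le {L : ℝ} (hL : 4 * n + 2 ≤ L) :
    (1 + n * (L ^ (2 * n) + 1)) * (L ^ (2 * n + 4))⁻¹ ≤ L⁻¹ ^ 2 / 2 := by
  have hL1 : 1 ≤ L := by linarith [(n.cast_nonneg : (0 : ℝ) ≤ n)]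
  have hpow : 1 ≤ L ^ (2 * n) := one_le_pow₀ hL1
  rw [mul_inv_le_iff₀ (by positivity)]
  calc 1 + n * (L ^ (2 * n) + 1) ≤ L ^ (2 * n) + n * (L ^ (2 * n) + L ^ (2 * n)) := by gcongr
    _ = (4 * n + 2) * L ^ (2 * n) / 2 := by ring
    _ ≤ (L * L) * L ^ (2 * n) / 2 := by
        gcongr
        exact hL.trans (le_mul_of_one_le_left (by positivity) hL1)
    _ = L⁻¹ ^ 2 / 2 * L ^ (2 * n + 4) := by
        rw [pow_add]
        field_simp

lemma two_mul_ceil_add_one_le {L : ℝ} (hL : 5 ≤ L) (k : ℕ) :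
    (2 * ⌈L ^ k⌉₊ + 1 : ℝ≥0∞) ≤ ENNReal.ofReal (L ^ (k + 1)) := by
  have hpow : 1 ≤ L ^ k := one_le_pow₀ (by linarith)
  have hceil := (Nat.ceil_lt_add_one (zero_le_one.trans hpow)).le
  rw [show (2 * ⌈L ^ k⌉₊ + 1 : ℝ≥0∞) = ENNReal.ofReal (2 * ⌈L ^ k⌉₊ + 1) by
    rw [ENNReal.ofReal_add (by positivity) zero_le_one, ENNReal.ofReal_mul zero_le_two]; simp]
  refine ENNReal.ofReal_le_ofReal ?_
  rw [pow_succ]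
  nlinarith [mul_le_mul_of_nonneg_left hL (zero_le_one.trans hpow)]

lemma IsQuasiextremal.localized_nonempty_and_le (h : IsQuasiextremal E F α β ρ K) (hn : n ≠ 0)
    (hS : IsPopularBox E F α β y b a r S) {L : ℝ} (hL : 128000 * n * 4 ^ n ≤ L) (hKL : K ≤ L)
    (hprod : ∏ j, r j ≤ L * β) :
    (((E ∩ Prod.fst ⁻¹' box b a ((L ^ (2 * n) + 1) • r)) ×ˢ (F ∩ dualSlab b a r y (L ^ 2 * ρ))) ∩
        {z | z.1.2 + z.2.2 = ⟪z.1.1, z.2.1⟫}).Nonempty ∧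
      incidenceMeasure n (E ×ˢ F) ≤ ENNReal.ofReal (L ^ 5) * incidenceMeasure n
        (((E ∩ Prod.fst ⁻¹' box b a ((L ^ (2 * n) + 1) • r)) ×ˢ
          (F ∩ dualSlab b a r y (L ^ 2 * ρ))) ∩ {z | z.1.2 + z.2.2 = ⟪z.1.1, z.2.1⟫}) := by
  have hmeas := (h.measurableSet_left.inter
    ((measurableSet_box b a ((L ^ (2 * n) + 1) • r)).preimage measurable_fst)).prod
    (h.measurableSet_right.inter (measurableSet_dualSlab b a r y (L ^ 2 * ρ)))
  have hlocal := h.incidenceMeasure_prod_le_localized hn hS hL hKL hprod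
  rw [← incidenceMeasure_inter_incident hmeas] at hlocal
  refine ⟨Set.nonempty_iff_ne_empty.2 fun hempty => ?_, hlocal⟩
  rw [hempty, measure_empty, mul_zero, h.measure_prod, nonpos_iff_eq_zero,
    ENNReal.ofReal_eq_zero] at hlocal
  exact hlocal.not_gt (mul_pos (mul_pos h.ρ_pos h.α_pos) h.β_pos)

lemma pow_le_ceil_pow_add_mul_inv_pow {L : ℝ} (hL : 0 < L) (k m : ℕ) :
    L ^ k ≤ ⌈L ^ (k + m)⌉₊ * (L ^ m)⁻¹ := by
  rw [le_mul_inv_iff₀ (by positivity), ← pow_add]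
  exact Nat.le_ceil _

lemma IsQuasiextremal.exists_cell_of_isPopularBox (h : IsQuasiextremal E F α β ρ K) (hn : n ≠ 0)
    (hS : IsPopularBox E F α β y b a r S) {L : ℝ} (hL : 128000 * n * 4 ^ n ≤ L) (hKL : K ≤ L)
    (hprod : ∏ j, r j ≤ L * β) :
    ∃ w : Pt n × Pt n, w.1.2 + w.2.2 = ⟪w.1.1, w.2.1⟫ ∧
      incidenceMeasure n (E ×ˢ F) ≤ ENNReal.ofReal (L ^ (5 + (4 * n + 6) * (2 * n + 1))) *
        incidenceMeasure n ((E ∩ slab b w.1 w.2 (L⁻¹ • r) (L⁻¹ ^ 2 * ρ / 2)) ×ˢ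
          (F ∩ slab b w.2 w.1 ((L⁻¹ * ρ) • r⁻¹) (L⁻¹ ^ 2 * ρ / 2))) := by
  have hρ := h.ρ_pos
  have hn1 : (1 : ℝ) ≤ n := by exact_mod_cast Nat.one_le_iff_ne_zero.2 hn
  have hLn : 128000 * n ≤ L :=
    (le_mul_of_one_le_right (by positivity) (one_le_pow₀ (by norm_num))).trans hL
  have hL1 : 1 ≤ L := by linarith
  obtain ⟨hne, hlocal⟩ := h.localized_nonempty_and_le hn hS hL hKL hprod
  have hM : L ^ (2 * n + 1) ≤ ⌈L ^ (4 * n + 5)⌉₊ * (L ^ (2 * n + 4))⁻¹ :=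
    (pow_le_ceil_pow_add_mul_inv_pow (by linarith) _ (2 * n + 4)).trans_eq (by ring_nf)
  have hR : L ^ (2 * n) + 1 ≤ L ^ (2 * n + 1) := by
    rw [pow_succ]
    nlinarith [one_le_pow₀ hL1 (n := 2 * n)]
  have hθ : n * L ^ 2 ≤ ⌈L ^ (4 * n + 5)⌉₊ * (L ^ (2 * n + 4))⁻¹ :=
    calc n * L ^ 2 ≤ L * L ^ 2 := by gcongr; linarith
      _ = L ^ (2 * 1 + 1) := by ring
      _ ≤ L ^ (2 * n + 1) := by gcongr; exact Nat.one_le_iff_ne_zero.2 hn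
      _ ≤ _ := hM
  obtain ⟨w, hw, hpigeon⟩ := exists_measure_le_mul_measure_inter_abs_sub_lt_one
    (incidenceMeasure n) hne (slabCoord b a y r ρ (L ^ (2 * n + 4))⁻¹) ⌈L ^ (4 * n + 5)⌉₊
    fun i z hz => abs_slabCoord_le hS.pos (by positivity) hρ (hR.trans hM)
      (mul_le_mul_of_nonneg_right ((le_mul_of_one_le_left (by positivity) hn1).trans hθ) hρ.le)
      (by rw [← mul_assoc]; exact mul_le_mul_of_nonneg_right hθ hρ.le) hz.1.1.2 hz.1.2.2 i
  refine ⟨w, hw.2, hlocal.trans ?_⟩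
  rw [pow_add, pow_mul L (4 * n + 6), ENNReal.ofReal_mul (by positivity), mul_assoc]
  refine mul_le_mul_right (hpigeon.trans (mul_le_mul' ?_ (measure_mono fun z hz => ?_))) _
  · rw [ENNReal.ofReal_pow (by positivity)]
    refine (pow_le_pow_left' (two_mul_ceil_add_one_le (by linarith) _) _).trans_eq ?_
    simp only [Fintype.card_option, Fintype.card_sum, Fintype.card_fin, two_mul]
  · obtain ⟨hE, hF⟩ := mem_slab_of_abs_slabCoord_sub_lt (δ := L⁻¹) hS.pos (by positivity) hρ
      (inv_anti₀ (by positivity) (le_self_pow₀ hL1 (by lia)))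
      (one_add_mul_mul_inv_pow_le (by linarith)) hz.1.2 hw.2 hz.1.1.1.2 hw.1.1.2 hz.2
    exact ⟨⟨hz.1.1.1.1, hE⟩, hz.1.1.2.1, hF⟩

/-- The constant, depending only on the dimension, by which a ball inside an
`IsQuasiextremal` pair is shrunk to make its projections smaller than the two sets. -/
def localizationConst (n : ℕ) : ℝ :=
  128000 * n * 4 ^ n + popularBoxConst n

lemma one_le_localizationConst (hn : n ≠ 0) : 1 ≤ localizationConst n := by
  have hn1 : (1 : ℝ) ≤ n := by exact_mod_cast Nat.one_le_iff_ne_zero.2 hn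
  have h4 : (1 : ℝ) ≤ 4 ^ n := one_le_pow₀ (by norm_num)
  have hn4 : 1 ≤ n * (4 : ℝ) ^ n := one_le_mul_of_one_le_of_one_le hn1 h4
  have hconst := popularBoxConst_nonneg n
  unfold localizationConst
  linarith

/-- The radii `r`, `rs` and the thickness `δ` are those of a ball of the incidence manifold centred
at the incident pair `w`. The projections of that ball are a pair of slabs of thickness `δ / 2`. -/
structure IsSlabPair (w : Pt n × Pt n) (r rs : Fin n → ℝ) (δ : ℝ) : Prop where
  incident : w.1.2 + w.2.2 = ⟪w.1.1, w.2.1⟫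
  pos : 0 < δ
  left_pos : ∀ j, 0 < r j
  right_pos : ∀ j, 0 < rs j
  mul_eq : ∀ j, r j * rs j = δ

theorem IsQuasiextremal.exists_slab_pair (h : IsQuasiextremal E F α β ρ K) (hn : n ≠ 0) :
    ∃ (w : Pt n × Pt n) (b : OrthonormalBasis (Fin n) ℝ (Vec n)) (r rs : Fin n → ℝ) (δ : ℝ),
      IsSlabPair w r rs δ ∧ volume (slab b w.1 w.2 r (δ / 2)) ≤ volume E ∧
      volume (slab b w.2 w.1 rs (δ / 2)) ≤ volume F ∧
      incidenceMeasure n (E ×ˢ F) ≤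
        ENNReal.ofReal ((localizationConst n * K ^ n) ^ (5 + (4 * n + 6) * (2 * n + 1))) *
          incidenceMeasure n
            ((E ∩ slab b w.1 w.2 r (δ / 2)) ×ˢ (F ∩ slab b w.2 w.1 rs (δ / 2))) := by
  obtain ⟨y, b, a, r, S, hS, hprod⟩ := h.exists_isPopularBox hn
  have hβ := h.β_pos
  have hρ := h.ρ_pos
  have hK := h.one_le
  have hKn : 1 ≤ K ^ n := one_le_pow₀ hK
  have hconst := popularBoxConst_nonneg n
  have hn1 : (1 : ℝ) ≤ n := by exact_mod_cast Nat.one_le_iff_ne_zero.2 hn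
  have hn4 : (4 : ℝ) ^ n ≤ n * 4 ^ n := le_mul_of_one_le_left (by positivity) hn1
  have hconst1 := one_le_localizationConst hn
  set L := localizationConst n * K ^ n
  have hcL : localizationConst n ≤ L := le_mul_of_one_le_right (by linarith) hKn
  have hL4 : 128000 * n * 4 ^ n ≤ L := (le_add_of_nonneg_right hconst).trans hcL
  have hL0 : 0 < L := by linarith
  have hKL : K ≤ L := (le_self_pow₀ hK hn).trans (le_mul_of_one_le_left (by positivity) hconst1)
  have hprodL : ∏ j, r j ≤ L * β := hprod.trans (mul_le_mul_of_nonneg_right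
    (mul_le_mul_of_nonneg_right (le_add_of_nonneg_left (by positivity)) (by positivity)) hβ.le)
  obtain ⟨w, hw, hle⟩ := h.exists_cell_of_isPopularBox hn hS hL4 hKL hprodL
  have h24 : (2 : ℝ) ^ n ≤ 4 ^ n := by gcongr; norm_num
  refine ⟨w, b, L⁻¹ • r, (L⁻¹ * ρ) • r⁻¹, L⁻¹ ^ 2 * ρ, ⟨hw, by positivity,
    fun j => mul_pos (by positivity) (hS.pos j),
    fun j => mul_pos (by positivity) (inv_pos.2 (hS.pos j)), fun j => ?_⟩,
    h.volume_slab_le_left hn hS.pos (by linarith) (hK.trans hKL) hprodL _ _,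
    h.volume_slab_le_right hn hS (by linarith) hKL _ _, hle⟩
  simp only [Pi.smul_apply, Pi.inv_apply, smul_eq_mul]
  field_simp [(hS.pos j).ne']

end SlabPairs

/-! ### Dyadic sums -/

section DyadicSums

/-- The sum `∑ 2 ^ (-κ |m|)` over the integers `m`, which bounds dyadic sums with geometric decay
away from a single index. -/
def dyadicConst (κ : ℝ) : ℝ≥0∞ :=
  ∑' m : ℤ, 2 ^ (-(κ * |(m : ℝ)|))

variable {κ : ℝ}

lemma two_rpow_add (x y : ℝ) : (2 : ℝ≥0∞) ^ (x + y) = 2 ^ x * 2 ^ y :=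
  ENNReal.rpow_add x y two_ne_zero ofNat_ne_top

lemma tsum_two_rpow_neg_mul_natCast_ne_top (hκ : 0 < κ) :
    ∑' m : ℕ, (2 : ℝ≥0∞) ^ (-(κ * m)) ≠ ⊤ := by
  have hlt : (2 : ℝ≥0∞) ^ (-κ) < 1 :=
    ENNReal.rpow_lt_one_of_one_lt_of_neg one_lt_two (neg_lt_zero.2 hκ)
  simp_rw [← neg_mul, ENNReal.rpow_mul, ENNReal.rpow_natCast, ENNReal.tsum_geometric]
  exact ENNReal.inv_ne_top.2 (tsub_pos_of_lt hlt).ne'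

lemma dyadicConst_ne_top (hκ : 0 < κ) : dyadicConst κ ≠ ⊤ := by
  have hgeom := tsum_two_rpow_neg_mul_natCast_ne_top hκ
  rw [dyadicConst, tsum_of_nat_of_neg_add_one ENNReal.summable ENNReal.summable]
  refine ENNReal.add_ne_top.2 ⟨ne_top_of_le_ne_top hgeom ?_, ne_top_of_le_ne_top hgeom ?_⟩ <;>
    refine ENNReal.tsum_le_tsum fun m => ENNReal.rpow_le_rpow_of_exponent_le one_le_two
      (neg_le_neg (mul_le_mul_of_nonneg_left ?_ hκ.le))
  · exact le_abs_self _
  · push_cast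
    rw [abs_neg]
    exact (le_add_of_nonneg_right zero_le_one).trans (le_abs_self _)

lemma tsum_natCast_le_dyadicConst (κ : ℝ) :
    ∑' m : ℕ, (2 : ℝ≥0∞) ^ (-(κ * m)) ≤ dyadicConst κ := by
  refine le_trans (ENNReal.tsum_le_tsum fun m => le_of_eq ?_)
    (ENNReal.tsum_comp_le_tsum_of_injective Nat.cast_injective _)
  rw [Int.cast_natCast, Nat.abs_cast]

lemma tsum_two_rpow_neg_mul_abs_sub (κ : ℝ) (k₀ : ℤ) :
    ∑' k : ℤ, (2 : ℝ≥0∞) ^ (-(κ * |(k : ℝ) - k₀|)) = dyadicConst κ := by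
  rw [dyadicConst, ← (Equiv.subRight k₀).tsum_eq fun m : ℤ => (2 : ℝ≥0∞) ^ (-(κ * |(m : ℝ)|))]
  simp only [Equiv.subRight_apply, Int.cast_sub]

variable {s q : ℝ}

lemma two_rpow_mul_rpow_le_tsum_tsum (hs : 0 ≤ s) (hsq : s ≤ q) {u : ℤ → ℝ≥0∞} {k k₀ : ℤ}
    (hk : u k ≤ u k₀) :
    2 ^ (κ * q * |(k : ℝ) - k₀|) * u k ^ q ≤
      ∑' k, ∑' m : ℕ, 2 ^ (κ * q * m) * (u k ^ s * u (k + m) ^ (q - s)) := by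
  have hterm (k : ℤ) (m : ℕ) : 2 ^ (κ * q * m) * (u k ^ s * u (k + m) ^ (q - s)) ≤
      ∑' k, ∑' m : ℕ, 2 ^ (κ * q * m) * (u k ^ s * u (k + m) ^ (q - s)) :=
    (ENNReal.le_tsum m).trans
      (ENNReal.le_tsum (f := fun k => ∑' m : ℕ, 2 ^ (κ * q * m) * (u k ^ s * _)) k)
  have hpow : u k ^ q = u k ^ s * u k ^ (q - s) := by
    rw [← ENNReal.rpow_add_of_nonneg _ _ hs (sub_nonneg.2 hsq), add_sub_cancel]
  rw [hpow]
  obtain hle | hle := le_total k k₀ <;> obtain ⟨m, rfl⟩ := Int.le.dest hle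
  · refine le_trans ?_ (hterm k m)
    rw [Int.cast_add, Int.cast_natCast, sub_add_cancel_left, abs_neg, Nat.abs_cast]
    gcongr
  · refine le_trans ?_ (hterm k₀ m)
    rw [Int.cast_add, Int.cast_natCast, add_sub_cancel_left, Nat.abs_cast]
    gcongr

lemma rpow_tsum_le (hs : 0 ≤ s) (hsq : s ≤ q) (hq : 0 < q) (u : ℤ → ℝ≥0∞) :
    (∑' k, u k) ^ q ≤ dyadicConst κ ^ q *
      ∑' k, ∑' m : ℕ, 2 ^ (κ * q * m) * (u k ^ s * u (k + m) ^ (q - s)) := by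
  set M := ∑' k, ∑' m : ℕ, 2 ^ (κ * q * m) * (u k ^ s * u (k + m) ^ (q - s))
  have hdecay {k k₀ : ℤ} (hk : u k ≤ u k₀) :
      u k ≤ 2 ^ (-(κ * |(k : ℝ) - k₀|)) * M ^ q⁻¹ := by
    rw [← ENNReal.rpow_le_rpow_iff hq, ENNReal.mul_rpow_of_nonneg _ _ hq.le,
      ENNReal.rpow_inv_rpow hq.ne', ← ENNReal.rpow_mul]
    calc u k ^ q = 2 ^ (-(κ * |(k : ℝ) - k₀|) * q) * (2 ^ (κ * q * |(k : ℝ) - k₀|) * u k ^ q) := by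
          rw [← mul_assoc, ← two_rpow_add, show -(κ * |(k : ℝ) - k₀|) * q +
            κ * q * |(k : ℝ) - k₀| = 0 by ring, ENNReal.rpow_zero, one_mul]
      _ ≤ _ := by gcongr; exact two_rpow_mul_rpow_le_tsum_tsum hs hsq hk
  have hsum : ∑' k, u k ≤ dyadicConst κ * M ^ q⁻¹ := by
    rw [ENNReal.tsum_eq_iSup_sum]
    refine iSup_le fun S => ?_
    obtain rfl | hS := S.eq_empty_or_nonempty
    · exact zero_le
    obtain ⟨k₀, -, hmax⟩ := S.exists_max_image u hS
    calc ∑ k ∈ S, u k ≤ ∑ k ∈ S, 2 ^ (-(κ * |(k : ℝ) - k₀|)) * M ^ q⁻¹ :=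
          Finset.sum_le_sum fun k hk => hdecay (hmax k hk)
      _ ≤ ∑' k : ℤ, 2 ^ (-(κ * |(k : ℝ) - k₀|)) * M ^ q⁻¹ := ENNReal.sum_le_tsum S
      _ = dyadicConst κ * M ^ q⁻¹ := by
          rw [ENNReal.tsum_mul_right, tsum_two_rpow_neg_mul_abs_sub]
  calc (∑' k, u k) ^ q ≤ (dyadicConst κ * M ^ q⁻¹) ^ q := by gcongr
    _ = dyadicConst κ ^ q * M := by
        rw [ENNReal.mul_rpow_of_nonneg _ _ hq.le, ENNReal.rpow_inv_rpow hq.ne']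

lemma lintegral_tsum_rpow_le {α : Type*} [MeasurableSpace α] {μ : Measure α} (hs : 0 ≤ s)
    (hsq : s ≤ q) (hq : 0 < q) {u : ℤ → α → ℝ≥0∞} (hu : ∀ k, Measurable (u k)) :
    ∫⁻ x, (∑' k, u k x) ^ q ∂μ ≤ dyadicConst κ ^ q *
      ∑' k, ∑' m : ℕ, 2 ^ (κ * q * m) * ∫⁻ x, u k x ^ s * u (k + m) x ^ (q - s) ∂μ := by
  have hterm (k : ℤ) (m : ℕ) : Measurable fun x => u k x ^ s * u (k + m) x ^ (q - s) :=
    ((hu k).pow_const s).mul ((hu (k + m)).pow_const (q - s))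
  have hsum (k : ℤ) : Measurable fun x =>
      ∑' m : ℕ, 2 ^ (κ * q * m) * (u k x ^ s * u (k + m) x ^ (q - s)) :=
    Measurable.tsum fun m => (hterm k m).const_mul _
  refine (lintegral_mono fun x => rpow_tsum_le (κ := κ) hs hsq hq fun k => u k x).trans_eq ?_
  rw [lintegral_const_mul _ (Measurable.tsum hsum), lintegral_tsum fun k => (hsum k).aemeasurable]
  congr 1
  refine tsum_congr fun k => ?_
  rw [lintegral_tsum fun m => ((hterm k m).const_mul _).aemeasurable]
  exact tsum_congr fun m => lintegral_const_mul _ (hterm k m)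

lemma mul_pow_le_pow_succ_add_pow_succ {R : Type*} [CommSemiring R] [LinearOrder R]
    [CanonicallyOrderedAdd R] (x y : R) (n : ℕ) :
    x * y ^ n ≤ x ^ (n + 1) + y ^ (n + 1) := by
  obtain h | h := le_total x y
  · exact (mul_le_mul_left h _).trans ((pow_succ' y n).ge.trans le_add_self)
  · exact (mul_le_mul_right (pow_le_pow_left' h n) x).trans ((pow_succ' x n).ge.trans le_self_add)

lemma tsum_tsum_mul_pow_le (θ : ℝ) (φ : ℤ → ℝ≥0∞) (n : ℕ) :
    ∑' k, ∑' m : ℕ, 2 ^ (-(θ * m)) * (φ k * φ (k + m) ^ n) ≤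
      2 * dyadicConst θ * ∑' k, φ k ^ (n + 1) := by
  have hshift (m : ℕ) : ∑' k, φ (k + m) ^ (n + 1) = ∑' k, φ k ^ (n + 1) :=
    (Equiv.addRight (m : ℤ)).tsum_eq fun k => φ k ^ (n + 1)
  calc ∑' k, ∑' m : ℕ, 2 ^ (-(θ * m)) * (φ k * φ (k + m) ^ n)
      ≤ ∑' k, ∑' m : ℕ, 2 ^ (-(θ * m)) * (φ k ^ (n + 1) + φ (k + m) ^ (n + 1)) := by
        gcongr
        exact mul_pow_le_pow_succ_add_pow_succ _ _ n
    _ = (∑' m : ℕ, 2 ^ (-(θ * m))) * (2 * ∑' k, φ k ^ (n + 1)) := by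
        rw [ENNReal.tsum_comm, ← ENNReal.tsum_mul_right]
        simp only [ENNReal.tsum_mul_left, ENNReal.tsum_add, hshift, ← two_mul]
    _ ≤ dyadicConst θ * (2 * ∑' k, φ k ^ (n + 1)) := by
        gcongr
        exact tsum_natCast_le_dyadicConst θ
    _ = 2 * dyadicConst θ * ∑' k, φ k ^ (n + 1) := by rw [mul_comm 2 (dyadicConst θ), mul_assoc]

variable {α : Type*}

/-- The superlevel set of `g` at height `2 ^ k`. -/
def dyadicLevel (g : α → ℝ≥0∞) (k : ℤ) : Set α :=
  {y | 2 ^ (k : ℝ) ≤ g y}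

lemma exists_two_rpow_le_lt_two_rpow {t : ℝ≥0∞} (h0 : t ≠ 0) (htop : t ≠ ⊤) :
    ∃ k : ℤ, 2 ^ (k : ℝ) ≤ t ∧ t < 2 ^ ((k : ℝ) + 1) := by
  obtain ⟨k, hk⟩ := ENNReal.exists_mem_Ico_zpow h0 htop one_lt_two ofNat_ne_top
  refine ⟨k, ?_, ?_⟩
  · exact (ENNReal.rpow_intCast 2 k).trans_le hk.1
  · exact hk.2.trans_eq (by rw [← ENNReal.rpow_intCast, Int.cast_add, Int.cast_one])

lemma tsum_indicator_dyadicLevel_le {p : ℝ} (hp : 0 < p) (g : α → ℝ≥0∞) (y : α) :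
    ∑' k : ℤ, (dyadicLevel g k).indicator (fun _ => (2 : ℝ≥0∞) ^ (k * p)) y ≤
      dyadicConst p * g y ^ p := by
  obtain h0 | h0 := eq_or_ne (g y) 0
  · refine (ENNReal.tsum_eq_zero.2 fun k => Set.indicator_of_notMem ?_ _).trans_le zero_le
    rw [dyadicLevel, Set.mem_ofPred_eq, h0, nonpos_iff_eq_zero]
    exact (ENNReal.rpow_pos two_pos ofNat_ne_top).ne'
  obtain htop | htop := eq_or_ne (g y) ⊤
  · have hpos : dyadicConst p ≠ 0 := fun h =>
      (ENNReal.rpow_pos two_pos ofNat_ne_top).ne' (ENNReal.tsum_eq_zero.1 h 0)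
    rw [htop, ENNReal.top_rpow_of_pos hp, ENNReal.mul_top hpos]
    exact le_top
  obtain ⟨k₀, hk₀, hlt⟩ := exists_two_rpow_le_lt_two_rpow h0 htop
  calc ∑' k : ℤ, (dyadicLevel g k).indicator (fun _ => (2 : ℝ≥0∞) ^ (k * p)) y
      ≤ ∑' k : ℤ, 2 ^ (-(p * |(k : ℝ) - k₀|)) * g y ^ p := by
        refine ENNReal.tsum_le_tsum fun k => Set.indicator_apply_le' (fun hk => ?_) fun _ => zero_le
        have hkk₀ : (k : ℝ) ≤ k₀ := by
          by_contra! hlt'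
          have hsucc : (k₀ : ℝ) + 1 ≤ k := by exact_mod_cast hlt'
          have hmono := ENNReal.rpow_le_rpow_of_exponent_le (one_le_two (α := ℝ≥0∞)) hsucc
          exact (hlt.trans_le (hmono.trans hk)).false
        calc (2 : ℝ≥0∞) ^ (k * p) = 2 ^ (-(p * |(k : ℝ) - k₀|)) * (2 ^ (k₀ : ℝ)) ^ p := by
              rw [abs_of_nonpos (sub_nonpos.2 hkk₀), ← ENNReal.rpow_mul, ← two_rpow_add]
              ring_nf
          _ ≤ _ := by gcongr
    _ = dyadicConst p * g y ^ p := by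
        rw [ENNReal.tsum_mul_right, tsum_two_rpow_neg_mul_abs_sub]

lemma le_two_mul_tsum_indicator_dyadicLevel (g : α → ℝ≥0∞) (y : α) :
    g y ≤ 2 * ∑' k : ℤ, (dyadicLevel g k).indicator (fun _ => (2 : ℝ≥0∞) ^ (k : ℝ)) y := by
  refine ENNReal.le_of_forall_nnreal_lt fun t ht => ?_
  obtain rfl | h0 := eq_or_ne t 0
  · exact zero_le
  obtain ⟨k, hk, hlt⟩ :=
    exists_two_rpow_le_lt_two_rpow (ENNReal.coe_ne_zero.2 h0) ENNReal.coe_ne_top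
  refine hlt.le.trans ?_
  rw [add_comm, two_rpow_add, ENNReal.rpow_one]
  refine mul_le_mul_right (le_trans (Set.indicator_of_mem ?_ _).ge (ENNReal.le_tsum k)) 2
  exact hk.trans ht.le

lemma measurableSet_dyadicLevel [MeasurableSpace α] {g : α → ℝ≥0∞} (hg : Measurable g) (k : ℤ) :
    MeasurableSet (dyadicLevel g k) :=
  measurableSet_le measurable_const hg

lemma tsum_two_rpow_mul_measure_dyadicLevel_le [MeasurableSpace α] {μ : Measure α} {p : ℝ}
    (hp : 0 < p) {g : α → ℝ≥0∞} (hg : Measurable g) :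
    ∑' k : ℤ, 2 ^ (k * p) * μ (dyadicLevel g k) ≤ dyadicConst p * ∫⁻ y, g y ^ p ∂μ := by
  have hmeas := measurableSet_dyadicLevel hg
  calc ∑' k : ℤ, 2 ^ (k * p) * μ (dyadicLevel g k)
      = ∫⁻ y, ∑' k : ℤ, (dyadicLevel g k).indicator (fun _ => (2 : ℝ≥0∞) ^ (k * p)) y ∂μ := by
        rw [lintegral_tsum fun k => (measurable_const.indicator (hmeas k)).aemeasurable]
        exact tsum_congr fun k => (lintegral_indicator_const (hmeas k) _).symm
    _ ≤ ∫⁻ y, dyadicConst p * g y ^ p ∂μ :=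
        lintegral_mono fun y => tsum_indicator_dyadicLevel_le hp g y
    _ = dyadicConst p * ∫⁻ y, g y ^ p ∂μ := lintegral_const_mul _ (hg.pow_const p)

end DyadicSums

/-! ### Dyadic level sets of quasiextremal functions -/

section LevelSets

variable {n : ℕ}

lemma exists_lintegral_volume_slice_mul_le (hn : n ≠ 0) :
    ∃ C : ℝ≥0∞, C ≠ ⊤ ∧ ∀ F F' : Set (Pt n), MeasurableSet F → MeasurableSet F' →
      ∫⁻ x, volume (slice F x) ^ (1 + (n : ℝ)⁻¹) *
        volume (slice F' x) ^ ((n : ℝ) + 2 - (1 + (n : ℝ)⁻¹)) ≤ C * (volume F * volume F' ^ n) := by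
  obtain ⟨C, hC, hsimplex⟩ := exists_volume_pow_mul_le_simplexIntegral_pow hn
  have hn0 : (n : ℝ) ≠ 0 := Nat.cast_ne_zero.2 hn
  have hroot : C ^ (n : ℝ)⁻¹ ≠ ⊤ := ENNReal.rpow_ne_top_of_nonneg (by positivity) hC
  refine ⟨C ^ (n : ℝ)⁻¹, hroot, fun F F' hF hF' => ?_⟩
  set V : Fin (n + 1) → Set (Pt n) := Fin.cons F fun _ => F'
  have hV : ∀ i, MeasurableSet (V i) := Fin.cases hF fun _ => hF'
  have hslice (x : Pt n) :
      (Fin.cons (slice F x) fun _ => slice F' x : Fin (n + 1) → Set (Vec n)) =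
        fun i => slice (V i) x := by
    funext i
    refine Fin.cases rfl (fun _ => rfl) i
  calc ∫⁻ x, volume (slice F x) ^ (1 + (n : ℝ)⁻¹) *
        volume (slice F' x) ^ ((n : ℝ) + 2 - (1 + (n : ℝ)⁻¹))
      ≤ ∫⁻ x, C ^ (n : ℝ)⁻¹ * simplexIntegral fun i => slice (V i) x := by
        refine lintegral_mono fun x => ?_
        have hpow := ENNReal.rpow_le_rpow (hsimplex (slice F x) _ (measurableSet_slice hF' x))
          (inv_nonneg.2 (n.cast_nonneg : (0 : ℝ) ≤ n))
        simp only [ENNReal.mul_rpow_of_nonneg _ _ (inv_nonneg.2 (n.cast_nonneg : (0 : ℝ) ≤ n)),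
          ENNReal.pow_rpow_inv_natCast hn, hslice, ← ENNReal.rpow_natCast_mul] at hpow
        convert hpow using 3
        · push_cast
          field_simp
        · push_cast [Nat.one_le_iff_ne_zero.2 hn]
          field_simp
          ring
    _ = C ^ (n : ℝ)⁻¹ * (volume F * volume F' ^ n) := by
        rw [lintegral_const_mul' _ _ hroot, lintegral_simplexIntegral_slice hV, Fin.prod_univ_succ]
        simp only [V, Fin.cons_zero, Fin.cons_succ, Finset.prod_const, Finset.card_univ,
          Fintype.card_fin]

lemma two_rpow_mul_rpow_mul_two_rpow_mul_rpow {s t : ℝ} (hs : 0 ≤ s) (ht : 0 ≤ t) (x y : ℝ)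
    (u v : ℝ≥0∞) :
    (2 ^ x * u) ^ s * (2 ^ y * v) ^ t = 2 ^ (x * s + y * t) * (u ^ s * v ^ t) := by
  rw [ENNReal.mul_rpow_of_nonneg _ _ hs, ENNReal.mul_rpow_of_nonneg _ _ ht, ← ENNReal.rpow_mul,
    ← ENNReal.rpow_mul, two_rpow_add]
  ring

lemma exists_two_rpow_mul_lintegral_slice_le (hn : n ≠ 0) :
    ∃ C : ℝ≥0∞, C ≠ ⊤ ∧ ∀ F F' : Set (Pt n), MeasurableSet F → MeasurableSet F' → ∀ k m : ℝ,
      2 ^ ((2 * ((n : ℝ) * (n + 1)))⁻¹ * m) * ∫⁻ x, (2 ^ k * volume (slice F x)) ^ (1 + (n : ℝ)⁻¹) *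
        (2 ^ (k + m) * volume (slice F' x)) ^ ((n : ℝ) + 2 - (1 + (n : ℝ)⁻¹)) ≤
        C * (2 ^ (-((2 * ((n : ℝ) * (n + 1)))⁻¹ * m)) * (2 ^ (k * ((n + 2) / (n + 1))) * volume F *
          (2 ^ ((k + m) * ((n + 2) / (n + 1))) * volume F') ^ n)) := by
  obtain ⟨C, hC, hslice⟩ := exists_lintegral_volume_slice_mul_le hn
  refine ⟨C, hC, fun F F' hF hF' k m => ?_⟩
  have hn1 : (1 : ℝ) ≤ n := by exact_mod_cast Nat.one_le_iff_ne_zero.2 hn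
  have ht : 0 ≤ (n : ℝ) + 2 - (1 + (n : ℝ)⁻¹) := by linarith [inv_le_one_of_one_le₀ hn1]
  simp only [two_rpow_mul_rpow_mul_two_rpow_mul_rpow (by positivity : 0 ≤ 1 + (n : ℝ)⁻¹) ht]
  rw [lintegral_const_mul' _ _ (by finiteness), ← mul_assoc, ← two_rpow_add]
  refine (mul_le_mul_right (hslice F F' hF hF') _).trans_eq ?_
  have hexp : (2 * ((n : ℝ) * (n + 1)))⁻¹ * m +
      (k * (1 + (n : ℝ)⁻¹) + (k + m) * ((n : ℝ) + 2 - (1 + (n : ℝ)⁻¹))) =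
      -((2 * ((n : ℝ) * (n + 1)))⁻¹ * m) +
        (k * ((n + 2) / (n + 1)) + (k + m) * ((n + 2) / (n + 1)) * n) := by
    field_simp
    ring
  rw [hexp, two_rpow_add, two_rpow_add, ENNReal.rpow_mul_natCast, mul_pow]
  ring

lemma exists_lintegral_tsum_slice_rpow_le (hn : n ≠ 0) :
    ∃ C : ℝ≥0∞, C ≠ ⊤ ∧ ∀ F : ℤ → Set (Pt n), (∀ k, MeasurableSet (F k)) →
      ∫⁻ x, (∑' k : ℤ, 2 ^ (k : ℝ) * volume (slice (F k) x)) ^ ((n : ℝ) + 2) ≤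
        C * ∑' k : ℤ, (2 ^ (k * (((n : ℝ) + 2) / (n + 1))) * volume (F k)) ^ (n + 1) := by
  obtain ⟨C, hC, hpair⟩ := exists_two_rpow_mul_lintegral_slice_le hn
  set θ : ℝ := (2 * (n * (n + 1)))⁻¹
  set q : ℝ := n + 2
  set s : ℝ := 1 + (n : ℝ)⁻¹
  have hn1 : (1 : ℝ) ≤ n := by exact_mod_cast Nat.one_le_iff_ne_zero.2 hn
  have hq : 0 < q := by positivity
  have hsq : s ≤ q := by linarith [inv_le_one_of_one_le₀ hn1]
  have hκ := ENNReal.rpow_ne_top_of_nonneg hq.le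
    (dyadicConst_ne_top (show 0 < θ / q by positivity))
  have hθ := dyadicConst_ne_top (show 0 < θ by positivity)
  refine ⟨dyadicConst (θ / q) ^ q * (C * (2 * dyadicConst θ)), by finiteness, fun F hF => ?_⟩
  set u : ℤ → Pt n → ℝ≥0∞ := fun k x => 2 ^ (k : ℝ) * volume (slice (F k) x)
  set φ : ℤ → ℝ≥0∞ := fun k => 2 ^ (k * (q / (n + 1))) * volume (F k)
  calc ∫⁻ x, (∑' k : ℤ, u k x) ^ q
      ≤ dyadicConst (θ / q) ^ q *
          ∑' k, ∑' m : ℕ, 2 ^ (θ * m) * ∫⁻ x, u k x ^ s * u (k + m) x ^ (q - s) := by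
        have hu (k : ℤ) : Measurable (u k) := (measurable_volume_slice (hF k)).const_mul _
        simpa only [div_mul_cancel₀ θ hq.ne'] using
          lintegral_tsum_rpow_le (κ := θ / q) (by positivity) hsq hq hu
    _ ≤ dyadicConst (θ / q) ^ q *
          ∑' k, ∑' m : ℕ, C * (2 ^ (-(θ * m)) * (φ k * φ (k + m) ^ n)) := by
        refine mul_le_mul_right (ENNReal.tsum_le_tsum fun k => ENNReal.tsum_le_tsum fun m => ?_) _
        simpa only [u, φ, Int.cast_add, Int.cast_natCast] using hpair _ _ (hF k) (hF (k + m)) k m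
    _ ≤ dyadicConst (θ / q) ^ q * (C * (2 * dyadicConst θ * ∑' k, φ k ^ (n + 1))) := by
        simp only [ENNReal.tsum_mul_left]
        gcongr
        exact tsum_tsum_mul_pow_le θ φ n
    _ = _ := by ring

end LevelSets

/-! ### The incidence form -/

section IncidenceForm

variable {n : ℕ} {f g : Pt n → ℝ≥0∞} {E F : Set (Pt n)}

/-- The bilinear form of the incidence relation: the integral of `f(x) g(y)` over incident pairs
`(x, y)`. -/
def incidenceForm (f g : Pt n → ℝ≥0∞) : ℝ≥0∞ :=
  ∫⁻ z, f z.1 * g z.2 ∂incidenceMeasure n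

lemma incidenceForm_eq_lintegral (hf : Measurable f) (hg : Measurable g) :
    incidenceForm f g = ∫⁻ x, f x * ∫⁻ y', g (incidentPoint x y') := by
  rw [incidenceForm, lintegral_incidenceMeasure (by fun_prop)]
  exact lintegral_congr fun x => lintegral_const_mul (f x)
    (hg.comp (measurable_incidentPoint.comp measurable_prodMk_left))

lemma incidenceForm_comm (hf : Measurable f) (hg : Measurable g) :
    incidenceForm f g = incidenceForm g f := by
  rw [incidenceForm, ← measurePreserving_swap_incidenceMeasure.lintegral_comp (by fun_prop)]
  simp only [Prod.fst_swap, Prod.snd_swap, mul_comm, incidenceForm]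

lemma incidenceForm_mono {f' g' : Pt n → ℝ≥0∞} (hf : f ≤ f') (hg : g ≤ g') :
    incidenceForm f g ≤ incidenceForm f' g' :=
  lintegral_mono fun z => mul_le_mul' (hf z.1) (hg z.2)

lemma incidenceForm_const_mul (hf : Measurable f) (hg : Measurable g) (a b : ℝ≥0∞) :
    incidenceForm (fun x => a * f x) (fun y => b * g y) = a * b * incidenceForm f g := by
  rw [incidenceForm, incidenceForm, ← lintegral_const_mul _ (by fun_prop)]
  exact lintegral_congr fun z => mul_mul_mul_comm _ _ _ _

lemma incidenceForm_indicator_const (hE : MeasurableSet E) (hF : MeasurableSet F)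
    (s t : ℝ≥0∞) :
    incidenceForm (E.indicator fun _ => s) (F.indicator fun _ => t) =
      s * t * incidenceMeasure n (E ×ˢ F) := by
  rw [incidenceForm, ← lintegral_indicator_const (hE.prod hF)]
  refine lintegral_congr fun z => ?_
  by_cases hx : z.1 ∈ E <;> by_cases hy : z.2 ∈ F <;> simp [hx, hy]

lemma incidenceForm_tsum_right {ι : Type*} [Countable ι] {u : ι → Pt n → ℝ≥0∞}
    (hf : Measurable f) (hu : ∀ k, Measurable (u k)) :
    incidenceForm f (fun y => ∑' k, u k y) = ∑' k, incidenceForm f (u k) := by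
  simp only [incidenceForm, ← ENNReal.tsum_mul_left]
  refine lintegral_tsum fun k => ?_
  have := hu k
  fun_prop

lemma incidenceForm_indicator_const_right (hf : Measurable f) (hF : MeasurableSet F) (c : ℝ≥0∞) :
    incidenceForm f (F.indicator fun _ => c) = ∫⁻ x, f x * (c * volume (slice F x)) := by
  rw [incidenceForm_eq_lintegral hf (measurable_const.indicator hF)]
  refine lintegral_congr fun x => ?_
  rw [← lintegral_indicator_const (measurableSet_slice hF x)]
  rfl

lemma holderConjugate_add_two_div_add_one (n : ℕ) :
    (((n : ℝ) + 2) / (n + 1)).HolderConjugate (n + 2) := by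
  rw [Real.holderConjugate_iff, one_lt_div (by positivity)]
  refine ⟨by linarith, ?_⟩
  field_simp
  ring

lemma exists_tsum_incidenceForm_le (hn : n ≠ 0) :
    ∃ C : ℝ≥0∞, C ≠ ⊤ ∧ ∀ f : Pt n → ℝ≥0∞, Measurable f →
      ∀ F : ℤ → Set (Pt n), (∀ k, MeasurableSet (F k)) → ∀ η : ℝ≥0∞,
      (∀ k : ℤ, 2 ^ (k * (((n : ℝ) + 2) / (n + 1))) * volume (F k) ≤ η) →
      ∑' k : ℤ, incidenceForm f ((F k).indicator fun _ => (2 : ℝ≥0∞) ^ (k : ℝ)) ≤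
        C * LpN n (((n : ℝ) + 2) / (n + 1)) f *
          (η ^ n * ∑' k : ℤ, 2 ^ ((k : ℝ) * ((n + 2) / (n + 1))) * volume (F k)) ^
            ((n : ℝ) + 2)⁻¹ := by
  obtain ⟨C, hC, hlorentz⟩ := exists_lintegral_tsum_slice_rpow_le hn
  have hq : (0 : ℝ) ≤ ((n : ℝ) + 2)⁻¹ := by positivity
  refine ⟨C ^ ((n : ℝ) + 2)⁻¹, ENNReal.rpow_ne_top_of_nonneg hq hC, fun f hf F hF η hη => ?_⟩
  have hslice (k : ℤ) : Measurable fun x => (2 : ℝ≥0∞) ^ (k : ℝ) * volume (slice (F k) x) :=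
    (measurable_volume_slice (hF k)).const_mul _
  set p : ℝ := (n + 2) / (n + 1)
  have hpow : ∑' k : ℤ, (2 ^ (k * p) * volume (F k)) ^ (n + 1) ≤
      η ^ n * ∑' k : ℤ, 2 ^ (k * p) * volume (F k) := by
    rw [← ENNReal.tsum_mul_left]
    gcongr with k
    rw [pow_succ]
    gcongr
    exact hη k
  calc ∑' k : ℤ, incidenceForm f ((F k).indicator fun _ => (2 : ℝ≥0∞) ^ (k : ℝ))
      = ∫⁻ x, f x * ∑' k : ℤ, 2 ^ (k : ℝ) * volume (slice (F k) x) := by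
        simp_rw [incidenceForm_indicator_const_right hf (hF _), ← ENNReal.tsum_mul_left]
        exact (lintegral_tsum fun k => (hf.mul (hslice k)).aemeasurable).symm
    _ ≤ LpN n p f * (∫⁻ x, (∑' k : ℤ, 2 ^ (k : ℝ) * volume (slice (F k) x)) ^ ((n : ℝ) + 2)) ^
          ((n : ℝ) + 2)⁻¹ := by
        simpa only [LpN, p, one_div] using! ENNReal.lintegral_mul_le_Lp_mul_Lq volume
          (holderConjugate_add_two_div_add_one n) hf.aemeasurable
          (Measurable.tsum hslice).aemeasurable
    _ ≤ LpN n p f * (C * (η ^ n * ∑' k : ℤ, 2 ^ (k * p) * volume (F k))) ^ ((n : ℝ) + 2)⁻¹ := by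
        gcongr
        exact (hlorentz F hF).trans (by gcongr)
    _ = _ := by rw [ENNReal.mul_rpow_of_nonneg _ _ hq, mul_left_comm, ← mul_assoc]

lemma incidenceForm_le_two_mul_tsum (hf : Measurable f) (hg : Measurable g) :
    incidenceForm f g ≤
      2 * ∑' k : ℤ, incidenceForm f ((dyadicLevel g k).indicator fun _ => 2 ^ (k : ℝ)) := by
  have hlevel (k : ℤ) :
      Measurable ((dyadicLevel g k).indicator fun _ => (2 : ℝ≥0∞) ^ (k : ℝ)) :=
    measurable_const.indicator (measurableSet_dyadicLevel hg k)
  calc incidenceForm f g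
      ≤ incidenceForm (fun x => 1 * f x) fun y =>
          2 * ∑' k : ℤ, (dyadicLevel g k).indicator (fun _ => (2 : ℝ≥0∞) ^ (k : ℝ)) y :=
        incidenceForm_mono (fun x => (one_mul (f x)).ge) (le_two_mul_tsum_indicator_dyadicLevel g)
    _ = _ := by
        rw [incidenceForm_const_mul hf (Measurable.tsum hlevel), one_mul,
          incidenceForm_tsum_right hf hlevel]

end IncidenceForm

section Extraction

variable {n : ℕ}

open Classical in
lemma exists_tsum_incidenceForm_dyadicLevel_le (hn : n ≠ 0) :
    ∃ C : ℝ≥0∞, C ≠ ⊤ ∧ ∀ f g : Pt n → ℝ≥0∞, Measurable f → Measurable g →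
      ∫⁻ x, f x ^ (((n : ℝ) + 2) / (n + 1)) ≤ 1 → ∫⁻ x, g x ^ (((n : ℝ) + 2) / (n + 1)) ≤ 1 →
      ∀ η : ℝ≥0∞, ∑' k : ℤ,
        (if 2 ^ (k * (((n : ℝ) + 2) / (n + 1))) * volume (dyadicLevel g k) ≤ η then
          incidenceForm f ((dyadicLevel g k).indicator fun _ => 2 ^ (k : ℝ)) else 0) ≤
        C * (η ^ n) ^ ((n : ℝ) + 2)⁻¹ := by
  obtain ⟨C, hC, hsum⟩ := exists_tsum_incidenceForm_le hn
  set p : ℝ := (n + 2) / (n + 1)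
  have hp : 0 < p := by positivity
  have hq : (0 : ℝ) ≤ ((n : ℝ) + 2)⁻¹ := by positivity
  have hD := dyadicConst_ne_top hp
  refine ⟨C * dyadicConst p ^ ((n : ℝ) + 2)⁻¹, by finiteness, fun f g hf hg hf1 hg1 η => ?_⟩
  have hf_norm : LpN n p f ≤ 1 := ENNReal.rpow_le_one hf1 (by positivity)
  set F : ℤ → Set (Pt n) := fun k =>
    if 2 ^ (k * p) * volume (dyadicLevel g k) ≤ η then dyadicLevel g k else ∅
  have hF (k : ℤ) : MeasurableSet (F k) := by
    unfold F
    split_ifs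
    exacts [measurableSet_dyadicLevel hg k, .empty]
  have hFη (k : ℤ) : 2 ^ (k * p) * volume (F k) ≤ η := by
    unfold F
    split_ifs with h
    · exact h
    · simp only [measure_empty, mul_zero, zero_le]
  have hFg (k : ℤ) : F k ⊆ dyadicLevel g k := by
    unfold F
    split_ifs
    exacts [subset_rfl, Set.empty_subset _]
  calc _ = ∑' k : ℤ, incidenceForm f ((F k).indicator fun _ => 2 ^ (k : ℝ)) := by
        refine tsum_congr fun k => ?_
        unfold F
        split_ifs
        · rfl
        · simp only [incidenceForm, Set.indicator_empty, mul_zero, lintegral_zero]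
    _ ≤ C * LpN n p f * (η ^ n * ∑' k : ℤ, 2 ^ (k * p) * volume (F k)) ^ ((n : ℝ) + 2)⁻¹ :=
        hsum f hf F hF η hFη
    _ ≤ C * 1 * (η ^ n * dyadicConst p) ^ ((n : ℝ) + 2)⁻¹ := by
        gcongr
        calc ∑' k : ℤ, 2 ^ (k * p) * volume (F k)
            ≤ ∑' k : ℤ, 2 ^ (k * p) * volume (dyadicLevel g k) := by gcongr; exact hFg _
          _ ≤ dyadicConst p * ∫⁻ x, g x ^ p := tsum_two_rpow_mul_measure_dyadicLevel_le hp hg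
          _ ≤ dyadicConst p := mul_le_of_le_one_right' hg1
    _ = _ := by rw [ENNReal.mul_rpow_of_nonneg _ _ hq]; ring

lemma two_rpow_mul_measure_dyadicLevel_le {α : Type*} [MeasurableSpace α] {μ : Measure α} {p : ℝ}
    (hp : 0 ≤ p) {g : α → ℝ≥0∞} (hg : Measurable g) (k : ℤ) :
    2 ^ (k * p) * μ (dyadicLevel g k) ≤ ∫⁻ y, g y ^ p ∂μ := by
  rw [ENNReal.rpow_mul]
  refine (mul_le_mul_right (measure_mono fun y hy => ?_) _).trans
    (mul_meas_ge_le_lintegral (hg.pow_const p) _)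
  exact ENNReal.rpow_le_rpow hy hp

lemma exists_incidenceForm_le (hn : n ≠ 0) :
    ∃ D : ℝ, 1 ≤ D ∧ ∀ f g : Pt n → ℝ≥0∞, Measurable f → Measurable g →
      ∫⁻ x, f x ^ (((n : ℝ) + 2) / (n + 1)) ≤ 1 → ∫⁻ x, g x ^ (((n : ℝ) + 2) / (n + 1)) ≤ 1 →
      incidenceForm f g ≤ ENNReal.ofReal D := by
  obtain ⟨C, hC, hsum⟩ := exists_tsum_incidenceForm_dyadicLevel_le hn
  have hC2 : 2 * C ≠ ⊤ := by finiteness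
  refine ⟨max 1 (2 * C).toReal, le_max_left _ _, fun f g hf hg hf1 hg1 => ?_⟩
  have hlevel (k : ℤ) :
      2 ^ (k * (((n : ℝ) + 2) / (n + 1))) * volume (dyadicLevel g k) ≤ 1 :=
    (two_rpow_mul_measure_dyadicLevel_le (by positivity) hg k).trans hg1
  calc incidenceForm f g ≤ 2 * _ := incidenceForm_le_two_mul_tsum hf hg
    _ ≤ 2 * C := by
        gcongr
        simpa only [hlevel, if_true, one_pow, ENNReal.one_rpow, mul_one] using
          hsum f g hf hg hf1 hg1 1
    _ = ENNReal.ofReal (2 * C).toReal := (ENNReal.ofReal_toReal hC2).symm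
    _ ≤ _ := ENNReal.ofReal_le_ofReal (le_max_right _ _)

lemma le_ite_add_mul_of_le {η φ δ a : ℝ≥0∞} [Decidable (φ ≤ η)] (hη : η ≠ 0) (hη' : η ≠ ⊤)
    (haδ : a ≤ δ) : a ≤ (if φ ≤ η then a else 0) + δ / η * φ := by
  split_ifs with h
  · exact le_self_add
  · calc a ≤ δ / η * η := by rwa [ENNReal.div_mul_cancel hη hη']
      _ ≤ δ / η * φ := mul_le_mul_right (le_of_not_ge h) _
      _ ≤ _ := le_add_self

-- A level set with small mass `φ k` contributes little by the Lorentz bound; one with `φ k > η`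
-- contributes at most `δ ≤ (δ / η) φ k`, which is summable.
lemma exists_incidenceForm_le_of_dyadicLevel_le (hn : n ≠ 0) :
    ∃ C : ℝ≥0∞, C ≠ ⊤ ∧ ∀ f g : Pt n → ℝ≥0∞, Measurable f → Measurable g →
      ∫⁻ x, f x ^ (((n : ℝ) + 2) / (n + 1)) ≤ 1 → ∫⁻ x, g x ^ (((n : ℝ) + 2) / (n + 1)) ≤ 1 →
      ∀ η δ : ℝ≥0∞, η ≠ 0 → η ≠ ⊤ →
      (∀ k : ℤ, incidenceForm f ((dyadicLevel g k).indicator fun _ => 2 ^ (k : ℝ)) ≤ δ) →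
      incidenceForm f g ≤ C * ((η ^ n) ^ ((n : ℝ) + 2)⁻¹ + δ / η) := by
  classical
  obtain ⟨C, hC, hsum⟩ := exists_tsum_incidenceForm_dyadicLevel_le hn
  set p : ℝ := (n + 2) / (n + 1)
  have hp : 0 < p := by positivity
  have hD := dyadicConst_ne_top hp
  refine ⟨2 * (C + dyadicConst p), by finiteness, fun f g hf hg hf1 hg1 η δ hη hη' hδ => ?_⟩
  set a : ℤ → ℝ≥0∞ := fun k =>
    incidenceForm f ((dyadicLevel g k).indicator fun _ => 2 ^ (k : ℝ))
  set φ : ℤ → ℝ≥0∞ := fun k => 2 ^ (k * p) * volume (dyadicLevel g k)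
  have hφ : ∑' k, φ k ≤ dyadicConst p :=
    (tsum_two_rpow_mul_measure_dyadicLevel_le hp hg).trans (mul_le_of_le_one_right' hg1)
  calc incidenceForm f g
      ≤ 2 * ∑' k : ℤ, a k := incidenceForm_le_two_mul_tsum hf hg
    _ ≤ 2 * ∑' k : ℤ, ((if φ k ≤ η then a k else 0) + δ / η * φ k) := by
        gcongr with k
        exact le_ite_add_mul_of_le hη hη' (hδ k)
    _ ≤ 2 * (C * (η ^ n) ^ ((n : ℝ) + 2)⁻¹ + δ / η * dyadicConst p) := by
        rw [ENNReal.tsum_add, ENNReal.tsum_mul_left]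
        gcongr
        exact hsum f g hf hg hf1 hg1 η
    _ ≤ 2 * ((C + dyadicConst p) * ((η ^ n) ^ ((n : ℝ) + 2)⁻¹ + δ / η)) := by
        rw [mul_add (C + _), mul_comm (δ / η)]
        gcongr
        · exact le_self_add
        · exact le_add_self
    _ = _ := (mul_assoc _ _ _).symm

lemma exists_incidenceForm_le_mul_of_dyadicLevel_le (hn : n ≠ 0) :
    ∃ C : ℝ≥0∞, C ≠ ⊤ ∧ ∀ f g : Pt n → ℝ≥0∞, Measurable f → Measurable g →
      ∫⁻ x, f x ^ (((n : ℝ) + 2) / (n + 1)) ≤ 1 → ∫⁻ x, g x ^ (((n : ℝ) + 2) / (n + 1)) ≤ 1 →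
      ∀ τ : ℝ≥0∞, τ ≠ 0 → τ ≠ ⊤ →
      (∀ k : ℤ, incidenceForm f ((dyadicLevel g k).indicator fun _ => 2 ^ (k : ℝ)) ≤
        τ ^ (2 * ((n : ℝ) + 1) / n)) →
      incidenceForm f g ≤ C * τ := by
  obtain ⟨C, hC, hbound⟩ := exists_incidenceForm_le_of_dyadicLevel_le hn
  refine ⟨C * 2, by finiteness, fun f g hf hg hf1 hg1 τ h0 htop hle => ?_⟩
  refine (hbound f g hf hg hf1 hg1 (τ ^ (((n : ℝ) + 2) / n)) _
    (ENNReal.rpow_pos (pos_iff_ne_zero.2 h0) htop).ne' (by finiteness) hle).trans_eq ?_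
  have hn0 : (n : ℝ) ≠ 0 := Nat.cast_ne_zero.2 hn
  have hroot : ((n : ℝ) + 2) / n * n * ((n : ℝ) + 2)⁻¹ = 1 := by field_simp
  have hquot : 2 * ((n : ℝ) + 1) / n - (n + 2) / n = 1 := by
    field_simp
    ring
  rw [← ENNReal.rpow_mul_natCast, ← ENNReal.rpow_mul, hroot, ← ENNReal.rpow_sub _ _ h0 htop, hquot,
    ENNReal.rpow_one, ← two_mul, mul_assoc]

lemma exists_le_incidenceForm_dyadicLevel (hn : n ≠ 0) :
    ∃ c : ℝ, 0 < c ∧ ∀ f g : Pt n → ℝ≥0∞, Measurable f → Measurable g →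
      ∫⁻ x, f x ^ (((n : ℝ) + 2) / (n + 1)) ≤ 1 → ∫⁻ x, g x ^ (((n : ℝ) + 2) / (n + 1)) ≤ 1 →
      ∀ ε : ℝ, 0 < ε → ENNReal.ofReal ε ≤ incidenceForm f g →
      ∃ k : ℤ, ENNReal.ofReal (c * ε ^ (2 * ((n : ℝ) + 1) / n)) ≤
        incidenceForm f ((dyadicLevel g k).indicator fun _ => 2 ^ (k : ℝ)) := by
  obtain ⟨C, hC, hbound⟩ := exists_incidenceForm_le_mul_of_dyadicLevel_le hn
  set c := (C.toReal + 1)⁻¹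
  have hc : 0 < c := by positivity
  refine ⟨c ^ (2 * ((n : ℝ) + 1) / n), by positivity, fun f g hf hg hf1 hg1 ε hε hle => ?_⟩
  have hτ : 0 < c * ε := by positivity
  by_contra! hlt
  simp_rw [← Real.mul_rpow hc.le hε.le, ← ENNReal.ofReal_rpow_of_pos hτ] at hlt
  have hB := hbound f g hf hg hf1 hg1 _ (ENNReal.ofReal_pos.2 hτ).ne' ofReal_ne_top
    fun k => (hlt k).le
  rw [← ENNReal.ofReal_toReal hC, ← ENNReal.ofReal_mul ENNReal.toReal_nonneg] at hB
  refine (hle.trans hB).not_gt ((ENNReal.ofReal_lt_ofReal_iff hε).2 ?_)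
  calc C.toReal * (c * ε) < (C.toReal + 1) * (c * ε) := by gcongr; exact lt_add_one _
    _ = ε := mul_inv_cancel_left₀ (by positivity) ε

end Extraction

section SlabExtraction

variable {n : ℕ} {f g : Pt n → ℝ≥0∞} {E F : Set (Pt n)}

lemma indicator_dyadicLevel_le {α : Type*} (g : α → ℝ≥0∞) (k : ℤ) :
    (dyadicLevel g k).indicator (fun _ => (2 : ℝ≥0∞) ^ (k : ℝ)) ≤ g :=
  fun _ => Set.indicator_apply_le' id fun _ => zero_le

lemma two_rpow_mul_measure_dyadicLevel_prod_le (hf : Measurable f) (hg : Measurable g) (j k : ℤ) :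
    2 ^ (j : ℝ) * 2 ^ (k : ℝ) * incidenceMeasure n (dyadicLevel f j ×ˢ dyadicLevel g k) ≤
      incidenceForm f g := by
  rw [← incidenceForm_indicator_const (measurableSet_dyadicLevel hf j)
    (measurableSet_dyadicLevel hg k)]
  exact incidenceForm_mono (indicator_dyadicLevel_le f j) (indicator_dyadicLevel_le g k)

lemma exists_le_measure_dyadicLevel_prod (hn : n ≠ 0) :
    ∃ c A : ℝ, 0 < c ∧ 0 < A ∧ ∀ f g : Pt n → ℝ≥0∞, Measurable f → Measurable g →
      ∫⁻ x, f x ^ (((n : ℝ) + 2) / (n + 1)) ≤ 1 → ∫⁻ x, g x ^ (((n : ℝ) + 2) / (n + 1)) ≤ 1 →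
      ∀ ε : ℝ, 0 < ε → ENNReal.ofReal ε ≤ incidenceForm f g →
      ∃ j k : ℤ, ENNReal.ofReal (c * ε ^ A) ≤
        2 ^ (j : ℝ) * 2 ^ (k : ℝ) * incidenceMeasure n (dyadicLevel f j ×ˢ dyadicLevel g k) := by
  obtain ⟨c, hc, hextract⟩ := exists_le_incidenceForm_dyadicLevel hn
  set a : ℝ := 2 * (n + 1) / n
  have : 0 < a := by positivity
  refine ⟨c * c ^ a, a * a, by positivity, by positivity, fun f g hf hg hf1 hg1 ε hε hle => ?_⟩
  obtain ⟨k, hk⟩ := hextract f g hf hg hf1 hg1 ε hε hle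
  have hmeas : Measurable ((dyadicLevel g k).indicator fun _ => (2 : ℝ≥0∞) ^ (k : ℝ)) :=
    measurable_const.indicator (measurableSet_dyadicLevel hg k)
  rw [incidenceForm_comm hf hmeas] at hk
  have hnorm : ∫⁻ x, (dyadicLevel g k).indicator (fun _ => (2 : ℝ≥0∞) ^ (k : ℝ)) x ^
      (((n : ℝ) + 2) / (n + 1)) ≤ 1 := by
    refine (lintegral_mono fun x => ?_).trans hg1
    gcongr
    exact indicator_dyadicLevel_le g k x
  obtain ⟨j, hj⟩ := hextract _ f hmeas hf hnorm hf1 _ (by positivity) hk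
  refine ⟨j, k, ?_⟩
  have hE := measurableSet_dyadicLevel hf j
  have hF := measurableSet_dyadicLevel hg k
  rw [incidenceForm_indicator_const hF hE, Real.mul_rpow hc.le (by positivity),
    ← Real.rpow_mul hε.le, ← mul_assoc] at hj
  rwa [mul_comm (2 ^ (j : ℝ)), incidenceMeasure_prod_comm hE hF]

lemma volume_ne_zero_of_incidenceMeasure_prod_ne_zero (hE : MeasurableSet E)
    (hF : MeasurableSet F) (h : incidenceMeasure n (E ×ˢ F) ≠ 0) : volume E ≠ 0 := by
  contrapose! h
  rw [incidenceMeasure_prod hE hF, Measure.restrict_eq_zero.2 h, lintegral_zero_measure]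

lemma isQuasiextremal_of_volume_eq {e v T K : ℝ} (hE : MeasurableSet E) (hF : MeasurableSet F)
    (he : 0 < e) (hv : 0 < v) (hT : 0 < T) (hK : 1 ≤ K) (hEe : volume E = ENNReal.ofReal e)
    (hFv : volume F = ENNReal.ofReal v) (hEFT : incidenceMeasure n (E ×ˢ F) = ENNReal.ofReal T)
    (hpow : (e * v) ^ (n + 1) ≤ K * T ^ (n + 2)) :
    IsQuasiextremal E F (T / e) (T / v) (e * v / T) K where
  measurableSet_left := hE
  measurableSet_right := hF
  α_pos := by positivity
  β_pos := by positivity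
  ρ_pos := by positivity
  one_le := hK
  volume_left := by rw [hEe]; congr 1; field_simp
  volume_right := by rw [hFv]; congr 1; field_simp
  measure_prod := by rw [hEFT]; congr 1; field_simp
  pow_le := by
    rw [div_pow, div_le_iff₀ (by positivity), div_mul_div_comm, ← mul_div_assoc, div_mul_eq_mul_div,
      le_div_iff₀ (by positivity)]
    exact hpow.trans_eq (by ring)

lemma mul_pow_le_inv_pow_mul_pow {s t e v T δ : ℝ} (ht : 0 ≤ t) (he : 0 ≤ e) (hv : 0 ≤ v)
    (hT : 0 ≤ T) (hδ : 0 < δ) (hse : s ^ (n + 2) * e ^ (n + 1) ≤ 1)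
    (htv : t ^ (n + 2) * v ^ (n + 1) ≤ 1) (hδT : δ ≤ s * t * T) :
    (e * v) ^ (n + 1) ≤ (δ ^ (n + 2))⁻¹ * T ^ (n + 2) := by
  rw [le_inv_mul_iff₀ (by positivity)]
  calc δ ^ (n + 2) * (e * v) ^ (n + 1) ≤ (s * t * T) ^ (n + 2) * (e * v) ^ (n + 1) := by gcongr
    _ = (s ^ (n + 2) * e ^ (n + 1)) * (t ^ (n + 2) * v ^ (n + 1)) * T ^ (n + 2) := by ring
    _ ≤ 1 * 1 * T ^ (n + 2) := by gcongr
    _ = T ^ (n + 2) := by ring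

lemma exists_pos_volume_eq_ofReal {s : ℝ} (hs : 0 < s) (h0 : volume E ≠ 0)
    (h : ENNReal.ofReal s ^ (n + 2) * volume E ^ (n + 1) ≤ 1) :
    ∃ e : ℝ, 0 < e ∧ volume E = ENNReal.ofReal e ∧ s ^ (n + 2) * e ^ (n + 1) ≤ 1 := by
  have htop : volume E ≠ ⊤ := fun htop => by
    rw [htop, ENNReal.top_pow n.succ_ne_zero, ENNReal.mul_top
      (pow_ne_zero _ (ENNReal.ofReal_pos.2 hs).ne')] at h
    exact (h.trans_lt one_lt_top).false
  refine ⟨(volume E).toReal, ENNReal.toReal_pos h0 htop, (ENNReal.ofReal_toReal htop).symm, ?_⟩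
  rwa [← ENNReal.ofReal_toReal htop, ← ENNReal.ofReal_pow hs.le,
    ← ENNReal.ofReal_pow ENNReal.toReal_nonneg, ← ENNReal.ofReal_mul (by positivity),
    ENNReal.ofReal_le_one] at h

lemma exists_isQuasiextremal {s t δ : ℝ} (hE : MeasurableSet E) (hF : MeasurableSet F)
    (hs : 0 < s) (ht : 0 < t) (hδ : 0 < δ) (hδ1 : δ ≤ 1)
    (hsE : ENNReal.ofReal s ^ (n + 2) * volume E ^ (n + 1) ≤ 1)
    (htF : ENNReal.ofReal t ^ (n + 2) * volume F ^ (n + 1) ≤ 1)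
    (hfin : incidenceMeasure n (E ×ˢ F) ≠ ⊤)
    (hle : ENNReal.ofReal δ ≤ ENNReal.ofReal (s * t) * incidenceMeasure n (E ×ˢ F)) :
    ∃ α β ρ, IsQuasiextremal E F α β ρ (δ ^ (n + 2))⁻¹ := by
  have hne : incidenceMeasure n (E ×ˢ F) ≠ 0 := fun h => by
    rw [h, mul_zero] at hle
    exact (ENNReal.ofReal_pos.2 hδ).not_ge hle
  obtain ⟨e, he, hEe, hse⟩ := exists_pos_volume_eq_ofReal hs
    (volume_ne_zero_of_incidenceMeasure_prod_ne_zero hE hF hne) hsE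
  obtain ⟨v, hv, hFv, htv⟩ := exists_pos_volume_eq_ofReal ht
    (volume_ne_zero_of_incidenceMeasure_prod_ne_zero hF hE
      (incidenceMeasure_prod_comm hE hF ▸ hne)) htF
  obtain ⟨T, hT, hEFT⟩ : ∃ T : ℝ, 0 < T ∧ incidenceMeasure n (E ×ˢ F) = ENNReal.ofReal T :=
    ⟨_, ENNReal.toReal_pos hne hfin, (ENNReal.ofReal_toReal hfin).symm⟩
  rw [hEFT, ← ENNReal.ofReal_mul (by positivity),
    ENNReal.ofReal_le_ofReal_iff (by positivity)] at hle
  exact ⟨_, _, _, isQuasiextremal_of_volume_eq hE hF he hv hT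
    ((one_le_inv₀ (by positivity)).2 (pow_le_one₀ hδ.le hδ1)) hEe hFv hEFT
    (mul_pow_le_inv_pow_mul_pow ht.le he.le hv.le hT.le hδ hse htv hle)⟩

end SlabExtraction

/-! ### Cores of quasiextremal pairs of functions -/

section SlabCore

variable {n : ℕ}

/-- `HasSlabCore f g m` says that `f ≥ s χ_E` and `g ≥ t χ_F` for sets `E`, `F` at least as large
as the two slabs of some slab pair, and that `s χ_E` and `t χ_F`, restricted to these slabs, have
incidence form at least `m`. -/
def HasSlabCore (f g : Pt n → ℝ≥0∞) (m : ℝ≥0∞) : Prop :=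
  ∃ (E F : Set (Pt n)) (s t : ℝ) (w : Pt n × Pt n) (b : OrthonormalBasis (Fin n) ℝ (Vec n))
    (r rs : Fin n → ℝ) (ρ : ℝ),
    MeasurableSet E ∧ MeasurableSet F ∧ 0 < s ∧ 0 < t ∧ IsSlabPair w r rs ρ ∧
    (∀ x ∈ E, ENNReal.ofReal s ≤ f x) ∧ (∀ y ∈ F, ENNReal.ofReal t ≤ g y) ∧
    volume (slab b w.1 w.2 r (ρ / 2)) ≤ volume E ∧ volume (slab b w.2 w.1 rs (ρ / 2)) ≤ volume F ∧
    m ≤ ENNReal.ofReal (s * t) * incidenceMeasure n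
      ((E ∩ slab b w.1 w.2 r (ρ / 2)) ×ˢ (F ∩ slab b w.2 w.1 rs (ρ / 2)))

lemma exists_hasSlabCore_indicator (hn : n ≠ 0) :
    ∃ (c : ℝ) (m : ℕ), 0 < c ∧ 0 < m ∧ ∀ (E F : Set (Pt n)) (s t δ : ℝ),
      MeasurableSet E → MeasurableSet F → 0 < s → 0 < t → 0 < δ → δ ≤ 1 →
      ENNReal.ofReal s ^ (n + 2) * volume E ^ (n + 1) ≤ 1 →
      ENNReal.ofReal t ^ (n + 2) * volume F ^ (n + 1) ≤ 1 →
      incidenceMeasure n (E ×ˢ F) ≠ ⊤ →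
      ENNReal.ofReal δ ≤ ENNReal.ofReal (s * t) * incidenceMeasure n (E ×ˢ F) →
      HasSlabCore (E.indicator fun _ => ENNReal.ofReal s) (F.indicator fun _ => ENNReal.ofReal t)
        (ENNReal.ofReal (c * δ ^ m)) := by
  set N := 5 + (4 * n + 6) * (2 * n + 1)
  have hconst : 0 < localizationConst n := one_pos.trans_le (one_le_localizationConst hn)
  refine ⟨(localizationConst n ^ N)⁻¹, (n + 2) * n * N + 1, by positivity, by positivity,
    fun E F s t δ hE hF hs ht hδ hδ1 hsE htF hfin hle => ?_⟩
  obtain ⟨α, β, ρ, h⟩ := exists_isQuasiextremal hE hF hs ht hδ hδ1 hsE htF hfin hle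
  obtain ⟨w, b, r, rs, ρ, hw, hE', hF', hloc⟩ := h.exists_slab_pair hn
  refine ⟨E, F, s, t, w, b, r, rs, ρ, hE, hF, hs, ht, hw,
    fun x hx => (Set.indicator_of_mem hx fun _ => _).ge,
    fun y hy => (Set.indicator_of_mem hy fun _ => _).ge, hE', hF', ?_⟩
  set T := incidenceMeasure n ((E ∩ slab b w.1 w.2 r (ρ / 2)) ×ˢ (F ∩ slab b w.2 w.1 rs (ρ / 2)))
  set L := (localizationConst n * (δ ^ (n + 2))⁻¹ ^ n) ^ N
  have hL : 0 < L := by positivity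
  calc ENNReal.ofReal ((localizationConst n ^ N)⁻¹ * δ ^ ((n + 2) * n * N + 1))
      = ENNReal.ofReal L⁻¹ * ENNReal.ofReal δ := by
        rw [← ENNReal.ofReal_mul (by positivity), pow_succ]
        simp only [L, mul_pow, mul_inv, inv_pow, inv_inv, ← pow_mul, mul_assoc]
    _ ≤ ENNReal.ofReal L⁻¹ * (ENNReal.ofReal (s * t) * (ENNReal.ofReal L * T)) := by
        gcongr
        exact hle.trans (by gcongr)
    _ = ENNReal.ofReal (s * t) * T := by
        rw [mul_left_comm, ← mul_assoc (ENNReal.ofReal L⁻¹), ← ENNReal.ofReal_mul (by positivity),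
          inv_mul_cancel₀ hL.ne', ENNReal.ofReal_one, one_mul]

lemma HasSlabCore.mono {f f' g g' : Pt n → ℝ≥0∞} {m m' : ℝ≥0∞} (h : HasSlabCore f g m)
    (hf : f ≤ f') (hg : g ≤ g') (hm : m' ≤ m) : HasSlabCore f' g' m' := by
  obtain ⟨E, F, s, t, w, b, r, rs, ρ, hE, hF, hs, ht, hw, hfE, hgF, hEvol, hFvol, hle⟩ := h
  exact ⟨E, F, s, t, w, b, r, rs, ρ, hE, hF, hs, ht, hw, fun x hx => (hfE x hx).trans (hf x),
    fun y hy => (hgF y hy).trans (hg y), hEvol, hFvol, hm.trans hle⟩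

lemma HasSlabCore.const_mul {f g : Pt n → ℝ≥0∞} {m : ℝ≥0∞} {a b : ℝ} (h : HasSlabCore f g m)
    (ha : 0 < a) (hb : 0 < b) :
    HasSlabCore (fun x => ENNReal.ofReal a * f x) (fun y => ENNReal.ofReal b * g y)
      (ENNReal.ofReal a * ENNReal.ofReal b * m) := by
  obtain ⟨E, F, s, t, w, e, r, rs, ρ, hE, hF, hs, ht, hw, hfE, hgF, hEvol, hFvol, hle⟩ := h
  refine ⟨E, F, a * s, b * t, w, e, r, rs, ρ, hE, hF, by positivity, by positivity, hw,
    fun x hx => ?_, fun y hy => ?_, hEvol, hFvol, ?_⟩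
  · rw [ENNReal.ofReal_mul ha.le]
    exact mul_le_mul_right (hfE x hx) _
  · rw [ENNReal.ofReal_mul hb.le]
    exact mul_le_mul_right (hgF y hy) _
  · rw [mul_mul_mul_comm, ENNReal.ofReal_mul (by positivity), ENNReal.ofReal_mul ha.le,
      mul_assoc (_ * _) (ENNReal.ofReal (s * t))]
    exact mul_le_mul_right hle _

lemma ofReal_two_rpow (x : ℝ) : ENNReal.ofReal (2 ^ x) = 2 ^ x := by
  rw [← ENNReal.ofReal_rpow_of_pos two_pos, ENNReal.ofReal_ofNat]

lemma two_rpow_pow_mul_volume_dyadicLevel_pow_le {f : Pt n → ℝ≥0∞} (hf : Measurable f)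
    (hf1 : ∫⁻ x, f x ^ (((n : ℝ) + 2) / (n + 1)) ≤ 1) (k : ℤ) :
    (2 ^ (k : ℝ)) ^ (n + 2) * volume (dyadicLevel f k) ^ (n + 1) ≤ 1 := by
  have hle := (two_rpow_mul_measure_dyadicLevel_le (by positivity) hf k).trans hf1
  refine le_trans (le_of_eq ?_) (pow_le_one₀ zero_le hle (n := n + 1))
  rw [mul_pow, ← ENNReal.rpow_mul_natCast, ← ENNReal.rpow_mul_natCast, mul_assoc]
  congr 3
  push_cast
  field_simp

lemma exists_hasSlabCore_of_lintegral_rpow_le_one (hn : n ≠ 0) :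
    ∃ c A : ℝ, 0 < c ∧ 0 < A ∧ ∀ f g : Pt n → ℝ≥0∞, Measurable f → Measurable g →
      ∫⁻ x, f x ^ (((n : ℝ) + 2) / (n + 1)) ≤ 1 → ∫⁻ x, g x ^ (((n : ℝ) + 2) / (n + 1)) ≤ 1 →
      ∀ ε : ℝ, 0 < ε → ENNReal.ofReal ε ≤ incidenceForm f g →
      HasSlabCore f g (ENNReal.ofReal (c * ε ^ A) * incidenceForm f g) := by
  obtain ⟨c, A, hc, hA, hlevel⟩ := exists_le_measure_dyadicLevel_prod hn
  obtain ⟨c', m, hc', hm, hcore⟩ := exists_hasSlabCore_indicator hn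
  obtain ⟨D, hD1, hbound⟩ := exists_incidenceForm_le hn
  have hD : 0 < D := one_pos.trans_le hD1
  refine ⟨c' * (c / D) ^ m / D, A * m, by positivity, by positivity,
    fun f g hf hg hf1 hg1 ε hε hle => ?_⟩
  have hform := hbound f g hf hg hf1 hg1
  obtain ⟨j, k, hjk⟩ := hlevel f g hf hg hf1 hg1 ε hε hle
  have hpair := (two_rpow_mul_measure_dyadicLevel_prod_le hf hg j k).trans hform
  have hfin : incidenceMeasure n (dyadicLevel f j ×ˢ dyadicLevel g k) ≠ ⊤ := fun htop => by
    rw [htop, ENNReal.mul_top (by positivity)] at hpair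
    exact ofReal_ne_top (top_le_iff.1 hpair)
  have hδ1 : c * ε ^ A / D ≤ 1 :=
    (div_le_one hD).2 ((ENNReal.ofReal_le_ofReal_iff hD.le).1 (hjk.trans hpair))
  have hδ := (ENNReal.ofReal_le_ofReal (div_le_self (by positivity) hD1)).trans hjk
  rw [← ofReal_two_rpow, ← ofReal_two_rpow, ← ENNReal.ofReal_mul (by positivity)] at hδ
  have hindicator := hcore (dyadicLevel f j) (dyadicLevel g k) (2 ^ (j : ℝ)) (2 ^ (k : ℝ))
    (c * ε ^ A / D) (measurableSet_dyadicLevel hf j) (measurableSet_dyadicLevel hg k)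
    (by positivity) (by positivity) (by positivity) hδ1
    (ofReal_two_rpow j ▸ two_rpow_pow_mul_volume_dyadicLevel_pow_le hf hf1 j)
    (ofReal_two_rpow k ▸ two_rpow_pow_mul_volume_dyadicLevel_pow_le hg hg1 k) hfin hδ
  rw [ofReal_two_rpow, ofReal_two_rpow] at hindicator
  refine hindicator.mono (indicator_dyadicLevel_le f j) (indicator_dyadicLevel_le g k) ?_
  calc ENNReal.ofReal (c' * (c / D) ^ m / D * ε ^ (A * m)) * incidenceForm f g
      ≤ ENNReal.ofReal (c' * (c / D) ^ m / D * ε ^ (A * m)) * ENNReal.ofReal D := by gcongr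
    _ = ENNReal.ofReal (c' * (c * ε ^ A / D) ^ m) := by
        rw [← ENNReal.ofReal_mul (by positivity), Real.rpow_mul_natCast hε.le, mul_div_right_comm c,
          mul_pow, div_mul_eq_mul_div, div_mul_cancel₀ _ hD.ne', mul_assoc]

end SlabCore

section Normalization

variable {n : ℕ}

lemma lintegral_inv_LpN_mul_rpow {p : ℝ} (hp : 0 < p) {f : Pt n → ℝ≥0∞} (hf : Measurable f)
    (h0 : LpN n p f ≠ 0) (htop : LpN n p f ≠ ⊤) :
    ∫⁻ x, ((LpN n p f)⁻¹ * f x) ^ p = 1 := by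
  have hpow : ∫⁻ x, f x ^ p = LpN n p f ^ p := by
    rw [LpN, ← ENNReal.rpow_mul, one_div_mul_cancel hp.ne', ENNReal.rpow_one]
  simp_rw [ENNReal.mul_rpow_of_nonneg _ _ hp.le]
  rw [lintegral_const_mul _ (hf.pow_const p), hpow, ← ENNReal.mul_rpow_of_nonneg _ _ hp.le,
    ENNReal.inv_mul_cancel h0 htop, ENNReal.one_rpow]

lemma exists_hasSlabCore (hn : n ≠ 0) :
    ∃ c A : ℝ, 0 < c ∧ 0 < A ∧ ∀ f g : Pt n → ℝ≥0∞, Measurable f → Measurable g →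
      LpN n (((n : ℝ) + 2) / (n + 1)) f ≠ 0 → LpN n (((n : ℝ) + 2) / (n + 1)) f ≠ ⊤ →
      LpN n (((n : ℝ) + 2) / (n + 1)) g ≠ 0 → LpN n (((n : ℝ) + 2) / (n + 1)) g ≠ ⊤ →
      ∀ ε : ℝ, 0 < ε →
      ENNReal.ofReal ε * (LpN n (((n : ℝ) + 2) / (n + 1)) f * LpN n (((n : ℝ) + 2) / (n + 1)) g) ≤
        incidenceForm f g →
      HasSlabCore f g (ENNReal.ofReal (c * ε ^ A) * incidenceForm f g) := by
  obtain ⟨c, A, hc, hA, hcore⟩ := exists_hasSlabCore_of_lintegral_rpow_le_one hn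
  refine ⟨c, A, hc, hA, fun f g hf hg hf0 hf_top hg0 hg_top ε hε hle => ?_⟩
  set p : ℝ := (n + 2) / (n + 1)
  have hp : 0 < p := by positivity
  set a := LpN n p f
  set b := LpN n p g
  have hform : incidenceForm f g =
      a * b * incidenceForm (fun x => a⁻¹ * f x) (fun y => b⁻¹ * g y) := by
    rw [incidenceForm_const_mul hf hg, ← mul_assoc, mul_mul_mul_comm,
      ENNReal.mul_inv_cancel hf0 hf_top, ENNReal.mul_inv_cancel hg0 hg_top, one_mul, one_mul]
  have hnormalized := hcore _ _ (hf.const_mul a⁻¹) (hg.const_mul b⁻¹)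
    (lintegral_inv_LpN_mul_rpow hp hf hf0 hf_top).le
    (lintegral_inv_LpN_mul_rpow hp hg hg0 hg_top).le ε hε (by
      rwa [hform, mul_comm, ENNReal.mul_le_mul_iff_right (mul_ne_zero hf0 hg0) (by finiteness)]
        at hle)
  refine (hnormalized.const_mul (ENNReal.toReal_pos hf0 hf_top)
    (ENNReal.toReal_pos hg0 hg_top)).mono (fun x => ?_) (fun y => ?_) ?_
  · rw [ENNReal.ofReal_toReal hf_top]
    exact (ENNReal.mul_inv_cancel_left hf0 hf_top).le
  · rw [ENNReal.ofReal_toReal hg_top]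
    exact (ENNReal.mul_inv_cancel_left hg0 hg_top).le
  · rw [ENNReal.ofReal_toReal hf_top, ENNReal.ofReal_toReal hg_top, hform, mul_left_comm]

end Normalization

/-! ### The parabolic chart -/

section ParabolicChart

variable {n : ℕ} {f g : Pt n → ℝ≥0∞}

/-- The coordinates in which the relation `y_d = x_d - |y' - x'|²` becomes `u + v = ⟨x', y'⟩`: the
sign `σ` is `-1` for the points `x` and `1` for the points `y`. -/
def parabolicChart (n : ℕ) (σ : ℤˣ) : Pt n ≃ᵐ Pt n where
  toFun w := (w.1, σ * (2 * w.2 - ‖w.1‖ ^ 2))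
  invFun x := (x.1, (‖x.1‖ ^ 2 + σ * x.2) / 2)
  left_inv w := by
    refine Prod.ext rfl ?_
    rcases Int.units_eq_one_or σ with rfl | rfl <;> push_cast <;> ring
  right_inv x := by
    refine Prod.ext rfl ?_
    rcases Int.units_eq_one_or σ with rfl | rfl <;> push_cast <;> ring
  measurable_toFun := by
    dsimp only [Equiv.coe_fn_mk]
    fun_prop
  measurable_invFun := by
    dsimp only [Equiv.coe_fn_symm_mk]
    fun_prop

lemma parabolicChart_apply (σ : ℤˣ) (w : Pt n) :
    parabolicChart n σ w = (w.1, σ * (2 * w.2 - ‖w.1‖ ^ 2)) := rfl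

lemma lintegral_comp_mul_add {h : ℝ → ℝ≥0∞} (hh : Measurable h) {a : ℝ} (ha : a ≠ 0) (b : ℝ) :
    ∫⁻ u, h (a * u + b) = ENNReal.ofReal |a⁻¹| * ∫⁻ u, h u := by
  rw [← lintegral_map (f := fun u => h (u + b)) (by fun_prop) (measurable_const_mul a),
    Real.map_volume_mul_left ha, lintegral_smul_measure, lintegral_add_right_eq_self, smul_eq_mul]

lemma lintegral_comp_parabolicChart (hf : Measurable f) (σ : ℤˣ) :
    ∫⁻ w, f (parabolicChart n σ w) = 2⁻¹ * ∫⁻ x, f x := by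
  have hσ : |(2 * (σ : ℝ))⁻¹| = 2⁻¹ := by
    rcases Int.units_eq_one_or σ with rfl | rfl <;> norm_num
  have hσ0 : 2 * (σ : ℝ) ≠ 0 := by
    rcases Int.units_eq_one_or σ with rfl | rfl <;> norm_num
  rw [Measure.volume_eq_prod, lintegral_prod _ (by fun_prop), lintegral_prod _ hf.aemeasurable,
    ← lintegral_const_mul _ hf.lintegral_prod_right']
  refine lintegral_congr fun x' => ?_
  calc ∫⁻ u, f (x', σ * (2 * u - ‖x'‖ ^ 2))
      = ∫⁻ u, f (x', 2 * σ * u + -σ * ‖x'‖ ^ 2) := by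
        refine lintegral_congr fun u => ?_
        congr 2
        ring
    _ = _ := by
        rw [lintegral_comp_mul_add (h := fun u => f (x', u)) (by fun_prop) hσ0, hσ,
          ENNReal.ofReal_inv_of_pos two_pos, ENNReal.ofReal_ofNat]

lemma volume_eq_two_mul_volume_preimage_parabolicChart {S : Set (Pt n)} (hS : MeasurableSet S)
    (σ : ℤˣ) : volume S = 2 * volume (parabolicChart n σ ⁻¹' S) := by
  have hvol := lintegral_comp_parabolicChart (measurable_one.indicator hS) σ
  rw [lintegral_indicator_one hS] at hvol
  rw [← lintegral_indicator_one ((parabolicChart n σ).measurable hS)]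
  exact ((congrArg (2 * ·) hvol).trans
    (ENNReal.mul_inv_cancel_left two_ne_zero ofNat_ne_top)).symm

lemma LpN_comp_parabolicChart {p : ℝ} (hp : 0 ≤ p) (hf : Measurable f) (σ : ℤˣ) :
    LpN n p (f ∘ parabolicChart n σ) = 2⁻¹ ^ (1 / p) * LpN n p f := by
  rw [LpN, LpN, ← ENNReal.mul_rpow_of_nonneg _ _ (by positivity),
    ← lintegral_comp_parabolicChart (hf.pow_const p) σ]
  rfl

lemma LpN_comp_parabolicChart_ne_zero {p : ℝ} (hp : 0 ≤ p) (hf : Measurable f)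
    (h : LpN n p f ≠ 0) (σ : ℤˣ) : LpN n p (f ∘ parabolicChart n σ) ≠ 0 := by
  rw [LpN_comp_parabolicChart hp hf]
  exact mul_ne_zero (ENNReal.rpow_pos (by norm_num) (by norm_num)).ne' h

lemma LpN_comp_parabolicChart_ne_top {p : ℝ} (hp : 0 ≤ p) (hf : Measurable f)
    (h : LpN n p f ≠ ⊤) (σ : ℤˣ) : LpN n p (f ∘ parabolicChart n σ) ≠ ⊤ := by
  rw [LpN_comp_parabolicChart hp hf]
  finiteness

lemma two_mul_LpN_comp_parabolicChart_mul_le {p : ℝ} (hp : 0 < p) (hp2 : p ≤ 2)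
    (hf : Measurable f) (hg : Measurable g) (σ τ : ℤˣ) :
    2 * (LpN n p (f ∘ parabolicChart n σ) * LpN n p (g ∘ parabolicChart n τ)) ≤
      LpN n p f * LpN n p g := by
  have hpow : (2⁻¹ : ℝ≥0∞) ^ (1 / p) * 2⁻¹ ^ (1 / p) ≤ 2⁻¹ := by
    rw [← ENNReal.rpow_add_of_nonneg _ _ (by positivity) (by positivity)]
    refine ENNReal.rpow_le_self_of_le_one (by norm_num) ?_
    rw [← add_div, one_add_one_eq_two]
    exact (one_le_div hp).2 hp2
  rw [LpN_comp_parabolicChart hp.le hf, LpN_comp_parabolicChart hp.le hg, mul_mul_mul_comm,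
    ← mul_assoc]
  refine mul_le_of_le_one_left' ?_
  calc (2 : ℝ≥0∞) * (2⁻¹ ^ (1 / p) * 2⁻¹ ^ (1 / p)) ≤ 2 * 2⁻¹ := by gcongr
    _ = 1 := ENNReal.mul_inv_cancel two_ne_zero ofNat_ne_top

lemma parabolicChart_incidentPoint (w : Pt n) (y' : Vec n) :
    parabolicChart n 1 (incidentPoint w y') =
      ((parabolicChart n (-1) w).1 - (w.1 - y'),
        (parabolicChart n (-1) w).2 - ‖w.1 - y'‖ ^ 2) := by
  refine Prod.ext (_root_.sub_sub_cancel _ _).symm ?_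
  simp only [parabolicChart_apply, incidentPoint, norm_sub_sq_real]
  push_cast
  ring

lemma radonT_parabolicChart (w : Pt n) :
    radonT n g (parabolicChart n (-1) w) =
      ∫⁻ y', g (parabolicChart n 1 (incidentPoint w y')) := by
  simp_rw [parabolicChart_incidentPoint]
  exact (lintegral_sub_left_eq_self _ w.1).symm

lemma measurable_radonT (hg : Measurable g) : Measurable (radonT n g) := by
  unfold radonT
  refine Measurable.lintegral_prod_right' (f := fun p : Pt n × Vec n =>
    g (p.1.1 - p.2, p.1.2 - ‖p.2‖ ^ 2)) ?_
  exact hg.comp (by fun_prop)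

lemma pairT_eq_two_mul_incidenceForm (hf : Measurable f) (hg : Measurable g) :
    pairT n f g =
      2 * incidenceForm (f ∘ parabolicChart n (-1)) (g ∘ parabolicChart n 1) := by
  rw [incidenceForm_eq_lintegral (by fun_prop) (by fun_prop)]
  simp only [Function.comp_apply, ← radonT_parabolicChart]
  rw [lintegral_comp_parabolicChart (f := fun x => f x * radonT n g x)
    (hf.mul (measurable_radonT hg)),
    ENNReal.mul_inv_cancel_left two_ne_zero ofNat_ne_top, pairT]

lemma mul_LpN_le_incidenceForm_comp_parabolicChart {p : ℝ} (hp : 0 < p) (hp2 : p ≤ 2)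
    (hf : Measurable f) (hg : Measurable g) {ε : ℝ≥0∞}
    (h : ε * (LpN n p f * LpN n p g) ≤ pairT n f g) :
    ε * (LpN n p (f ∘ parabolicChart n (-1)) * LpN n p (g ∘ parabolicChart n 1)) ≤
      incidenceForm (f ∘ parabolicChart n (-1)) (g ∘ parabolicChart n 1) := by
  rw [← ENNReal.mul_le_mul_iff_right two_ne_zero ofNat_ne_top, mul_left_comm,
    ← pairT_eq_two_mul_incidenceForm hf hg]
  exact (mul_le_mul_right (two_mul_LpN_comp_parabolicChart_mul_le hp hp2 hf hg (-1) 1) ε).trans h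

lemma exists_hasSlabCore_comp_parabolicChart (hn : n ≠ 0) :
    ∃ c A : ℝ, 0 < c ∧ 0 < A ∧ ∀ f g : Pt n → ℝ≥0∞, Measurable f → Measurable g →
      LpN n (((n : ℝ) + 2) / (n + 1)) f ≠ 0 → LpN n (((n : ℝ) + 2) / (n + 1)) f ≠ ⊤ →
      LpN n (((n : ℝ) + 2) / (n + 1)) g ≠ 0 → LpN n (((n : ℝ) + 2) / (n + 1)) g ≠ ⊤ →
      ∀ ε : ℝ, 0 < ε →
      ENNReal.ofReal ε * (LpN n (((n : ℝ) + 2) / (n + 1)) f * LpN n (((n : ℝ) + 2) / (n + 1)) g) ≤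
        pairT n f g →
      HasSlabCore (f ∘ parabolicChart n (-1)) (g ∘ parabolicChart n 1) (ENNReal.ofReal (c * ε ^ A) *
        incidenceForm (f ∘ parabolicChart n (-1)) (g ∘ parabolicChart n 1)) := by
  obtain ⟨c, A, hc, hA, hcore⟩ := exists_hasSlabCore hn
  refine ⟨c, A, hc, hA, fun f g hf hg hf0 hf_top hg0 hg_top ε hε hle => ?_⟩
  have hp : 0 < ((n : ℝ) + 2) / (n + 1) := by positivity
  have hp2 : ((n : ℝ) + 2) / (n + 1) ≤ 2 :=
    (div_le_iff₀ (by positivity)).2 (by linarith [n.cast_nonneg (α := ℝ)])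
  exact hcore _ _ (hf.comp (parabolicChart n (-1)).measurable)
    (hg.comp (parabolicChart n 1).measurable)
    (LpN_comp_parabolicChart_ne_zero hp.le hf hf0 _)
    (LpN_comp_parabolicChart_ne_top hp.le hf hf_top _)
    (LpN_comp_parabolicChart_ne_zero hp.le hg hg0 _)
    (LpN_comp_parabolicChart_ne_top hp.le hg hg_top _)
    ε hε (mul_LpN_le_incidenceForm_comp_parabolicChart hp hp2 hf hg hle)

lemma incT_eq_two_mul_incidenceMeasure {E F : Set (Pt n)} (hE : MeasurableSet E)
    (hF : MeasurableSet F) :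
    incT n E F = 2 * incidenceMeasure n
      ((parabolicChart n (-1) ⁻¹' E) ×ˢ (parabolicChart n 1 ⁻¹' F)) := by
  have hpair : incT n E F = pairT n (E.indicator 1) (F.indicator 1) := by
    rw [incT, pairT, ← lintegral_indicator hE]
    refine lintegral_congr fun x => ?_
    by_cases hx : x ∈ E <;> simp [hx]
  rw [hpair, pairT_eq_two_mul_incidenceForm (measurable_one.indicator hE)
    (measurable_one.indicator hF)]
  exact congrArg (2 * ·) ((incidenceForm_indicator_const ((parabolicChart n (-1)).measurable hE)
    ((parabolicChart n 1).measurable hF) 1 1).trans (by rw [one_mul, one_mul]))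

end ParabolicChart

section Balls

variable {n : ℕ} {w : Pt n × Pt n} {b : OrthonormalBasis (Fin n) ℝ (Vec n)} {r rs : Fin n → ℝ}
  {ρ : ℝ}

lemma IsSlabPair.isBallParams (h : IsSlabPair w r rs ρ) :
    IsBallParams n (parabolicChart n (-1) w.1, parabolicChart n 1 w.2) b r rs ρ := by
  refine ⟨?_, h.pos, b.orthonormal, h.left_pos, h.right_pos, h.mul_eq⟩
  have hinc := h.incident
  simp only [parabolicChart_apply, norm_sub_sq_real, real_inner_comm w.1.1 w.2.1, ← hinc]
  push_cast
  ring

lemma image_fst_ballI {zb : Pt n × Pt n} {e : Fin n → Vec n}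
    (h : IsBallParams n zb e r rs ρ) :
    Prod.fst '' ballI n zb e r rs ρ = {x | (∀ j, |⟪x.1 - zb.1.1, e j⟫| < r j) ∧
      |x.2 - zb.2.2 - ‖x.1 - zb.2.1‖ ^ 2| < ρ} := by
  obtain ⟨hinc, -, -, -, hrs, -⟩ := h
  ext x
  refine ⟨fun ⟨z, ⟨_, hz, hzρ, _, _⟩, hzx⟩ => hzx ▸ ⟨hz, hzρ⟩, fun ⟨hx, hxρ⟩ => ?_⟩
  refine ⟨(x, zb.2.1, x.2 - ‖zb.2.1 - x.1‖ ^ 2), ⟨rfl, hx, hxρ, fun j => ?_, ?_⟩, rfl⟩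
  · simpa using hrs j
  · rw [hinc, norm_sub_rev x.1] at hxρ
    convert hxρ using 2
    ring

lemma image_snd_ballI {zb : Pt n × Pt n} {e : Fin n → Vec n}
    (h : IsBallParams n zb e r rs ρ) :
    Prod.snd '' ballI n zb e r rs ρ = {y | (∀ j, |⟪y.1 - zb.2.1, e j⟫| < rs j) ∧
      |y.2 - zb.1.2 + ‖y.1 - zb.1.1‖ ^ 2| < ρ} := by
  obtain ⟨hinc, -, -, hr, -, -⟩ := h
  ext y
  refine ⟨fun ⟨z, ⟨_, _, _, hz, hzρ⟩, hzy⟩ => hzy ▸ ⟨hz, hzρ⟩, fun ⟨hy, hyρ⟩ => ?_⟩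
  refine ⟨((zb.1.1, y.2 + ‖y.1 - zb.1.1‖ ^ 2), y), ⟨?_, fun j => ?_, ?_, hy, hyρ⟩, rfl⟩
  · simp
  · simpa using hr j
  · rw [hinc, norm_sub_rev zb.1.1]
    convert hyρ using 2
    ring

lemma IsSlabPair.preimage_image_fst_ballI (h : IsSlabPair w r rs ρ) :
    parabolicChart n (-1) ⁻¹' (Prod.fst ''
      ballI n (parabolicChart n (-1) w.1, parabolicChart n 1 w.2) b r rs ρ) =
    slab b w.1 w.2 r (ρ / 2) := by
  rw [image_fst_ballI h.isBallParams]
  ext x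
  have hcoord : (parabolicChart n (-1) x).2 - (parabolicChart n 1 w.2).2 -
      ‖x.1 - w.2.1‖ ^ 2 = -(2 * (x.2 + w.2.2 - ⟪x.1, w.2.1⟫)) := by
    simp only [parabolicChart_apply, norm_sub_sq_real]
    push_cast
    ring
  refine and_congr Iff.rfl ?_
  rw [lt_div_iff₀' two_pos, ← abs_two, ← abs_mul, ← abs_neg (2 * _), ← hcoord]
  rfl

lemma IsSlabPair.preimage_image_snd_ballI (h : IsSlabPair w r rs ρ) :
    parabolicChart n 1 ⁻¹' (Prod.snd ''
      ballI n (parabolicChart n (-1) w.1, parabolicChart n 1 w.2) b r rs ρ) =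
    slab b w.2 w.1 rs (ρ / 2) := by
  rw [image_snd_ballI h.isBallParams]
  ext y
  have hcoord : (parabolicChart n 1 y).2 - (parabolicChart n (-1) w.1).2 +
      ‖y.1 - w.1.1‖ ^ 2 = 2 * (y.2 + w.1.2 - ⟪y.1, w.1.1⟫) := by
    simp only [parabolicChart_apply, norm_sub_sq_real]
    push_cast
    ring
  refine and_congr Iff.rfl ?_
  rw [lt_div_iff₀' two_pos, ← abs_two, ← abs_mul, ← hcoord]
  rfl

theorem HasSlabCore.exists_ball {f g : Pt n → ℝ≥0∞} {m : ℝ≥0∞}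
    (h : HasSlabCore (f ∘ parabolicChart n (-1)) (g ∘ parabolicChart n 1) m) :
    ∃ (E F : Set (Pt n)) (s t : ℝ) (zb : Pt n × Pt n) (e : Fin n → Vec n) (r rs : Fin n → ℝ)
      (ρ : ℝ),
      MeasurableSet E ∧ MeasurableSet F ∧ 0 < s ∧ 0 < t ∧ IsBallParams n zb e r rs ρ ∧
      (∀ x ∈ E, ENNReal.ofReal s ≤ f x) ∧ (∀ y ∈ F, ENNReal.ofReal t ≤ g y) ∧
      2 * m ≤ ENNReal.ofReal (s * t) * incT n (E ∩ Prod.fst '' ballI n zb e r rs ρ)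
        (F ∩ Prod.snd '' ballI n zb e r rs ρ) ∧
      volume (Prod.fst '' ballI n zb e r rs ρ) ≤ volume E ∧
      volume (Prod.snd '' ballI n zb e r rs ρ) ≤ volume F := by
  obtain ⟨E, F, s, t, w, b, r, rs, ρ, hE, hF, hs, ht, hw, hfE, hgF, hEvol, hFvol, hle⟩ := h
  have hball₁ := hw.preimage_image_fst_ballI (b := b)
  have hball₂ := hw.preimage_image_snd_ballI (b := b)
  set φ := parabolicChart n (-1)
  set ψ := parabolicChart n 1
  set B₁ := Prod.fst '' ballI n (φ w.1, ψ w.2) b r rs ρ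
  set B₂ := Prod.snd '' ballI n (φ w.1, ψ w.2) b r rs ρ
  have hB₁ : MeasurableSet B₁ :=
    φ.measurableSet_preimage.1 (hball₁ ▸ measurableSet_slab b w.1 w.2 r (ρ / 2))
  have hB₂ : MeasurableSet B₂ :=
    ψ.measurableSet_preimage.1 (hball₂ ▸ measurableSet_slab b w.2 w.1 rs (ρ / 2))
  have hE' := φ.measurableSet_image.2 hE
  have hF' := ψ.measurableSet_image.2 hF
  refine ⟨φ '' E, ψ '' F, s, t, (φ w.1, ψ w.2), b, r, rs, ρ, hE', hF', hs, ht, hw.isBallParams,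
    Set.forall_mem_image.2 hfE, Set.forall_mem_image.2 hgF, ?_, ?_, ?_⟩
  · rw [incT_eq_two_mul_incidenceMeasure (hE'.inter hB₁) (hF'.inter hB₂), Set.preimage_inter,
      Set.preimage_inter, φ.injective.preimage_image, ψ.injective.preimage_image, hball₁, hball₂,
      mul_left_comm]
    exact mul_le_mul_right hle 2
  · rw [volume_eq_two_mul_volume_preimage_parabolicChart hB₁ (-1),
      volume_eq_two_mul_volume_preimage_parabolicChart hE' (-1), φ.injective.preimage_image, hball₁]
    exact mul_le_mul_right hEvol 2
  · rw [volume_eq_two_mul_volume_preimage_parabolicChart hB₂ 1,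
      volume_eq_two_mul_volume_preimage_parabolicChart hF' 1, ψ.injective.preimage_image, hball₂]
    exact mul_le_mul_right hFvol 2

end Balls

/-- for any `ε`-quasiextremal pair of nonnegative functions
`(f, f*)` there are sub-level pairs `t χ_E ≤ f`, `t* χ_{E*} ≤ f*` interacting
strongly inside a pair of ball projections `(B, B*)` with `|B| ≤ |E|`,
`|B*| ≤ |E*|`. -/
theorem stmt6 (d : ℕ) (hd : 2 ≤ d) :
    ∃ c A : ℝ, 0 < c ∧ 0 < A ∧
      ∀ (ε : ℝ), 0 < ε →
      ∀ (f fs : Pt (d - 1) → ℝ≥0∞), Measurable f → Measurable fs →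
        0 < LpN (d - 1) (((d : ℝ) + 1) / d) f → LpN (d - 1) (((d : ℝ) + 1) / d) f < ⊤ →
        0 < LpN (d - 1) (((d : ℝ) + 1) / d) fs → LpN (d - 1) (((d : ℝ) + 1) / d) fs < ⊤ →
        ENNReal.ofReal ε * (LpN (d - 1) (((d : ℝ) + 1) / d) f *
            LpN (d - 1) (((d : ℝ) + 1) / d) fs) ≤ pairT (d - 1) f fs →
        ∃ (E Es : Set (Pt (d - 1))) (t ts : ℝ)
          (zb : Pt (d - 1) × Pt (d - 1)) (e : Fin (d - 1) → Vec (d - 1))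
          (r rs : Fin (d - 1) → ℝ) (ρ : ℝ),
          MeasurableSet E ∧ MeasurableSet Es ∧ 0 < t ∧ 0 < ts ∧
          IsBallParams (d - 1) zb e r rs ρ ∧
          (∀ x ∈ E, ENNReal.ofReal t ≤ f x) ∧
          (∀ x ∈ Es, ENNReal.ofReal ts ≤ fs x) ∧
          ENNReal.ofReal (c * ε ^ A) * pairT (d - 1) f fs ≤
            ENNReal.ofReal (t * ts) *
              incT (d - 1) (E ∩ Prod.fst '' ballI (d - 1) zb e r rs ρ)
                (Es ∩ Prod.snd '' ballI (d - 1) zb e r rs ρ) ∧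
          volume (Prod.fst '' ballI (d - 1) zb e r rs ρ) ≤ volume E ∧
          volume (Prod.snd '' ballI (d - 1) zb e r rs ρ) ≤ volume Es := by
  obtain ⟨n, rfl⟩ : ∃ n, d = n + 1 := ⟨d - 1, by omega⟩
  have hexp : (((n + 1 : ℕ) : ℝ) + 1) / ((n + 1 : ℕ) : ℝ) = (n + 2) / (n + 1) := by
    push_cast
    ring
  rw [hexp, Nat.add_sub_cancel]
  obtain ⟨c, A, hc, hA, hcore⟩ := exists_hasSlabCore_comp_parabolicChart (n := n) (by omega)
  refine ⟨c, A, hc, hA, fun ε hε f fs hf hfs hf0 hf_top hfs0 hfs_top hle => ?_⟩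
  obtain ⟨E, Es, t, ts, zb, e, r, rs, ρ, hE, hEs, ht, hts, hball, hfE, hfsEs, hle', hvol⟩ :=
    (hcore f fs hf hfs hf0.ne' hf_top.ne hfs0.ne' hfs_top.ne ε hε hle).exists_ball
  rw [mul_left_comm, ← pairT_eq_two_mul_incidenceForm hf hfs] at hle'
  exact ⟨E, Es, t, ts, zb, e, r, rs, ρ, hE, hEs, ht, hts, hball, hfE, hfsEs, hle', hvol⟩
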